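/- arXiv:2407.19431 — 5 statements merged into one kernel-verified Lean document; each statement's English description precedes it below -/
import Mathlib

section
/- Let G₁ = (V₁, E₁, ends₁) and G₂ = (V₂, E₂, ends₂) be multigraphs without isolated vertices (every vertex is an endpoint of some edge). Then the external bizonotopal algebras B_{G₁}^e and B_{G₂}^e are isomorphic as ℚ-algebras if and only if G₁ and G₂ are isomorphic as multigraphs, i.e., there exist bijections α : V₁ ≃ V₂ and β : E₁ ≃ E₂ with ends₂(β e) = Sym2.map α (ends₁ e) for all e ∈ E₁. -/
open Finset MvPolynomial

/-- The degree `κ_S` of a subset `S` of vertices of a multigraph `(V, E, ends)`. -/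
def multigraphKappa {V E : Type*} [Fintype E] [DecidableEq V]
    (ends : E → Sym2 V) (S : Finset V) : ℕ :=
  (Finset.univ.filter fun e => ∃ v ∈ S, v ∈ ends e).card

/-- The defining ideal of the external bizonotopal algebra: generated by the
monomials `∏_{v∈S} z_v^{a_v}` with `S` nonempty and `∑_{v∈S} a_v = κ_S + 1`. -/
noncomputable def externalIdeal {V E : Type*} [Fintype E] [DecidableEq V]
    (ends : E → Sym2 V) : Ideal (MvPolynomial V ℚ) :=
  Ideal.span {m : MvPolynomial V ℚ |
    ∃ (S : Finset V) (a : V → ℕ), S.Nonempty ∧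
      (∑ v ∈ S, a v = multigraphKappa ends S + 1) ∧
      m = ∏ v ∈ S, X v ^ a v}

/-- The external bizonotopal algebra `B_G^e` of a multigraph. -/
def externalBizonotopal {V E : Type*} [Fintype E] [DecidableEq V]
    (ends : E → Sym2 V) : Type _ :=
  MvPolynomial V ℚ ⧸ externalIdeal ends

noncomputable instance {V E : Type*} [Fintype E] [DecidableEq V] (ends : E → Sym2 V) :
    CommRing (externalBizonotopal ends) :=
  Ideal.Quotient.commRing _

noncomputable instance {V E : Type*} [Fintype E] [DecidableEq V] (ends : E → Sym2 V) :
    Algebra ℚ (externalBizonotopal ends) :=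
  Ideal.Quotient.algebra _

section BizonotopalAux

lemma kappa_mono {V E : Type*} [Fintype E] [DecidableEq V]
    (ends : E → Sym2 V) {S T : Finset V} (h : S ⊆ T) :
    multigraphKappa ends S ≤ multigraphKappa ends T := by
  unfold multigraphKappa
  apply Finset.card_le_card
  intro e he
  simp only [Finset.mem_filter, Finset.mem_univ, true_and] at he ⊢
  obtain ⟨v, hv, hve⟩ := he
  exact ⟨v, h hv, hve⟩

lemma exists_assignment {V E : Type*} [Fintype E] [DecidableEq V]
    (ends : E → Sym2 V) (T : Finset V) :
    ∃ a : V → ℕ, ∑ v ∈ T, a v = multigraphKappa ends T ∧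
      (∀ U : Finset V, ∑ v ∈ U, a v ≤ multigraphKappa ends U) ∧ ∀ v, v ∉ T → a v = 0 := by
  classical
  have hf : ∀ e : E, ∃ f : Option V, (∀ v ∈ f, v ∈ T ∧ v ∈ ends e) ∧
      ((∃ v ∈ T, v ∈ ends e) → ∃ v ∈ T, f = some v) := by
    intro e
    by_cases h : ∃ v ∈ T, v ∈ ends e
    · obtain ⟨v, hv, hve⟩ := h
      exact ⟨some v, by simp [hv, hve], fun _ => ⟨v, hv, rfl⟩⟩
    · exact ⟨none, by simp, fun h' => absurd h' h⟩
  choose f hf1 hf2 using hf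
  have hsum : ∀ U : Finset V, ∑ v ∈ U, (Finset.univ.filter fun e => f e = some v).card
      = (Finset.univ.filter fun e => ∃ v ∈ U, f e = some v).card := by
    intro U
    rw [← Finset.card_biUnion]
    · congr 1
      ext e
      simp
    · intro x _ y _ hxy
      rw [Function.onFun, Finset.disjoint_left]
      intro e he he'
      simp only [Finset.mem_filter, Finset.mem_univ, true_and] at he he'
      rw [he] at he'
      exact hxy (Option.some_injective _ he')
  refine ⟨fun v => (Finset.univ.filter fun e => f e = some v).card, ?_, ?_, ?_⟩
  · rw [hsum]
    unfold multigraphKappa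
    congr 1
    ext e
    simp only [Finset.mem_filter, Finset.mem_univ, true_and]
    constructor
    · rintro ⟨v, hv, h⟩
      exact ⟨v, hv, (hf1 e v (by simp [h])).2⟩
    · exact hf2 e
  · intro U
    rw [hsum]
    unfold multigraphKappa
    apply Finset.card_le_card
    intro e
    simp only [Finset.mem_filter, Finset.mem_univ, true_and]
    rintro ⟨v, hv, h⟩
    exact ⟨v, hv, (hf1 e v (by simp [h])).2⟩
  · intro v hv
    rw [Finset.card_eq_zero, Finset.filter_eq_empty_iff]
    intro e _ h
    exact hv (hf1 e v (by simp [h])).1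

lemma mem_externalIdeal {V E : Type*} [Fintype E] [DecidableEq V]
    (ends : E → Sym2 V) {p : MvPolynomial V ℚ} (hp : p ∈ externalIdeal ends)
    {a : V →₀ ℕ} (ha : coeff a p ≠ 0) :
    ∃ S : Finset V, S.Nonempty ∧ multigraphKappa ends S + 1 ≤ ∑ v ∈ S, a v := by
  have hle : externalIdeal ends ≤ Ideal.span ((fun s : V →₀ ℕ => monomial s (1 : ℚ)) ''
      {s | ∃ S : Finset V, S.Nonempty ∧ multigraphKappa ends S + 1 ≤ ∑ v ∈ S, s v}) := by
    unfold externalIdeal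
    apply Ideal.span_mono
    rintro m ⟨S, b, hS, hb, rfl⟩
    refine ⟨∑ v ∈ S, Finsupp.single v (b v), ⟨S, hS, ?_⟩, ?_⟩
    · rw [← hb]
      apply le_of_eq
      apply Finset.sum_congr rfl
      intro v hv
      simp [Finsupp.finsetSum_apply, Finsupp.single_apply, hv]
    · simp only [X_pow_eq_monomial]
      rw [← monomial_sum_one]
  obtain ⟨s, ⟨S, hS, hs⟩, hsa⟩ := (mem_ideal_span_monomial_image.mp (hle hp)) a
    (by simpa [mem_support_iff] using ha)
  exact ⟨S, hS, hs.trans (Finset.sum_le_sum fun v _ => hsa v)⟩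

/-- Vanishing to order `k`. -/
def VanTo {V : Type*} (k : ℕ) (p : MvPolynomial V ℚ) : Prop :=
  ∀ a : V →₀ ℕ, a.degree < k → coeff a p = 0

lemma VanTo.mul {V : Type*} {j k : ℕ} {p q : MvPolynomial V ℚ}
    (hp : VanTo j p) (hq : VanTo k q) : VanTo (j + k) (p * q) := by
  classical
  intro a ha
  rw [coeff_mul]
  apply Finset.sum_eq_zero
  rintro ⟨x, y⟩ hxy
  rw [Finset.HasAntidiagonal.mem_antidiagonal] at hxy
  simp only at hxy
  rw [← hxy, map_add] at ha
  by_cases h : x.degree < j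
  · simp [hp x h]
  · simp [hq y (by omega)]

lemma VanTo.add {V : Type*} {k : ℕ} {p q : MvPolynomial V ℚ}
    (hp : VanTo k p) (hq : VanTo k q) : VanTo k (p + q) := by
  intro a ha
  rw [coeff_add, hp a ha, hq a ha, add_zero]

lemma VanTo.pow {V : Type*} {p : MvPolynomial V ℚ} (hp : VanTo 1 p) (n : ℕ) :
    VanTo n (p ^ n) := by
  induction n with
  | zero => intro a ha; simp at ha
  | succ n ih => rw [pow_succ]; exact ih.mul hp

lemma VanTo.pow_sub {V : Type*} {p L : MvPolynomial V ℚ} (hp : VanTo 1 p) (hL : VanTo 1 L)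
    (h : VanTo 2 (p - L)) (n : ℕ) : VanTo (n + 1) (p ^ n - L ^ n) := by
  induction n with
  | zero => intro a ha; simp
  | succ n ih =>
    have e : p ^ (n + 1) - L ^ (n + 1) = p ^ n * (p - L) + (p ^ n - L ^ n) * L := by ring
    rw [e]
    exact ((hp.pow n).mul h).add (ih.mul hL)

lemma vanTo_one {V : Type*} {p : MvPolynomial V ℚ} (h : coeff 0 p = 0) : VanTo 1 p := by
  intro a ha
  have : a = 0 := by
    rw [← Finsupp.degree_eq_zero_iff]; omega
  rw [this, h]

/-- The linear part. -/
noncomputable def linPart {V : Type*} [Fintype V] (p : MvPolynomial V ℚ) : MvPolynomial V ℚ :=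
  ∑ w, C (coeff (Finsupp.single w 1) p) * X w

lemma coeff_linPart {V : Type*} [Fintype V] (p : MvPolynomial V ℚ) (w : V) :
    coeff (Finsupp.single w 1) (linPart p) = coeff (Finsupp.single w 1) p := by
  classical
  simp [linPart, coeff_sum, coeff_C_mul, coeff_X, Finsupp.single_left_inj]

lemma coeff_zero_linPart {V : Type*} [Fintype V] (p : MvPolynomial V ℚ) :
    coeff 0 (linPart p) = 0 := by
  classical
  simp [linPart, coeff_sum, coeff_C_mul]

lemma vanTo_two {V : Type*} [Fintype V] {p : MvPolynomial V ℚ} (h : coeff 0 p = 0) :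
    VanTo 2 (p - linPart p) := by
  intro a ha
  rw [coeff_sub]
  by_cases h0 : a.degree = 0
  · rw [Finsupp.degree_eq_zero_iff] at h0
    rw [h0, h, coeff_zero_linPart, sub_zero]
  · have h1 : a.degree = 1 := by omega
    obtain ⟨w, rfl⟩ : ∃ w, a = Finsupp.single w 1 := by
      classical
      have hne : a ≠ 0 := by
        rintro rfl
        simp at h1
      obtain ⟨w, hw⟩ := Finsupp.ne_iff.mp hne
      have hle : Finsupp.single w 1 ≤ a := by
        rw [Finsupp.single_le_iff]
        exact Nat.one_le_iff_ne_zero.mpr hw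
      obtain ⟨b, rfl⟩ := exists_add_of_le hle
      rw [map_add, Finsupp.degree_single] at h1
      have hb : b = 0 := by
        rw [← Finsupp.degree_eq_zero_iff]; omega
      exact ⟨w, by rw [hb, add_zero]⟩
    rw [coeff_linPart, sub_self]

lemma linPart_pow_coeff {V : Type*} [Fintype V] [DecidableEq V] (p : MvPolynomial V ℚ)
    (a : V →₀ ℕ) (ha : ∀ w, a w ≠ 0 → coeff (Finsupp.single w 1) p ≠ 0) :
    coeff a (linPart p ^ a.degree) ≠ 0 := by
  have hterm : ∀ k : V → ℕ, (∏ i, (C (coeff (Finsupp.single i 1) p) * X i) ^ k i :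
      MvPolynomial V ℚ) = monomial (Finsupp.equivFunOnFinite.symm k)
        (∏ i, coeff (Finsupp.single i 1) p ^ k i) := by
    intro k
    rw [monomial_eq, Finsupp.prod_fintype _ _ (by simp)]
    simp [mul_pow, Finset.prod_mul_distrib]
  rw [linPart, Finset.sum_pow_eq_sum_piAntidiag, coeff_sum]
  have hmem : (a : V → ℕ) ∈ Finset.piAntidiag Finset.univ a.degree := by
    simp [Finset.mem_piAntidiag, Finsupp.degree_eq_sum]
  rw [Finset.sum_eq_single_of_mem (a : V → ℕ) hmem]
  · rw [hterm, ← map_natCast (C : ℚ →+* MvPolynomial V ℚ), coeff_C_mul, coeff_monomial, if_pos]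
    · apply mul_ne_zero
      · exact_mod_cast (Nat.multinomial_pos _ _).ne'
      · rw [Finset.prod_ne_zero_iff]
        intro i _
        by_cases hi : a i = 0
        · simp [hi]
        · exact pow_ne_zero _ (ha i hi)
    · ext; simp
  · intro k _ hk
    rw [hterm, ← map_natCast (C : ℚ →+* MvPolynomial V ℚ), coeff_C_mul, coeff_monomial, if_neg,
      mul_zero]
    intro h
    apply hk
    rw [← h]
    ext; simp

lemma kappa_le_of_pow_mem {V E : Type*} [Fintype V] [Fintype E] [DecidableEq V]
    (ends : E → Sym2 V) {p : MvPolynomial V ℚ} (h0 : coeff 0 p = 0) {n : ℕ}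
    (hp : p ^ (n + 1) ∈ externalIdeal ends) (T : Finset V)
    (hT : ∀ w ∈ T, coeff (Finsupp.single w 1) p ≠ 0) : multigraphKappa ends T ≤ n := by
  by_contra! hlt
  obtain ⟨a, ha1, ha2, ha3⟩ := exists_assignment ends T
  set b : V →₀ ℕ := Finsupp.equivFunOnFinite.symm a with hb
  have hdeg : b.degree = multigraphKappa ends T := by
    rw [Finsupp.degree_eq_sum, ← ha1]
    symm
    apply Finset.sum_subset (Finset.subset_univ _)
    intro v _ hv
    exact ha3 v hv
  have hmem : p ^ b.degree ∈ externalIdeal ends := by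
    rw [hdeg]
    exact Ideal.pow_mem_of_pow_mem _ hp hlt
  have hc : coeff b (p ^ b.degree) ≠ 0 := by
    have h1 := linPart_pow_coeff p b (by
      intro w hw
      apply hT
      by_contra h
      exact hw (ha3 w h))
    have h2 := VanTo.pow_sub (vanTo_one h0) (vanTo_one (coeff_zero_linPart p)) (vanTo_two h0)
      b.degree b (Nat.lt_succ_self _)
    rw [coeff_sub, sub_eq_zero] at h2
    rwa [h2]
  obtain ⟨S, _, hS⟩ := mem_externalIdeal ends hmem hc
  have := ha2 S
  have e : ∑ v ∈ S, b v = ∑ v ∈ S, a v := rfl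
  omega

lemma lin_pow_mem {V E : Type*} [Fintype E] [DecidableEq V]
    (ends : E → Sym2 V) (S : Finset V) (hS : S.Nonempty) (c : V → ℚ) :
    (∑ v ∈ S, C (c v) * X v : MvPolynomial V ℚ) ^ (multigraphKappa ends S + 1)
      ∈ externalIdeal ends := by
  rw [Finset.sum_pow_eq_sum_piAntidiag]
  apply Ideal.sum_mem
  intro k hk
  rw [Finset.mem_piAntidiag] at hk
  apply Ideal.mul_mem_left
  simp only [mul_pow]
  rw [Finset.prod_mul_distrib]
  apply Ideal.mul_mem_left
  exact Ideal.subset_span ⟨S, k, hS, hk.1, rfl⟩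

lemma coeff_zero_of_pow_mem {V E : Type*} [Fintype E] [DecidableEq V]
    (ends : E → Sym2 V) {p : MvPolynomial V ℚ} {n : ℕ}
    (hp : p ^ n ∈ externalIdeal ends) : coeff 0 p = 0 := by
  by_contra h
  have h1 : coeff 0 (p ^ n) ≠ 0 := by
    have : coeff 0 (p ^ n) = (coeff 0 p) ^ n := by
      rw [← constantCoeff_eq, map_pow, constantCoeff_eq]
    rw [this]
    exact pow_ne_zero _ h
  obtain ⟨S, _, hS⟩ := mem_externalIdeal ends hp h1
  simp at hS

lemma coeff_single_of_mem {V E : Type*} [Fintype E] [DecidableEq V]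
    (ends : E → Sym2 V) (hi : ∀ v : V, ∃ e : E, v ∈ ends e) {p : MvPolynomial V ℚ}
    (hp : p ∈ externalIdeal ends) (w : V) : coeff (Finsupp.single w 1) p = 0 := by
  by_contra h
  obtain ⟨S, ⟨v, hv⟩, hle⟩ := mem_externalIdeal ends hp h
  have h1 : 1 ≤ multigraphKappa ends S := by
    obtain ⟨e, he⟩ := hi v
    exact Finset.card_pos.mpr ⟨e, by simpa using ⟨v, hv, he⟩⟩
  have h2 : ∑ v ∈ S, (Finsupp.single w 1 : V →₀ ℕ) v ≤ 1 := by
    simp only [Finsupp.single_apply, Finset.sum_ite_eq]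
    split_ifs <;> simp
  omega

/-- The quotient map. -/
noncomputable def bmk {V E : Type*} [Fintype E] [DecidableEq V] (ends : E → Sym2 V) :
    MvPolynomial V ℚ →ₐ[ℚ] externalBizonotopal ends :=
  Ideal.Quotient.mkₐ ℚ (externalIdeal ends)

lemma bmk_surj {V E : Type*} [Fintype E] [DecidableEq V] (ends : E → Sym2 V) :
    Function.Surjective (bmk ends) := Ideal.Quotient.mk_surjective

lemma bmk_eq_zero {V E : Type*} [Fintype E] [DecidableEq V] (ends : E → Sym2 V)
    (p : MvPolynomial V ℚ) : bmk ends p = 0 ↔ p ∈ externalIdeal ends :=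
  Ideal.Quotient.eq_zero_iff_mem

lemma bmk_eq {V E : Type*} [Fintype E] [DecidableEq V] (ends : E → Sym2 V)
    (p q : MvPolynomial V ℚ) : bmk ends p = bmk ends q ↔ p - q ∈ externalIdeal ends := by
  rw [← bmk_eq_zero, map_sub, sub_eq_zero]

section
variable {V₁ E₁ V₂ E₂ : Type*}
    [Fintype V₁] [Fintype E₁] [DecidableEq V₁]
    [Fintype V₂] [Fintype E₂] [DecidableEq V₂]

lemma lift_coeff_zero (ends₁ : E₁ → Sym2 V₁) (ends₂ : E₂ → Sym2 V₂)
    (φ : externalBizonotopal ends₁ →ₐ[ℚ] externalBizonotopal ends₂)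
    (P : V₁ → MvPolynomial V₂ ℚ) (hP : ∀ v, φ (bmk ends₁ (X v)) = bmk ends₂ (P v)) (v : V₁) :
    coeff 0 (P v) = 0 := by
  apply coeff_zero_of_pow_mem ends₂ (n := multigraphKappa ends₁ {v} + 1)
  rw [← bmk_eq_zero, map_pow, ← hP, ← map_pow, ← map_pow]
  have := lin_pow_mem ends₁ {v} (by simp) (fun _ => 1)
  simp only [Finset.sum_singleton, map_one, one_mul] at this
  rw [(bmk_eq_zero _ _).mpr this, map_zero]

lemma kappa_image_le (ends₁ : E₁ → Sym2 V₁) (ends₂ : E₂ → Sym2 V₂)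
    (φ : externalBizonotopal ends₁ →ₐ[ℚ] externalBizonotopal ends₂)
    (P : V₁ → MvPolynomial V₂ ℚ) (hP : ∀ v, φ (bmk ends₁ (X v)) = bmk ends₂ (P v))
    (σ : V₁ → V₂) (hσ : ∀ v, coeff (Finsupp.single (σ v) 1) (P v) ≠ 0) (S : Finset V₁) :
    multigraphKappa ends₂ (S.image σ) ≤ multigraphKappa ends₁ S := by
  rcases S.eq_empty_or_nonempty with rfl | hS
  · simp [multigraphKappa]
  -- generic coefficients
  obtain ⟨c, hc⟩ : ∃ c : V₁ → ℚ, ∀ w ∈ S.image σ,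
      ∑ v ∈ S, c v * coeff (Finsupp.single w 1) (P v) ≠ 0 := by
    let f : V₂ → MvPolynomial V₁ ℚ := fun w =>
      ∑ v ∈ S, C (coeff (Finsupp.single w 1) (P v)) * X v
    have hf : ∏ w ∈ S.image σ, f w ≠ 0 := by
      rw [Finset.prod_ne_zero_iff]
      intro w hw h0
      obtain ⟨v, hv, rfl⟩ := Finset.mem_image.mp hw
      have : coeff (Finsupp.single v 1) (f (σ v)) = coeff (Finsupp.single (σ v) 1) (P v) := by
        simp [f, coeff_sum, coeff_C_mul, coeff_X, Finsupp.single_left_inj, hv]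
      rw [h0, coeff_zero] at this
      exact hσ v this.symm
    by_contra! hcon
    apply hf
    apply MvPolynomial.funext
    intro c
    obtain ⟨w, hw, h0⟩ := hcon c
    rw [map_zero, map_prod]
    apply Finset.prod_eq_zero hw
    simp only [f, map_sum, map_mul, eval_C, eval_X]
    rw [← h0]
    exact Finset.sum_congr rfl fun v _ => mul_comm _ _
  have h0 := lift_coeff_zero ends₁ ends₂ φ P hP
  apply kappa_le_of_pow_mem ends₂ (p := ∑ v ∈ S, C (c v) * P v)
  · simp [coeff_sum, coeff_C_mul, h0]
  · have hl : bmk ends₂ (∑ v ∈ S, C (c v) * P v)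
        = φ (bmk ends₁ (∑ v ∈ S, C (c v) * X v)) := by
      simp only [← MvPolynomial.smul_eq_C_mul, map_sum, map_smul, hP]
    rw [← bmk_eq_zero, map_pow, hl, ← map_pow, ← map_pow,
      (bmk_eq_zero _ _).mpr (lin_pow_mem ends₁ S hS c), map_zero]
  · intro w hw
    simpa [coeff_sum, coeff_C_mul] using hc w hw

lemma coeff_single_mul (p q : MvPolynomial V₁ ℚ) (u : V₁) :
    coeff (Finsupp.single u 1) (p * q) =
      coeff 0 p * coeff (Finsupp.single u 1) q + coeff (Finsupp.single u 1) p * coeff 0 q := by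
  rw [coeff_mul, Finsupp.antidiagonal_single]
  simp [Finset.Nat.antidiagonal_succ]

lemma coeff_aeval (Q : V₂ → MvPolynomial V₁ ℚ) (hQ : ∀ w, coeff 0 (Q w) = 0)
    (p : MvPolynomial V₂ ℚ) (u : V₁) :
    coeff (Finsupp.single u 1) (aeval Q p) =
      ∑ w, coeff (Finsupp.single w 1) p * coeff (Finsupp.single u 1) (Q w) := by
  have hc : ∀ p : MvPolynomial V₂ ℚ, coeff 0 (aeval Q p) = coeff 0 p := by
    intro p
    induction p using MvPolynomial.induction_on with
    | C a => simp [algebraMap_eq]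
    | add p q hp hq => rw [map_add, coeff_add, coeff_add, hp, hq]
    | mul_X p i hp =>
      rw [map_mul, aeval_X, ← constantCoeff_eq, map_mul, constantCoeff_eq, hQ,
        mul_zero, ← constantCoeff_eq, map_mul, constantCoeff_X, mul_zero]
  induction p using MvPolynomial.induction_on with
  | C a =>
    have h : ∀ w : V₂, coeff (Finsupp.single w 1) (C a : MvPolynomial V₂ ℚ) = 0 := by
      intro w
      rw [coeff_C, if_neg]
      intro h
      simpa using DFunLike.congr_fun h w
    have h' : coeff (Finsupp.single u 1) (C a : MvPolynomial V₁ ℚ) = 0 := by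
      rw [coeff_C, if_neg]
      intro h
      simpa using DFunLike.congr_fun h u
    simp only [h, zero_mul, Finset.sum_const_zero]
    simp only [aeval_C, algebraMap_eq, h']
  | add p q hp hq =>
    simp only [map_add, coeff_add, hp, hq, add_mul, Finset.sum_add_distrib]
  | mul_X p i hp =>
    rw [map_mul, aeval_X, coeff_single_mul, hQ, hc]
    simp only [coeff_single_mul]
    simp [coeff_X, Finsupp.single_left_inj]

lemma lin_matrix_mul (ends₁ : E₁ → Sym2 V₁) (ends₂ : E₂ → Sym2 V₂)
    (h₁ : ∀ v : V₁, ∃ e : E₁, v ∈ ends₁ e)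
    (φ : externalBizonotopal ends₁ →ₐ[ℚ] externalBizonotopal ends₂)
    (ψ : externalBizonotopal ends₂ →ₐ[ℚ] externalBizonotopal ends₁)
    (hψ : ∀ x, ψ (φ x) = x)
    (P : V₁ → MvPolynomial V₂ ℚ) (hP : ∀ v, φ (bmk ends₁ (X v)) = bmk ends₂ (P v))
    (Q : V₂ → MvPolynomial V₁ ℚ) (hQ : ∀ v, ψ (bmk ends₂ (X v)) = bmk ends₁ (Q v)) :
    (Matrix.of fun v w => coeff (Finsupp.single w 1) (P v)) *
      (Matrix.of fun w u => coeff (Finsupp.single u 1) (Q w)) = (1 : Matrix V₁ V₁ ℚ) := by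
  ext v u
  rw [Matrix.mul_apply]
  simp only [Matrix.of_apply]
  rw [← coeff_aeval Q (lift_coeff_zero ends₂ ends₁ ψ Q hQ)]
  have hcomp : ∀ p, ψ (bmk ends₂ p) = bmk ends₁ (aeval Q p) := by
    intro p
    have : ψ.comp (bmk ends₂) = (bmk ends₁).comp (aeval Q) := by
      apply MvPolynomial.algHom_ext
      intro w
      simp [hQ]
    exact DFunLike.congr_fun this p
  have h := hψ (bmk ends₁ (X v))
  rw [hP, hcomp, bmk_eq] at h
  have h' := coeff_single_of_mem ends₁ h₁ h u
  rw [coeff_sub, sub_eq_zero] at h'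
  rw [h', coeff_X, Matrix.one_apply]
  simp [Finsupp.single_left_inj]

lemma exists_transversal (A : Matrix V₁ V₂ ℚ) (B : Matrix V₂ V₁ ℚ) (e : V₁ ≃ V₂)
    (h : A * B = 1) : ∃ σ : V₁ ≃ V₂, ∀ v, A v (σ v) ≠ 0 := by
  have hd : (A.submatrix id e).det ≠ 0 := by
    intro h0
    have : A.submatrix id e * B.submatrix e id = 1 := by
      rw [Matrix.submatrix_mul_equiv, h, Matrix.submatrix_id_id]
    have := congrArg Matrix.det this
    rw [Matrix.det_mul, h0, zero_mul, Matrix.det_one] at this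
    exact zero_ne_one this
  rw [← Matrix.det_transpose, Matrix.det_apply] at hd
  obtain ⟨π, _, hπ⟩ := Finset.exists_ne_zero_of_sum_ne_zero hd
  refine ⟨π.trans e, fun v hv => hπ ?_⟩
  rw [Finset.prod_eq_zero (Finset.mem_univ v), smul_zero]
  simpa using hv

lemma exists_kappa_equiv (ends₁ : E₁ → Sym2 V₁) (ends₂ : E₂ → Sym2 V₂)
    (h₁ : ∀ v : V₁, ∃ e : E₁, v ∈ ends₁ e)
    (h₂ : ∀ v : V₂, ∃ e : E₂, v ∈ ends₂ e)
    (φ : externalBizonotopal ends₁ ≃ₐ[ℚ] externalBizonotopal ends₂) :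
    ∃ σ : V₁ ≃ V₂, ∀ S : Finset V₁,
      multigraphKappa ends₂ (S.map σ.toEmbedding) = multigraphKappa ends₁ S := by
  choose P hP using fun v => bmk_surj ends₂ (φ (bmk ends₁ (X v)))
  choose Q hQ using fun v => bmk_surj ends₁ (φ.symm (bmk ends₂ (X v)))
  have hPQ := lin_matrix_mul ends₁ ends₂ h₁ φ.toAlgHom φ.symm.toAlgHom (by simp) P
    (fun v => (hP v).symm) Q (fun v => (hQ v).symm)
  have hQP := lin_matrix_mul ends₂ ends₁ h₂ φ.symm.toAlgHom φ.toAlgHom (by simp) Q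
    (fun v => (hQ v).symm) P (fun v => (hP v).symm)
  have hcard : Fintype.card V₁ = Fintype.card V₂ :=
    Matrix.square_of_invertible _ _ hPQ hQP
  have e := Fintype.equivOfCardEq hcard
  obtain ⟨σ, hσ⟩ := exists_transversal _ _ e hPQ
  obtain ⟨τ, hτ⟩ := exists_transversal _ _ e.symm hQP
  have i1 : ∀ S : Finset V₁,
      multigraphKappa ends₂ (S.map σ.toEmbedding) ≤ multigraphKappa ends₁ S := by
    intro S
    rw [Finset.map_eq_image]
    exact kappa_image_le ends₁ ends₂ φ.toAlgHom P (fun v => (hP v).symm) σ hσ S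
  have i2 : ∀ S : Finset V₂,
      multigraphKappa ends₁ (S.map τ.toEmbedding) ≤ multigraphKappa ends₂ S := by
    intro S
    rw [Finset.map_eq_image]
    exact kappa_image_le ends₂ ends₁ φ.symm.toAlgHom Q (fun v => (hQ v).symm) τ hτ S
  have s1 : ∑ S : Finset V₁, multigraphKappa ends₂ (S.map σ.toEmbedding)
      = ∑ S : Finset V₂, multigraphKappa ends₂ S :=
    Equiv.sum_comp σ.finsetCongr (fun S => multigraphKappa ends₂ S)
  have s2 : ∑ S : Finset V₂, multigraphKappa ends₁ (S.map τ.toEmbedding)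
      = ∑ S : Finset V₁, multigraphKappa ends₁ S :=
    Equiv.sum_comp τ.finsetCongr (fun S => multigraphKappa ends₁ S)
  have j2 := Finset.sum_le_sum (fun S (_ : S ∈ Finset.univ) => i2 S)
  have j1 := Finset.sum_le_sum (fun S (_ : S ∈ Finset.univ) => i1 S)
  have je := (Finset.sum_eq_sum_iff_of_le (fun S (_ : S ∈ Finset.univ) => i1 S)).mp (by omega)
  exact ⟨σ, fun S => je S (Finset.mem_univ _)⟩

end

lemma card_inside {V E : Type*} [Fintype V] [Fintype E] [DecidableEq V]
    (ends : E → Sym2 V) (S : Finset V) :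
    (Finset.univ.filter fun e => ∀ v ∈ ends e, v ∈ S).card + multigraphKappa ends Sᶜ
      = multigraphKappa ends Finset.univ := by
  have hu : multigraphKappa ends Finset.univ = (Finset.univ : Finset E).card := by
    unfold multigraphKappa
    congr 1
    ext e
    simp only [Finset.mem_filter, Finset.mem_univ, true_and, iff_true]
    exact ⟨(ends e).out.1, Sym2.out_fst_mem _⟩
  rw [hu, ← Finset.card_filter_add_card_filter_not (s := (Finset.univ : Finset E))
    (fun e => ∀ v ∈ ends e, v ∈ S)]
  unfold multigraphKappa
  congr 2
  ext e
  simp only [Finset.mem_filter, Finset.mem_univ, true_and, Finset.mem_compl]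
  push Not
  exact ⟨fun ⟨v, a, b⟩ => ⟨v, b, a⟩, fun ⟨v, a, b⟩ => ⟨v, b, a⟩⟩

lemma mem_single_iff_diag {V : Type*} [DecidableEq V] (x : Sym2 V) (u : V) :
    (∀ w ∈ x, w ∈ ({u} : Finset V)) ↔ x = s(u, u) := by
  induction x using Sym2.ind with
  | _ a b => simp [Sym2.mem_iff]

lemma card_pair_split {V G : Type*} [Fintype V] [Fintype G] [DecidableEq V] (ends : G → Sym2 V)
    {u v : V} (huv : u ≠ v) :
    (Finset.univ.filter fun e => ∀ w ∈ ends e, w ∈ ({u, v} : Finset V)).card =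
    (Finset.univ.filter fun e => ends e = s(u, v)).card +
    ((Finset.univ.filter fun e => ∀ w ∈ ends e, w ∈ ({u} : Finset V)).card +
    (Finset.univ.filter fun e => ∀ w ∈ ends e, w ∈ ({v} : Finset V)).card) := by
  classical
  simp only [mem_single_iff_diag]
  rw [← Finset.card_union_of_disjoint, ← Finset.card_union_of_disjoint]
  · congr 1
    ext e
    simp only [Finset.mem_filter, Finset.mem_univ, true_and, Finset.mem_union]
    induction ends e using Sym2.ind with
    | _ a b =>
      simp only [Sym2.mem_iff, Finset.mem_insert, Finset.mem_singleton, Sym2.eq_iff]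
      constructor
      · intro hh
        have h1 := hh a (Or.inl rfl)
        have h2 := hh b (Or.inr rfl)
        tauto
      · rintro hh w (rfl | rfl) <;> tauto
  · rw [Finset.disjoint_left]
    intro e
    simp only [Finset.mem_filter, Finset.mem_univ, true_and, Finset.mem_union]
    intro he
    rw [he]
    simp [huv, Ne.symm huv]
  · rw [Finset.disjoint_left]
    intro e
    simp only [Finset.mem_filter, Finset.mem_univ, true_and]
    intro he
    rw [he]
    simp [huv]

lemma card_fiber_eq {V E F : Type*} [Fintype V] [Fintype E] [Fintype F] [DecidableEq V]
    (ends₁ : E → Sym2 V) (ends₂ : F → Sym2 V)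
    (h : ∀ S, multigraphKappa ends₁ S = multigraphKappa ends₂ S) (s : Sym2 V) :
    (Finset.univ.filter fun e => ends₁ e = s).card
      = (Finset.univ.filter fun e => ends₂ e = s).card := by
  have hin : ∀ S : Finset V, (Finset.univ.filter fun e => ∀ v ∈ ends₁ e, v ∈ S).card
      = (Finset.univ.filter fun e => ∀ v ∈ ends₂ e, v ∈ S).card := by
    intro S
    have a := card_inside ends₁ S
    have b := card_inside ends₂ S
    have c := h Sᶜ
    have d := h Finset.univ
    omega
  induction s using Sym2.ind with
  | _ u v =>
  by_cases huv : u = v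
  · subst huv
    have := hin {u}
    simpa only [mem_single_iff_diag] using this
  · have a1 := card_pair_split ends₁ huv
    have a2 := card_pair_split ends₂ huv
    have b1 := hin {u, v}
    have b2 := hin {u}
    have b3 := hin {v}
    omega

lemma exists_fiber_equiv {V E F : Type*} [Fintype V] [Fintype E] [Fintype F] [DecidableEq V]
    (f : E → V) (g : F → V)
    (h : ∀ s, (Finset.univ.filter fun e => f e = s).card
      = (Finset.univ.filter fun e => g e = s).card) :
    ∃ β : E ≃ F, ∀ e, g (β e) = f e := by
  have hc : ∀ s, Nonempty ({e // f e = s} ≃ {e // g e = s}) := by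
    intro s
    apply Nonempty.intro
    apply Fintype.equivOfCardEq
    rw [Fintype.card_subtype, Fintype.card_subtype, h]
  refine ⟨(Equiv.sigmaFiberEquiv f).symm.trans
    ((Equiv.sigmaCongrRight fun s => Classical.choice (hc s)).trans (Equiv.sigmaFiberEquiv g)), ?_⟩
  intro e
  exact (Classical.choice (hc (f e)) ⟨e, rfl⟩).2

lemma kappa_map {V₁ E₁ V₂ E₂ : Type*} [Fintype E₁] [DecidableEq V₁] [Fintype E₂] [DecidableEq V₂]
    (ends₁ : E₁ → Sym2 V₁) (ends₂ : E₂ → Sym2 V₂) (α : V₁ ≃ V₂) (β : E₁ ≃ E₂)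
    (h : ∀ e : E₁, ends₂ (β e) = Sym2.map α (ends₁ e)) (S : Finset V₁) :
    multigraphKappa ends₂ (S.map α.toEmbedding) = multigraphKappa ends₁ S := by
  unfold multigraphKappa
  symm
  apply Finset.card_equiv β
  intro e
  simp [h, Sym2.mem_map]

lemma map_ideal_le {V₁ E₁ V₂ E₂ : Type*}
    [Fintype E₁] [DecidableEq V₁] [Fintype E₂] [DecidableEq V₂]
    (ends₁ : E₁ → Sym2 V₁) (ends₂ : E₂ → Sym2 V₂) (α : V₁ ≃ V₂)
    (h : ∀ S : Finset V₁,
      multigraphKappa ends₂ (S.map α.toEmbedding) = multigraphKappa ends₁ S) :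
    externalIdeal ends₁ ≤ (externalIdeal ends₂).comap (renameEquiv ℚ α).toAlgHom := by
  conv_lhs => unfold externalIdeal
  rw [Ideal.span_le]
  rintro m ⟨S, a, hS, ha, rfl⟩
  refine Ideal.subset_span ⟨S.map α.toEmbedding, a ∘ α.symm, by simpa using hS, ?_, ?_⟩
  · rw [h, ← ha]
    simp
  · simp [map_prod]

end BizonotopalAux

/-- For multigraphs without isolated vertices, the external bizonotopal algebras
are isomorphic as `ℚ`-algebras if and only if the multigraphs are isomorphic. -/
theorem externalBizonotopal_iso_iff {V₁ E₁ V₂ E₂ : Type*}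
    [Fintype V₁] [Fintype E₁] [DecidableEq V₁]
    [Fintype V₂] [Fintype E₂] [DecidableEq V₂]
    (ends₁ : E₁ → Sym2 V₁) (ends₂ : E₂ → Sym2 V₂)
    (h₁ : ∀ v : V₁, ∃ e : E₁, v ∈ ends₁ e)
    (h₂ : ∀ v : V₂, ∃ e : E₂, v ∈ ends₂ e) :
    Nonempty (externalBizonotopal ends₁ ≃ₐ[ℚ] externalBizonotopal ends₂) ↔
      ∃ (α : V₁ ≃ V₂) (β : E₁ ≃ E₂), ∀ e : E₁, ends₂ (β e) = Sym2.map α (ends₁ e) := by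
  constructor
  · rintro ⟨φ⟩
    obtain ⟨σ, hσ⟩ := exists_kappa_equiv ends₁ ends₂ h₁ h₂ φ
    have hk := kappa_map ends₁ (fun e => Sym2.map σ (ends₁ e)) σ (Equiv.refl E₁) (fun e => rfl)
    have hk' : ∀ S : Finset V₂, multigraphKappa (fun e => Sym2.map σ (ends₁ e)) S
        = multigraphKappa ends₂ S := by
      intro S
      obtain ⟨T, rfl⟩ := σ.finsetCongr.surjective S
      exact (hk T).trans (hσ T).symm
    obtain ⟨β, hβ⟩ := exists_fiber_equiv _ _ (card_fiber_eq _ _ hk')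
    exact ⟨σ, β, hβ⟩
  · rintro ⟨α, β, h⟩
    have hk := kappa_map ends₁ ends₂ α β h
    have hk' : ∀ S : Finset V₂, multigraphKappa ends₁ (S.map α.symm.toEmbedding)
        = multigraphKappa ends₂ S := by
      intro S
      obtain ⟨T, rfl⟩ := α.finsetCongr.surjective S
      simp only [Equiv.finsetCongr_apply]
      rw [hk, Finset.map_map]
      congr 1
      ext; simp
    have i1 := map_ideal_le ends₁ ends₂ α hk
    have i2 := map_ideal_le ends₂ ends₁ α.symm hk'
    refine ⟨Ideal.quotientEquivAlg (externalIdeal ends₁) (externalIdeal ends₂)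
      (renameEquiv ℚ α) ?_⟩
    apply le_antisymm
    · intro p hp
      have := i2 hp
      rw [Ideal.mem_comap] at this
      have h3 := Ideal.mem_map_of_mem ((renameEquiv ℚ α : MvPolynomial V₁ ℚ →+* MvPolynomial V₂ ℚ)) this
      convert h3
      simp [rename_rename]
    · rw [Ideal.map_le_iff_le_comap]
      exact i1
end

section
/- Fix an integer r ≥ 2. For multigraphs G₁ = (V₁, E₁, ends₁) and G₂ = (V₂, E₂, ends₂), the superexternal bizonotopal algebras B_{G₁}^{(r)} and B_{G₂}^{(r)} are isomorphic as ℚ-algebras if and only if G₁ and G₂ are isomorphic as multigraphs, i.e., there exist bijections α : V₁ ≃ V₂ and β : E₁ ≃ E₂ with ends₂(β e) = Sym2.map α (ends₁ e) for all e ∈ E₁. -/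
open Finset MvPolynomial

/-- The defining ideal of the `r`-bizonotopal algebra: generated by the
monomials `∏_{v∈S} z_v^{a_v}` with `S` nonempty and `∑_{v∈S} a_v = κ_S + r`. -/
noncomputable def rBizonotopalIdeal {V E : Type*} [Fintype E] [DecidableEq V]
    (ends : E → Sym2 V) (r : ℕ) : Ideal (MvPolynomial V ℚ) :=
  Ideal.span {m : MvPolynomial V ℚ |
    ∃ (S : Finset V) (a : V → ℕ), S.Nonempty ∧
      (∑ v ∈ S, a v = multigraphKappa ends S + r) ∧
      m = ∏ v ∈ S, X v ^ a v}

/-- The `r`-bizonotopal algebra `B_G^{(r)}` of a multigraph. -/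
def rBizonotopal {V E : Type*} [Fintype E] [DecidableEq V]
    (ends : E → Sym2 V) (r : ℕ) : Type _ :=
  MvPolynomial V ℚ ⧸ rBizonotopalIdeal ends r

noncomputable instance {V E : Type*} [Fintype E] [DecidableEq V] (ends : E → Sym2 V)
    (r : ℕ) : CommRing (rBizonotopal ends r) :=
  Ideal.Quotient.commRing _

noncomputable instance {V E : Type*} [Fintype E] [DecidableEq V] (ends : E → Sym2 V)
    (r : ℕ) : Algebra ℚ (rBizonotopal ends r) :=
  Ideal.Quotient.algebra _


namespace BizAux

lemma coeff_eq_zero_of_mem {V E : Type*} [Fintype E] [DecidableEq V]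
    (ends : E → Sym2 V) (r : ℕ) {p : MvPolynomial V ℚ} (hp : p ∈ rBizonotopalIdeal ends r) :
    ∀ m : V →₀ ℕ, (∀ S : Finset V, S.Nonempty → ∑ v ∈ S, m v < multigraphKappa ends S + r) →
      coeff m p = 0 := by
  classical
  unfold rBizonotopalIdeal at hp
  induction hp using Submodule.span_induction with
  | mem x hx =>
    obtain ⟨S, a, hS, hsum, rfl⟩ := hx
    intro m hm
    have h1 : (∏ v ∈ S, X v ^ a v : MvPolynomial V ℚ) =
        monomial (∑ v ∈ S, Finsupp.single v (a v)) 1 := by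
      rw [monomial_sum_one]
      exact Finset.prod_congr rfl fun v _ => X_pow_eq_monomial
    rw [h1, coeff_monomial, if_neg]
    rintro rfl
    have h2 := hm S hS
    have h3 : ∀ v ∈ S, (∑ u ∈ S, Finsupp.single u (a u)) v = a v := by
      intro v hv
      simp [Finsupp.finsetSum_apply, Finsupp.single_apply, hv]
    rw [Finset.sum_congr rfl h3] at h2
    exact absurd hsum h2.ne
  | zero => simp
  | add x y _ _ hx hy => intro m hm; simp [hx m hm, hy m hm]
  | smul c x _ hx =>
    intro m hm
    rw [smul_eq_mul, coeff_mul]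
    refine Finset.sum_eq_zero fun ij hij => ?_
    rw [hx ij.2, mul_zero]
    intro S hS
    refine lt_of_le_of_lt (Finset.sum_le_sum fun v _ => ?_) (hm S hS)
    rw [← Finset.HasAntidiagonal.mem_antidiagonal.1 hij]
    simp

lemma coeff_single_of_mem {V E : Type*} [Fintype E] [DecidableEq V]
    (ends : E → Sym2 V) (r : ℕ) (hr : 2 ≤ r) {p : MvPolynomial V ℚ}
    (hp : p ∈ rBizonotopalIdeal ends r) (u : V) : coeff (Finsupp.single u 1) p = 0 := by
  refine coeff_eq_zero_of_mem ends r hp _ fun S _ => ?_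
  have : ∑ v ∈ S, (Finsupp.single u 1 : V →₀ ℕ) v ≤ 1 := by
    simp only [Finsupp.single_apply, Finset.sum_ite_eq]
    split_ifs <;> simp
  omega

lemma constantCoeff_of_mem {V E : Type*} [Fintype E] [DecidableEq V]
    (ends : E → Sym2 V) (r : ℕ) (hr : 2 ≤ r) {p : MvPolynomial V ℚ}
    (hp : p ∈ rBizonotopalIdeal ends r) : constantCoeff p = 0 := by
  rw [constantCoeff_eq]
  refine coeff_eq_zero_of_mem ends r hp _ fun S _ => ?_
  simp only [Finsupp.coe_zero, Pi.zero_apply, Finset.sum_const_zero]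
  omega

/-- a linear form supported on `T` is nilpotent of order at most `κ_T + r`. -/
lemma linear_pow_mem {V E : Type*} [Fintype E] [DecidableEq V]
    (ends : E → Sym2 V) (r : ℕ) (T : Finset V) (hT : T.Nonempty) (c : V → ℚ) :
    (∑ v ∈ T, C (c v) * X v : MvPolynomial V ℚ) ^ (multigraphKappa ends T + r) ∈
      rBizonotopalIdeal ends r := by
  rw [Finset.sum_pow_eq_sum_piAntidiag]
  refine Ideal.sum_mem _ fun k hk => ?_
  simp only [mul_pow, Finset.prod_mul_distrib]
  refine Ideal.mul_mem_left _ _ (Ideal.mul_mem_left _ _ (Ideal.subset_span ?_))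
  exact ⟨T, k, hT, (Finset.mem_piAntidiag.1 hk).1, rfl⟩

/-- existence of a standard monomial of top degree supported on `S`. -/
lemma exists_standard {V E : Type*} [Fintype E] [DecidableEq V]
    (ends : E → Sym2 V) (r : ℕ) (hr : 2 ≤ r) (S : Finset V) (hS : S.Nonempty) :
    ∃ a : V →₀ ℕ, a.support ⊆ S ∧ ∑ v ∈ S, a v = multigraphKappa ends S + (r - 1) ∧
      ∀ T : Finset V, T.Nonempty → ∑ v ∈ T, a v < multigraphKappa ends T + r := by
  classical
  obtain ⟨v0, hv0⟩ := hS
  have hch : ∀ e : E, ∃ v : V, (∃ v ∈ S, v ∈ ends e) → v ∈ S ∧ v ∈ ends e := by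
    intro e
    by_cases h : ∃ v ∈ S, v ∈ ends e
    · obtain ⟨v, hv⟩ := h
      exact ⟨v, fun _ => hv⟩
    · exact ⟨v0, fun h' => absurd h' h⟩
  choose g hg using hch
  let F : Finset E := Finset.univ.filter fun e => ∃ v ∈ S, v ∈ ends e
  let a : V →₀ ℕ := ∑ e ∈ F, Finsupp.single (g e) 1 + Finsupp.single v0 (r - 1)
  have hgF : ∀ e ∈ F, g e ∈ S ∧ g e ∈ ends e := fun e he => hg e (Finset.mem_filter.1 he).2
  have hsum : ∀ T : Finset V, ∑ v ∈ T, a v =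
      (F.filter fun e => g e ∈ T).card + if v0 ∈ T then r - 1 else 0 := by
    intro T
    simp only [a, Finsupp.add_apply, Finsupp.finsetSum_apply, Finset.sum_add_distrib]
    rw [Finset.sum_comm]
    simp only [Finsupp.single_apply, Finset.sum_ite_eq, Finset.card_filter]
  refine ⟨a, ?_, ?_, ?_⟩
  · intro v hv
    by_contra hvS
    have h1 := hsum {v}
    rw [Finset.sum_singleton] at h1
    refine (Finsupp.mem_support_iff.1 hv) ?_
    rw [h1, if_neg, add_zero, Finset.card_eq_zero]
    · refine Finset.filter_eq_empty_iff.2 fun e he h => hvS ?_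
      rw [← Finset.mem_singleton.1 h]
      exact (hgF e he).1
    · intro h
      rw [← Finset.mem_singleton.1 h] at hvS
      exact hvS hv0
  · rw [hsum, if_pos hv0, Finset.filter_true_of_mem fun e he => (hgF e he).1]
    rfl
  · intro T _
    rw [hsum]
    have : (F.filter fun e => g e ∈ T).card ≤ multigraphKappa ends T := by
      refine Finset.card_le_card fun e he => ?_
      rw [Finset.mem_filter] at he
      exact Finset.mem_filter.2 ⟨Finset.mem_univ _, g e, he.2, (hgF e he.1).2⟩
    split_ifs <;> omega

lemma coeff_single_mul {V : Type*} [DecidableEq V] (u : V) (p q : MvPolynomial V ℚ) :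
    coeff (Finsupp.single u 1) (p * q) =
      constantCoeff p * coeff (Finsupp.single u 1) q +
        coeff (Finsupp.single u 1) p * constantCoeff q := by
  rw [coeff_mul, Finsupp.antidiagonal_single, Finset.sum_map]
  simp [Finset.Nat.antidiagonal_succ, constantCoeff_eq]

lemma constantCoeff_aeval {V W : Type*} (Q : V → MvPolynomial W ℚ)
    (hQ : ∀ v, constantCoeff (Q v) = 0) (p : MvPolynomial V ℚ) :
    constantCoeff (aeval Q p) = constantCoeff p := by
  induction p using MvPolynomial.induction_on with
  | C a => simp [algebraMap_eq]
  | add p q hp hq => rw [map_add, map_add, map_add, hp, hq]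
  | mul_X p i hp => simp [hQ]

lemma coeff_single_aeval {V W : Type*} [Fintype V] [DecidableEq V] [DecidableEq W]
    (Q : V → MvPolynomial W ℚ)
    (hQ : ∀ v, constantCoeff (Q v) = 0) (u : W) (p : MvPolynomial V ℚ) :
    coeff (Finsupp.single u 1) (aeval Q p) =
      ∑ v, coeff (Finsupp.single v 1) p * coeff (Finsupp.single u 1) (Q v) := by
  induction p using MvPolynomial.induction_on with
  | C a =>
    have : ∀ v : V, (0 : V →₀ ℕ) ≠ Finsupp.single v 1 := fun v h => by simpa using h.symm
    have h2 : (0 : W →₀ ℕ) ≠ Finsupp.single u 1 := fun h => by simpa using h.symm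
    simp [algebraMap_eq, coeff_C, this, h2]
  | add p q hp hq => rw [map_add, coeff_add, hp, hq, ← Finset.sum_add_distrib]; simp only [coeff_add, add_mul]
  | mul_X p i hp =>
    rw [map_mul, aeval_X, coeff_single_mul, hQ, constantCoeff_aeval Q hQ]
    simp only [coeff_single_mul, constantCoeff_X, mul_zero, add_zero]
    rw [Finset.sum_eq_single i]
    · simp
    · intro b _ hb
      rw [coeff_X, if_neg]
      · simp
      · intro h
        exact hb ((Finsupp.single_left_injective one_ne_zero h).symm)
    · simp

lemma coeff_linear_pow {V : Type*} [Fintype V] [DecidableEq V] (c : V → ℚ) (a : V →₀ ℕ) :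
    coeff a ((∑ v, C (c v) * X v : MvPolynomial V ℚ) ^ (∑ v, a v)) =
      (Nat.multinomial Finset.univ a : ℚ) * ∏ v, c v ^ a v := by
  rw [Finset.sum_pow_eq_sum_piAntidiag, coeff_sum, Finset.sum_eq_single (a : V → ℕ)]
  · have h1 : (∏ v, (C (c v) * X v) ^ a v : MvPolynomial V ℚ) =
        C (∏ v, c v ^ a v) * monomial a 1 := by
      simp only [mul_pow, Finset.prod_mul_distrib, map_prod, map_pow]
      rw [monomial_eq, Finsupp.prod_fintype _ _ (by simp)]
      simp
    rw [h1, ← map_natCast (C : ℚ →+* MvPolynomial V ℚ), coeff_C_mul, coeff_C_mul]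
    simp
  · intro k _ hk
    have h1 : (∏ v, (C (c v) * X v) ^ k v : MvPolynomial V ℚ) =
        C (∏ v, c v ^ k v) * monomial (Finsupp.equivFunOnFinite.symm k) 1 := by
      simp only [mul_pow, Finset.prod_mul_distrib, map_prod, map_pow]
      rw [monomial_eq, Finsupp.prod_fintype _ _ (by simp)]
      simp
    rw [h1, ← map_natCast (C : ℚ →+* MvPolynomial V ℚ), coeff_C_mul, coeff_C_mul,
      coeff_monomial, if_neg]
    · simp
    · intro h
      apply hk
      rw [← h]
      rfl
  · intro h
    exact absurd (Finset.mem_piAntidiag.2 ⟨rfl, by simp⟩) h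

lemma exists_single_of_degree {V : Type*} (x : V →₀ ℕ) (h : x.degree = 1) :
    ∃ u, x = Finsupp.single u 1 := by
  classical
  have h0 : x ≠ 0 := by
    rintro rfl
    simp at h
  obtain ⟨u, hu⟩ := Finsupp.ne_iff.1 h0
  have hle : Finsupp.single u 1 ≤ x := by
    rw [Finsupp.single_le_iff]
    exact Nat.one_le_iff_ne_zero.2 (by simpa using hu)
  refine ⟨u, ?_⟩
  obtain ⟨y, rfl⟩ := le_iff_exists_add.1 hle
  have hy : y.degree = 0 := by
    rw [map_add, Finsupp.degree_single] at h
    omega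
  rw [(Finsupp.degree_eq_zero_iff y).1 hy, add_zero]

lemma coeff_pow_lowest {V : Type*} [Fintype V] [DecidableEq V] (p : MvPolynomial V ℚ)
    (hp : constantCoeff p = 0) (a : V →₀ ℕ) :
    coeff a (p ^ (∑ v, a v)) =
      (Nat.multinomial Finset.univ a : ℚ) * ∏ v, coeff (Finsupp.single v 1) p ^ a v := by
  rw [← coeff_linear_pow]
  set l : MvPolynomial V ℚ := ∑ v, C (coeff (Finsupp.single v 1) p) * X v with hl
  have hlc : constantCoeff l = 0 := by simp [hl]
  have hl1 : ∀ u, coeff (Finsupp.single u 1) l = coeff (Finsupp.single u 1) p := by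
    intro u
    rw [hl, coeff_sum, Finset.sum_eq_single u]
    · simp
    · intro b _ hb
      rw [coeff_C_mul, coeff_X, if_neg]
      · simp
      · intro h
        exact hb (Finsupp.single_left_injective one_ne_zero h)
    · simp
  have hmem : ∀ q : MvPolynomial V ℚ, constantCoeff q = 0 → q ∈ idealOfVars V ℚ := by
    intro q hq
    rw [← pow_one (idealOfVars V ℚ), mem_pow_idealOfVars_iff']
    intro x hx
    have : x = 0 := by
      rw [← Finsupp.degree_eq_zero_iff]
      omega
    rw [this, ← constantCoeff_eq, hq]
  have hd : p - l ∈ idealOfVars V ℚ ^ 2 := by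
    rw [mem_pow_idealOfVars_iff']
    intro x hx
    rcases Nat.lt_or_ge x.degree 1 with h | h
    · have : x = 0 := by
        rw [← Finsupp.degree_eq_zero_iff]
        omega
      rw [this, ← constantCoeff_eq, map_sub, hp, hlc, sub_zero]
    · have h1 : x.degree = 1 := by omega
      obtain ⟨u, rfl⟩ := exists_single_of_degree x h1
      rw [coeff_sub, hl1, sub_self]
  have key : ∀ k : ℕ, p ^ k - l ^ k ∈ idealOfVars V ℚ ^ (k + 1) := by
    intro k
    induction k with
    | zero => simp
    | succ k ih =>
      have : p ^ (k + 1) - l ^ (k + 1) = p ^ k * (p - l) + (p ^ k - l ^ k) * l := by ring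
      rw [this]
      refine add_mem ?_ ?_
      · have h1 := Ideal.mul_mem_mul (Ideal.pow_mem_pow (hmem p hp) k) hd
        rwa [← pow_add] at h1
      · have h1 := Ideal.mul_mem_mul ih (hmem l hlc)
        rwa [← pow_succ] at h1
  have h2 := (mem_pow_idealOfVars_iff' _ _).1 (key (∑ v, a v)) a (by
    rw [Finsupp.degree_eq_sum]
    omega)
  rw [coeff_sub] at h2
  linarith

/-- the order of nilpotency is at least `κ_S + r` if all linear coefficients on `S` are nonzero. -/
lemma kappa_le_of_pow_mem {V E : Type*} [Fintype V] [Fintype E] [DecidableEq V]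
    (ends : E → Sym2 V) (r : ℕ) (hr : 2 ≤ r) (S : Finset V) (hS : S.Nonempty)
    (p : MvPolynomial V ℚ) (hp : constantCoeff p = 0)
    (hc : ∀ v ∈ S, coeff (Finsupp.single v 1) p ≠ 0) (k : ℕ)
    (hk : p ^ k ∈ rBizonotopalIdeal ends r) : multigraphKappa ends S + r ≤ k := by
  obtain ⟨a, ha, hsum, hst⟩ := exists_standard ends r hr S hS
  by_contra hlt
  have h0 : ∑ v, a v = multigraphKappa ends S + (r - 1) := by
    rw [← hsum]
    symm
    refine Finset.sum_subset (Finset.subset_univ _) fun v _ hv => ?_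
    by_contra h
    exact hv (ha (Finsupp.mem_support_iff.2 h))
  have h1 : p ^ (∑ v, a v) ∈ rBizonotopalIdeal ends r :=
    Ideal.pow_mem_of_pow_mem _ hk (by omega)
  have h2 := coeff_eq_zero_of_mem ends r h1 a hst
  rw [coeff_pow_lowest p hp] at h2
  rcases mul_eq_zero.1 h2 with h | h
  · exact (Nat.multinomial_pos _ _).ne' (by exact_mod_cast h)
  · obtain ⟨v, _, hv⟩ := Finset.prod_eq_zero_iff.1 h
    by_cases hvS : v ∈ S
    · exact hc v hvS (by by_contra h3; exact pow_ne_zero _ h3 hv)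
    · have : a v = 0 := by
        by_contra h
        exact hvS (ha (Finsupp.mem_support_iff.2 h))
      simp [this] at hv

end BizAux

namespace BizAux

/-- The quotient map. -/
noncomputable def bmk {V E : Type*} [Fintype E] [DecidableEq V] (ends : E → Sym2 V) (r : ℕ) :
    MvPolynomial V ℚ →ₐ[ℚ] rBizonotopal ends r :=
  Ideal.Quotient.mkₐ ℚ (rBizonotopalIdeal ends r)

lemma bmk_eq_zero {V E : Type*} [Fintype E] [DecidableEq V] (ends : E → Sym2 V) (r : ℕ)
    (p : MvPolynomial V ℚ) : bmk ends r p = 0 ↔ p ∈ rBizonotopalIdeal ends r :=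
  Ideal.Quotient.eq_zero_iff_mem

lemma bmk_surjective {V E : Type*} [Fintype E] [DecidableEq V] (ends : E → Sym2 V) (r : ℕ) :
    Function.Surjective (bmk ends r) :=
  Ideal.Quotient.mk_surjective

section lift

variable {V₁ E₁ V₂ E₂ : Type*}
    [Fintype V₁] [Fintype E₁] [DecidableEq V₁]
    [Fintype V₂] [Fintype E₂] [DecidableEq V₂]
    (ends₁ : E₁ → Sym2 V₁) (ends₂ : E₂ → Sym2 V₂)
    (r : ℕ)

lemma bmk_aeval (φ : rBizonotopal ends₁ r →ₐ[ℚ] rBizonotopal ends₂ r)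
    (P : V₁ → MvPolynomial V₂ ℚ) (hP : ∀ v, bmk ends₂ r (P v) = φ (bmk ends₁ r (X v)))
    (p : MvPolynomial V₁ ℚ) : bmk ends₂ r (aeval P p) = φ (bmk ends₁ r p) := by
  have : (bmk ends₂ r).comp (aeval P) = φ.comp (bmk ends₁ r) := by
    refine MvPolynomial.algHom_ext fun v => ?_
    simp only [AlgHom.comp_apply, aeval_X]
    exact hP v
  exact DFunLike.congr_fun this p

lemma aeval_mem (φ : rBizonotopal ends₁ r →ₐ[ℚ] rBizonotopal ends₂ r)
    (P : V₁ → MvPolynomial V₂ ℚ) (hP : ∀ v, bmk ends₂ r (P v) = φ (bmk ends₁ r (X v)))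
    (p : MvPolynomial V₁ ℚ) (hp : p ∈ rBizonotopalIdeal ends₁ r) :
    aeval P p ∈ rBizonotopalIdeal ends₂ r := by
  rw [← bmk_eq_zero, bmk_aeval ends₁ ends₂ r φ P hP, (bmk_eq_zero ends₁ r p).2 hp, map_zero]

lemma constantCoeff_lift (hr : 2 ≤ r) (φ : rBizonotopal ends₁ r →ₐ[ℚ] rBizonotopal ends₂ r)
    (P : V₁ → MvPolynomial V₂ ℚ) (hP : ∀ v, bmk ends₂ r (P v) = φ (bmk ends₁ r (X v)))
    (v : V₁) : constantCoeff (P v) = 0 := by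
  have h1 := linear_pow_mem ends₁ r {v} (Finset.singleton_nonempty v) (fun _ => 1)
  have h2 := constantCoeff_of_mem ends₂ r hr (aeval_mem ends₁ ends₂ r φ P hP _ h1)
  simp only [Finset.sum_singleton, map_one, one_mul, map_pow, aeval_X] at h2
  by_contra h
  exact pow_ne_zero _ h h2

lemma kappa_le (hr : 2 ≤ r) (φ : rBizonotopal ends₁ r →ₐ[ℚ] rBizonotopal ends₂ r)
    (P : V₁ → MvPolynomial V₂ ℚ) (hP : ∀ v, bmk ends₂ r (P v) = φ (bmk ends₁ r (X v)))
    (σ : V₁ ≃ V₂) (hσ : ∀ v, coeff (Finsupp.single (σ v) 1) (P v) ≠ 0) (T : Finset V₁) :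
    multigraphKappa ends₂ (T.image σ) ≤ multigraphKappa ends₁ T := by
  rcases T.eq_empty_or_nonempty with rfl | hT
  · simp [multigraphKappa]
  have hne : (∏ v ∈ T, ∑ u ∈ T, C (coeff (Finsupp.single (σ v) 1) (P u)) * X u :
      MvPolynomial V₁ ℚ) ≠ 0 := by
    rw [Finset.prod_ne_zero_iff]
    intro v hv h0
    have h1 := congrArg (MvPolynomial.eval (Pi.single v (1 : ℚ))) h0
    simp only [map_sum, map_mul, eval_C, eval_X, map_zero] at h1
    rw [Finset.sum_eq_single v] at h1
    · simp at h1
      exact hσ v h1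
    · intro b _ hb
      simp [hb]
    · exact fun h => absurd hv h
  obtain ⟨c, hc⟩ : ∃ c : V₁ → ℚ, MvPolynomial.eval c
      (∏ v ∈ T, ∑ u ∈ T, C (coeff (Finsupp.single (σ v) 1) (P u)) * X u) ≠ 0 := by
    by_contra! h
    exact hne (MvPolynomial.funext fun x => by rw [h x, map_zero])
  rw [map_prod, Finset.prod_ne_zero_iff] at hc
  have h1 := linear_pow_mem ends₁ r T hT c
  have h2 := aeval_mem ends₁ ends₂ r φ P hP _ h1
  rw [map_pow] at h2
  have h3 : aeval P (∑ v ∈ T, C (c v) * X v : MvPolynomial V₁ ℚ) = ∑ v ∈ T, C (c v) * P v := by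
    rw [map_sum]
    refine Finset.sum_congr rfl fun v _ => ?_
    rw [map_mul, aeval_X, aeval_C, algebraMap_eq]
  rw [h3] at h2
  have h4 := kappa_le_of_pow_mem ends₂ r hr (T.image σ) (hT.image σ) _ ?_ ?_ _ h2
  · omega
  · simp [constantCoeff_lift ends₁ ends₂ r hr φ P hP]
  · intro w hw
    obtain ⟨v, hv, rfl⟩ := Finset.mem_image.1 hw
    have h5 := hc v hv
    simp only [map_sum, map_mul, eval_C, eval_X] at h5
    simp only [coeff_sum, coeff_C_mul]
    intro h6
    apply h5
    rw [← h6]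
    exact Finset.sum_congr rfl fun u _ => mul_comm _ _

lemma matrix_mul (hr : 2 ≤ r) (φ : rBizonotopal ends₁ r →ₐ[ℚ] rBizonotopal ends₂ r)
    (ψ : rBizonotopal ends₂ r →ₐ[ℚ] rBizonotopal ends₁ r)
    (hψ : ∀ x, ψ (φ x) = x)
    (P : V₁ → MvPolynomial V₂ ℚ) (hP : ∀ v, bmk ends₂ r (P v) = φ (bmk ends₁ r (X v)))
    (Q : V₂ → MvPolynomial V₁ ℚ) (hQ : ∀ v, bmk ends₁ r (Q v) = ψ (bmk ends₂ r (X v))) :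
    (Matrix.of fun v w => coeff (Finsupp.single w 1) (P v) : Matrix V₁ V₂ ℚ) *
      (Matrix.of fun v w => coeff (Finsupp.single w 1) (Q v) : Matrix V₂ V₁ ℚ) = 1 := by
  ext v u
  rw [Matrix.mul_apply]
  simp only [Matrix.of_apply]
  rw [← coeff_single_aeval Q (constantCoeff_lift ends₂ ends₁ r hr ψ Q hQ)]
  have h1 : aeval Q (P v) - X v ∈ rBizonotopalIdeal ends₁ r := by
    rw [← bmk_eq_zero, map_sub, bmk_aeval ends₂ ends₁ r ψ Q hQ, hP, hψ, sub_self]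
  have h2 := coeff_single_of_mem ends₁ r hr h1 u
  rw [coeff_sub, sub_eq_zero] at h2
  rw [h2, coeff_X, Matrix.one_apply]
  congr 1
  rw [eq_iff_iff]
  exact ⟨fun h => Finsupp.single_left_injective one_ne_zero h, fun h => by rw [h]⟩

end lift

lemma exists_equiv_of_mul_eq_one {V₁ V₂ : Type*} [Fintype V₁] [DecidableEq V₁]
    [Fintype V₂] [DecidableEq V₂] (L : Matrix V₁ V₂ ℚ) (M : Matrix V₂ V₁ ℚ)
    (h : L * M = 1) (h' : M * L = 1) : ∃ σ : V₁ ≃ V₂, ∀ v, L v (σ v) ≠ 0 := by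
  have e : V₁ ≃ V₂ := Fintype.equivOfCardEq (Matrix.square_of_invertible L M h h')
  have hA : (L.submatrix id e) * (M.submatrix e id) = 1 := by
    rw [Matrix.submatrix_mul_equiv, h]
    simp
  have hdet : (L.submatrix id e).det ≠ 0 := by
    intro h0
    have := congrArg Matrix.det hA
    rw [Matrix.det_mul, h0, zero_mul, Matrix.det_one] at this
    exact zero_ne_one this
  rw [Matrix.det_apply] at hdet
  obtain ⟨π, _, hπ⟩ := Finset.exists_ne_zero_of_sum_ne_zero hdet
  have h1 : ∏ i, (L.submatrix id e) (π i) i ≠ 0 := fun h0 => hπ (by rw [h0, smul_zero])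
  rw [Finset.prod_ne_zero_iff] at h1
  refine ⟨π.symm.trans e, fun v => ?_⟩
  have h2 := h1 (π.symm v) (Finset.mem_univ _)
  simpa using h2

/-- number of edges inside `T`. -/
lemma card_inside {V E : Type*} [Fintype V] [Fintype E] [DecidableEq V]
    (ends : E → Sym2 V) (T : Finset V) :
    (Finset.univ.filter fun e => ∀ v ∈ ends e, v ∈ T).card + multigraphKappa ends Tᶜ =
      multigraphKappa ends Finset.univ := by
  classical
  have h1 : multigraphKappa ends Finset.univ = Fintype.card E := by
    unfold multigraphKappa
    rw [Finset.filter_true_of_mem, Finset.card_univ]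
    intro e _
    induction h : ends e using Sym2.ind with
    | _ x y => exact ⟨x, Finset.mem_univ _, Sym2.mem_mk_left x y⟩
  have h2 : (Finset.univ.filter fun e => ∃ v ∈ Tᶜ, v ∈ ends e) =
      Finset.univ.filter fun e => ¬ ∀ v ∈ ends e, v ∈ T := by
    refine Finset.filter_congr fun e _ => ?_
    push Not
    simp only [Finset.mem_compl]
    exact ⟨fun ⟨v, a, b⟩ => ⟨v, b, a⟩, fun ⟨v, a, b⟩ => ⟨v, b, a⟩⟩
  rw [h1, multigraphKappa, h2, Finset.card_filter_add_card_filter_not, Finset.card_univ]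

lemma card_inside_pair {V E : Type*} [Fintype V] [Fintype E] [DecidableEq V]
    (ends : E → Sym2 V) (x y : V) (hxy : x ≠ y) :
    (Finset.univ.filter fun e => ∀ v ∈ ends e, v ∈ ({x, y} : Finset V)).card =
      (Finset.univ.filter fun e => ends e = s(x, y)).card +
      ((Finset.univ.filter fun e => ends e = s(x, x)).card +
      (Finset.univ.filter fun e => ends e = s(y, y)).card) := by
  classical
  rw [← Finset.card_union_of_disjoint, ← Finset.card_union_of_disjoint]
  · congr 1
    ext e
    simp only [Finset.mem_filter, Finset.mem_univ, true_and, Finset.mem_union]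
    induction h : ends e using Sym2.ind with
    | _ a b =>
      simp only [Sym2.mem_iff, Finset.mem_insert, Finset.mem_singleton, Sym2.eq_iff]
      constructor
      · intro h
        have h1 := h a (Or.inl rfl)
        have h2 := h b (Or.inr rfl)
        tauto
      · rintro h v (rfl | rfl) <;> tauto
  · rw [Finset.disjoint_left]
    intro e he
    simp only [Finset.mem_filter, Finset.mem_univ, true_and, Finset.mem_union] at he ⊢
    rw [he]
    simp only [Sym2.eq_iff]
    rintro (h | h) <;> rcases h with ⟨h, h'⟩ | ⟨h, h'⟩ <;> first | exact hxy h'.symm | exact hxy h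
  · rw [Finset.disjoint_left]
    intro e he
    simp only [Finset.mem_filter, Finset.mem_univ, true_and] at he ⊢
    rw [he]
    simp only [Sym2.eq_iff]
    tauto

lemma card_inside_single {V E : Type*} [Fintype V] [Fintype E] [DecidableEq V]
    (ends : E → Sym2 V) (x : V) :
    (Finset.univ.filter fun e => ∀ v ∈ ends e, v ∈ ({x} : Finset V)).card =
      (Finset.univ.filter fun e => ends e = s(x, x)).card := by
  classical
  congr 1
  ext e
  simp only [Finset.mem_filter, Finset.mem_univ, true_and]
  induction h : ends e using Sym2.ind with
  | _ a b =>
    simp only [Sym2.mem_iff, Finset.mem_singleton, Sym2.eq_iff]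
    constructor
    · intro h
      have h1 := h a (Or.inl rfl)
      have h2 := h b (Or.inr rfl)
      tauto
    · rintro h v (rfl | rfl) <;> tauto

lemma exists_edge_equiv {V E₁ E₂ : Type*} [Fintype V] [Fintype E₁] [Fintype E₂] [DecidableEq V]
    (f : E₁ → Sym2 V) (g : E₂ → Sym2 V)
    (h : ∀ S, multigraphKappa f S = multigraphKappa g S) :
    ∃ β : E₁ ≃ E₂, ∀ e, g (β e) = f e := by
  classical
  have hin : ∀ T : Finset V, (Finset.univ.filter fun e => ∀ v ∈ f e, v ∈ T).card =
      (Finset.univ.filter fun e => ∀ v ∈ g e, v ∈ T).card := by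
    intro T
    have h1 := card_inside f T
    have h2 := card_inside g T
    rw [h, h] at h1
    omega
  have hs : ∀ x : V, (Finset.univ.filter fun e => f e = s(x, x)).card =
      (Finset.univ.filter fun e => g e = s(x, x)).card := by
    intro x
    rw [← card_inside_single, ← card_inside_single, hin]
  have hc : ∀ s : Sym2 V, (Finset.univ.filter fun e => f e = s).card =
      (Finset.univ.filter fun e => g e = s).card := by
    intro s
    induction s using Sym2.ind with
    | _ x y =>
      by_cases hxy : x = y
      · subst hxy
        exact hs x
      · have h1 := card_inside_pair f x y hxy
        have h2 := card_inside_pair g x y hxy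
        rw [hin, hs, hs] at h1
        omega
  have hf : ∀ s : Sym2 V, Nonempty ({a // f a = s} ≃ {b // g b = s}) := by
    intro s
    refine ⟨Fintype.equivOfCardEq ?_⟩
    rw [Fintype.card_subtype, Fintype.card_subtype, hc]
  exact ⟨Equiv.ofFiberEquiv fun s => (hf s).some, fun e => Equiv.ofFiberEquiv_map _ e⟩

lemma kappa_map {V₁ V₂ E₁ : Type*} [Fintype E₁] [DecidableEq V₁] [DecidableEq V₂]
    (ends₁ : E₁ → Sym2 V₁) (σ : V₁ ≃ V₂) (T : Finset V₁) :
    multigraphKappa (fun e => Sym2.map σ (ends₁ e)) (T.image σ) = multigraphKappa ends₁ T := by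
  unfold multigraphKappa
  congr 1
  refine Finset.filter_congr fun e _ => ?_
  simp only [Finset.mem_image, Sym2.mem_map]
  constructor
  · rintro ⟨_, ⟨v, hv, rfl⟩, ⟨w, hw, h⟩⟩
    exact ⟨v, hv, σ.injective h ▸ hw⟩
  · rintro ⟨v, hv, h⟩
    exact ⟨σ v, ⟨v, hv, rfl⟩, v, h, rfl⟩

lemma kappa_comp {V E₁ E₂ : Type*} [Fintype E₁] [Fintype E₂] [DecidableEq V]
    (g : E₂ → Sym2 V) (β : E₁ ≃ E₂) (T : Finset V) :
    multigraphKappa (fun e => g (β e)) T = multigraphKappa g T := by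
  classical
  unfold multigraphKappa
  refine Finset.card_equiv β fun e => ?_
  simp

lemma kappa_eq {V₁ E₁ V₂ E₂ : Type*}
    [Fintype V₁] [Fintype E₁] [DecidableEq V₁]
    [Fintype V₂] [Fintype E₂] [DecidableEq V₂]
    (ends₁ : E₁ → Sym2 V₁) (ends₂ : E₂ → Sym2 V₂) (σ : V₁ ≃ V₂) (τ : V₂ ≃ V₁)
    (hσ : ∀ T, multigraphKappa ends₂ (T.image σ) ≤ multigraphKappa ends₁ T)
    (hτ : ∀ T, multigraphKappa ends₁ (T.image τ) ≤ multigraphKappa ends₂ T) (T : Finset V₁) :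
    multigraphKappa ends₂ (T.image σ) = multigraphKappa ends₁ T := by
  have hsum : ∑ T : Finset V₁, multigraphKappa ends₁ ((T.image σ).image τ) =
      ∑ T : Finset V₁, multigraphKappa ends₁ T := by
    refine Fintype.sum_equiv (Equiv.finsetCongr (σ.trans τ)) _ _ fun T => ?_
    congr 1
    ext x
    simp
  have hle : ∀ T ∈ (Finset.univ : Finset (Finset V₁)),
      multigraphKappa ends₁ ((T.image σ).image τ) ≤ multigraphKappa ends₁ T :=
    fun T _ => (hτ _).trans (hσ T)
  have := (Finset.sum_eq_sum_iff_of_le hle).1 hsum T (Finset.mem_univ _)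
  have h1 := hτ (T.image σ)
  have h2 := hσ T
  omega

lemma map_ideal_le {V₁ E₁ V₂ E₂ : Type*}
    [Fintype E₁] [DecidableEq V₁] [Fintype E₂] [DecidableEq V₂]
    (ends₁ : E₁ → Sym2 V₁) (ends₂ : E₂ → Sym2 V₂) (r : ℕ) (α : V₁ ≃ V₂)
    (h : ∀ T, multigraphKappa ends₂ (T.image α) = multigraphKappa ends₁ T) :
    rBizonotopalIdeal ends₁ r ≤ (rBizonotopalIdeal ends₂ r).comap
      (rename α : MvPolynomial V₁ ℚ →ₐ[ℚ] MvPolynomial V₂ ℚ) := by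
  unfold rBizonotopalIdeal
  rw [Ideal.span_le]
  rintro _ ⟨S, a, hS, hsum, rfl⟩
  refine Ideal.subset_span ⟨S.image α, a ∘ α.symm, hS.image _, ?_, ?_⟩
  · rw [h, Finset.sum_image fun x _ y _ hxy => α.injective hxy]
    simpa using hsum
  · rw [Finset.prod_image fun x _ y _ hxy => α.injective hxy]
    simp

end BizAux

/-- For `r ≥ 2`, the superexternal bizonotopal algebras of two multigraphs are
isomorphic as `ℚ`-algebras if and only if the multigraphs are isomorphic. -/
theorem rBizonotopal_iso_iff {V₁ E₁ V₂ E₂ : Type*}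
    [Fintype V₁] [Fintype E₁] [DecidableEq V₁]
    [Fintype V₂] [Fintype E₂] [DecidableEq V₂]
    (ends₁ : E₁ → Sym2 V₁) (ends₂ : E₂ → Sym2 V₂)
    (r : ℕ) (hr : 2 ≤ r) :
    Nonempty (rBizonotopal ends₁ r ≃ₐ[ℚ] rBizonotopal ends₂ r) ↔
      ∃ (α : V₁ ≃ V₂) (β : E₁ ≃ E₂), ∀ e : E₁, ends₂ (β e) = Sym2.map α (ends₁ e) := by
  constructor
  · rintro ⟨φ⟩
    choose P hP using fun v : V₁ => BizAux.bmk_surjective ends₂ r (φ (BizAux.bmk ends₁ r (X v)))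
    choose Q hQ using
      fun v : V₂ => BizAux.bmk_surjective ends₁ r (φ.symm (BizAux.bmk ends₂ r (X v)))
    have h12 := BizAux.matrix_mul ends₁ ends₂ r hr φ.toAlgHom φ.symm.toAlgHom
      (fun x => φ.symm_apply_apply x) P hP Q hQ
    have h21 := BizAux.matrix_mul ends₂ ends₁ r hr φ.symm.toAlgHom φ.toAlgHom
      (fun x => φ.apply_symm_apply x) Q hQ P hP
    obtain ⟨σ, hσ⟩ := BizAux.exists_equiv_of_mul_eq_one _ _ h12 h21
    obtain ⟨τ, hτ⟩ := BizAux.exists_equiv_of_mul_eq_one _ _ h21 h12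
    have hk := BizAux.kappa_eq ends₁ ends₂ σ τ
      (BizAux.kappa_le ends₁ ends₂ r hr φ.toAlgHom P hP σ hσ)
      (BizAux.kappa_le ends₂ ends₁ r hr φ.symm.toAlgHom Q hQ τ hτ)
    obtain ⟨β, hβ⟩ := BizAux.exists_edge_equiv (fun e => Sym2.map σ (ends₁ e)) ends₂ (by
      intro S
      have hS : (S.image σ.symm).image σ = S := by
        ext x
        simp
      rw [← hS, BizAux.kappa_map, hk])
    exact ⟨σ, β, hβ⟩
  · rintro ⟨α, β, h⟩
    have hk : ∀ T, multigraphKappa ends₂ (T.image α) = multigraphKappa ends₁ T := by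
      intro T
      rw [← BizAux.kappa_map ends₁ α T, ← BizAux.kappa_comp ends₂ β]
      simp only [h]
    have hk' : ∀ T, multigraphKappa ends₁ (T.image α.symm) = multigraphKappa ends₂ T := by
      intro T
      rw [← hk]
      congr 1
      ext x
      simp
    refine ⟨Ideal.quotientEquivAlg (rBizonotopalIdeal ends₁ r) (rBizonotopalIdeal ends₂ r)
      (renameEquiv ℚ α) (le_antisymm ?_ ?_)⟩
    · intro p hp
      have h1 := BizAux.map_ideal_le ends₂ ends₁ r α.symm hk' hp
      have h2 : p = (renameEquiv ℚ α) (rename α.symm p) := by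
        simp [rename_rename]
      rw [h2]
      exact Ideal.mem_map_of_mem _ h1
    · exact Ideal.map_le_iff_le_comap.2 (BizAux.map_ideal_le ends₁ ends₂ r α hk)
end

section
/- Let G = (V, E, ends) be a simple multigraph (ends is injective and no edge is a loop) with n = |V| ≥ 1 vertices. Then the set of extreme points of the score vector polytope P_G is finite with at most ∑_{i=1}^{n} n!/i! elements (this number equals ⌊(e−1)·n!⌋), and equality holds if and only if G is complete, i.e., ends is a bijection from E onto the set of non-diagonal elements of Sym2 V. -/
open Finset

/-- The score vector polytope of a multigraph. -/
def scorePolytope {V E : Type*} [Fintype E] [DecidableEq V]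
    (ends : E → Sym2 V) : Set (V → ℝ) :=
  {x | (∀ v : V, 0 ≤ x v) ∧
    ∀ S : Finset V, ∑ v ∈ S, x v ≤ (multigraphKappa ends S : ℝ)}

namespace ScoreAux

def Pf {V : Type*} (f : Finset V → ℝ) : Set (V → ℝ) :=
  {x | (∀ v : V, 0 ≤ x v) ∧ ∀ S : Finset V, ∑ v ∈ S, x v ≤ f S}

/-- Greedy vector of a list; the head of the list is the last vertex. -/
noncomputable def greedy {V : Type*} [DecidableEq V] (f : Finset V → ℝ) : List V → V → ℝ
  | [] => 0
  | a :: l => fun v => if v = a then f (insert a l.toFinset) - f l.toFinset else greedy f l v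

def TightL {V : Type*} [DecidableEq V] (f : Finset V → ℝ) (x : V → ℝ) : List V → Prop
  | [] => True
  | a :: l => ∑ v ∈ insert a l.toFinset, x v = f (insert a l.toFinset) ∧ TightL f x l

section
variable {V : Type*} [DecidableEq V] {f : Finset V → ℝ}

lemma tight_sum (h0 : f ∅ = 0) {x : V → ℝ} {l : List V} (h : TightL f x l) :
    ∑ v ∈ l.toFinset, x v = f l.toFinset := by
  cases l with
  | nil => simp [h0]
  | cons a l => simpa using h.1

lemma greedy_notMem {l : List V} {v : V} (hv : v ∉ l) : greedy f l v = 0 := by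
  induction l with
  | nil => simp [greedy]
  | cons a l ih =>
    simp only [List.mem_cons, not_or] at hv
    simp [greedy, hv.1, ih hv.2]

lemma tight_eq (h0 : f ∅ = 0) {x : V → ℝ} {l : List V} (hl : l.Nodup) (h : TightL f x l) :
    ∀ v ∈ l, x v = greedy f l v := by
  induction l with
  | nil => simp
  | cons a l ih =>
    have hal := (List.nodup_cons.1 hl).1
    have h1 := h.1
    rw [Finset.sum_insert (by simpa using hal), tight_sum h0 h.2] at h1
    intro v hv
    by_cases hva : v = a
    · subst hva
      simp only [greedy, if_true]
      linarith
    · have hvl : v ∈ l := by simpa [hva] using hv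
      simp only [greedy, hva, if_false]
      exact ih (List.nodup_cons.1 hl).2 h.2 v hvl

lemma greedy_tight (h0 : f ∅ = 0) {l : List V} (hl : l.Nodup) :
    ∀ x : V → ℝ, (∀ v ∈ l, x v = greedy f l v) → TightL f x l := by
  induction l with
  | nil => intro x _; trivial
  | cons a l ih =>
    intro x hx
    have hal := (List.nodup_cons.1 hl).1
    have h2 : TightL f x l := by
      apply ih (List.nodup_cons.1 hl).2
      intro v hv
      have hva : v ≠ a := fun h => hal (h ▸ hv)
      rw [hx v (by simp [hv])]
      simp [greedy, hva]
    refine ⟨?_, h2⟩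
    rw [Finset.sum_insert (by simpa using hal), tight_sum h0 h2, hx a (by simp)]
    simp [greedy]

lemma greedy_nonneg (hm : Monotone f) (l : List V) (v : V) : 0 ≤ greedy f l v := by
  induction l with
  | nil => simp [greedy]
  | cons a l ih =>
    simp only [greedy]
    split_ifs
    · have := hm (Finset.subset_insert a l.toFinset)
      linarith
    · exact ih

lemma greedy_sum_le (h0 : f ∅ = 0) (hm : Monotone f)
    (hs : ∀ A B, f (A ∪ B) + f (A ∩ B) ≤ f A + f B) {l : List V} (hl : l.Nodup) :
    ∀ S : Finset V, ∑ v ∈ S, greedy f l v ≤ f (S ∩ l.toFinset) := by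
  induction l with
  | nil => intro S; simp [greedy, h0]
  | cons a l ih =>
    intro S
    have hal := (List.nodup_cons.1 hl).1
    have ih := ih (List.nodup_cons.1 hl).2
    have key : ∀ T : Finset V, a ∉ T →
        ∑ v ∈ T, greedy f (a :: l) v = ∑ v ∈ T, greedy f l v := by
      intro T hT
      apply Finset.sum_congr rfl
      intro v hv
      have : v ≠ a := fun h => hT (h ▸ hv)
      simp [greedy, this]
    by_cases ha : a ∈ S
    · rw [← Finset.insert_erase ha, Finset.sum_insert (by simp), key _ (by simp)]
      have h1 := ih (S.erase a)
      have h2 := hs (insert a (S.erase a ∩ l.toFinset)) l.toFinset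
      have e1 : insert a (S.erase a ∩ l.toFinset) ∪ l.toFinset = insert a l.toFinset := by
        ext v; simp; tauto
      have e2 : insert a (S.erase a ∩ l.toFinset) ∩ l.toFinset = S.erase a ∩ l.toFinset := by
        ext v; simp only [Finset.mem_inter, Finset.mem_insert, List.mem_toFinset]
        constructor
        · rintro ⟨h | h, h'⟩
          · exact absurd (h ▸ h') hal
          · exact h
        · rintro h; exact ⟨Or.inr h, h.2⟩
      have e3 : insert a (S.erase a) ∩ (a :: l).toFinset = insert a (S.erase a ∩ l.toFinset) := by
        rw [List.toFinset_cons, ← Finset.insert_inter_distrib]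
      rw [e1, e2] at h2
      rw [e3]
      simp only [greedy, if_true]
      linarith
    · rw [key S ha]
      refine (ih S).trans (hm ?_)
      apply Finset.inter_subset_inter_left
      simp

lemma greedy_mem (h0 : f ∅ = 0) (hm : Monotone f)
    (hs : ∀ A B, f (A ∪ B) + f (A ∩ B) ≤ f A + f B) {l : List V} (hl : l.Nodup) :
    greedy f l ∈ Pf f :=
  ⟨greedy_nonneg hm l, fun S => (greedy_sum_le h0 hm hs hl S).trans (hm Finset.inter_subset_left)⟩

lemma tight_of_comb {l : List V} {x y z : V → ℝ} (hy : y ∈ Pf f) (hz : z ∈ Pf f)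
    {a b : ℝ} (ha : 0 < a) (hb : 0 < b) (hab : a + b = 1) (hx : a • y + b • z = x)
    (h : TightL f x l) : TightL f y l := by
  induction l with
  | nil => trivial
  | cons c l ih =>
    refine ⟨?_, ih h.2⟩
    have h1 := h.1
    have h2 := hy.2 (insert c l.toFinset)
    have h3 := hz.2 (insert c l.toFinset)
    rw [← hx] at h1
    simp only [Pi.add_apply, Pi.smul_apply, smul_eq_mul, Finset.sum_add_distrib,
      ← Finset.mul_sum] at h1
    refine le_antisymm h2 ?_
    by_contra hc
    push Not at hc
    have : f (insert c l.toFinset) = (a + b) * f (insert c l.toFinset) := by rw [hab, one_mul]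
    nlinarith

lemma greedy_extreme (h0 : f ∅ = 0) (hm : Monotone f)
    (hs : ∀ A B, f (A ∪ B) + f (A ∩ B) ≤ f A + f B) {l : List V} (hl : l.Nodup) :
    greedy f l ∈ Set.extremePoints ℝ (Pf f) := by
  rw [mem_extremePoints]
  refine ⟨greedy_mem h0 hm hs hl, ?_⟩
  have main : ∀ y ∈ Pf f, ∀ z ∈ Pf f, ∀ a b : ℝ, 0 < a → 0 < b → a + b = 1 →
      a • y + b • z = greedy f l → y = greedy f l := by
    intro y hy z hz a b ha hb hab h
    have ht := tight_of_comb hy hz ha hb hab h (greedy_tight h0 hl _ fun _ _ => rfl)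
    ext v
    by_cases hv : v ∈ l
    · exact tight_eq h0 hl ht v hv
    · have h1 := congrFun h v
      rw [greedy_notMem hv] at h1 ⊢
      simp only [Pi.add_apply, Pi.smul_apply, smul_eq_mul] at h1
      have h2 := hy.1 v
      have h3 := mul_nonneg hb.le (hz.1 v)
      have h4 := mul_nonneg ha.le h2
      have h5 : a * y v = 0 := by linarith
      exact (mul_eq_zero.1 h5).resolve_left ha.ne'
  rintro y hy z hz ⟨a, b, ha, hb, hab, h⟩
  exact ⟨main y hy z hz a b ha hb hab h,
    main z hz y hy b a hb ha (by linarith) (by rw [add_comm]; exact h)⟩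

lemma perturb [Fintype V] {x d : V → ℝ} (hx : x ∈ Set.extremePoints ℝ (Pf f))
    (h1 : ∀ v, x v = 0 → d v = 0)
    (h2 : ∀ S : Finset V, ∑ v ∈ S, x v = f S → ∑ v ∈ S, d v = 0) : d = 0 := by
  have hxP := hx.1
  have ev : ∀ᶠ ε : ℝ in nhds 0, (fun v => x v + ε * d v) ∈ Pf f := by
    have e1 : ∀ᶠ ε : ℝ in nhds 0, ∀ v, 0 ≤ x v + ε * d v := by
      rw [Filter.eventually_all]
      intro v
      by_cases h : x v = 0
      · simp [h, h1 v h]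
      · have hp : 0 < x v := lt_of_le_of_ne (hxP.1 v) (Ne.symm h)
        have hc : Continuous fun ε : ℝ => x v + ε * d v := by fun_prop
        have := hc.continuousAt (x := 0) |>.eventually (lt_mem_nhds (a := 0) (by simpa using hp))
        exact this.mono fun _ h => h.le
    have e2 : ∀ᶠ ε : ℝ in nhds 0, ∀ S : Finset V, ∑ v ∈ S, (x v + ε * d v) ≤ f S := by
      rw [Filter.eventually_all]
      intro S
      simp only [Finset.sum_add_distrib, ← Finset.mul_sum]
      by_cases h : ∑ v ∈ S, x v = f S
      · simp [h, h2 S h]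
      · have hp : ∑ v ∈ S, x v < f S := lt_of_le_of_ne (hxP.2 S) h
        have hc : Continuous fun ε : ℝ => ∑ v ∈ S, x v + ε * ∑ v ∈ S, d v := by fun_prop
        have := hc.continuousAt (x := 0) |>.eventually
          (eventually_lt_nhds (b := f S) (by simpa using hp))
        exact this.mono fun _ h => h.le
    filter_upwards [e1, e2] with ε a b using ⟨a, b⟩
  have ev' : ∀ᶠ ε : ℝ in nhds 0, (fun v => x v + (-ε) * d v) ∈ Pf f := by
    have : Filter.Tendsto (fun ε : ℝ => -ε) (nhds 0) (nhds 0) := by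
      simpa using (continuous_neg (G := ℝ)).tendsto 0
    exact this.eventually ev
  have ev3 := ((ev.and ev').filter_mono (nhdsWithin_le_nhds (s := Set.Ioi 0))).and
    (self_mem_nhdsWithin (a := (0 : ℝ)) (s := Set.Ioi 0))
  obtain ⟨ε, ⟨ha, hb⟩, hε⟩ := ev3.exists
  have hε : 0 < ε := hε
  have := hx.2 ha hb ⟨1/2, 1/2, by norm_num, by norm_num, by norm_num, by
    ext v; simp; ring⟩
  ext v
  have h3 : x v + ε * d v = x v := congrFun this v
  have : ε * d v = 0 := by linarith
  simpa using (mul_eq_zero.1 this).resolve_left hε.ne'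

lemma tight_union_inter {x : V → ℝ} (hx : x ∈ Pf f)
    (hs : ∀ A B, f (A ∪ B) + f (A ∩ B) ≤ f A + f B) {A B : Finset V}
    (hA : ∑ v ∈ A, x v = f A) (hB : ∑ v ∈ B, x v = f B) :
    ∑ v ∈ A ∪ B, x v = f (A ∪ B) ∧ ∑ v ∈ A ∩ B, x v = f (A ∩ B) := by
  have h1 := Finset.sum_union_inter (s₁ := A) (s₂ := B) (f := x)
  have h2 := hs A B
  have h3 := hx.2 (A ∪ B)
  have h4 := hx.2 (A ∩ B)
  constructor <;> linarith

lemma exists_step [Fintype V] {x : V → ℝ} (hx : x ∈ Set.extremePoints ℝ (Pf f)) (hm : Monotone f)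
    (hs : ∀ A B, f (A ∪ B) + f (A ∩ B) ≤ f A + f B) {A : Finset V}
    (hA : ∑ v ∈ A, x v = f A) (w : V) (hwA : w ∉ A) (hw : x w ≠ 0) :
    ∃ v, v ∉ A ∧ x v ≠ 0 ∧ ∑ u ∈ insert v A, x u = f (insert v A) := by
  classical
  have hxP := hx.1
  let C : Finset (Finset V) := Finset.univ.filter fun B =>
    A ⊆ B ∧ ∑ v ∈ B, x v = f B ∧ ∃ v ∈ B, v ∉ A ∧ x v ≠ 0
  have hC : C.Nonempty := by
    have : ∃ B : Finset V, w ∈ B ∧ ∑ v ∈ B, x v = f B := by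
      by_contra hcon
      push Not at hcon
      have := perturb (d := Pi.single w 1) hx (by
        intro v hv
        have : v ≠ w := fun h => hw (h ▸ hv)
        simp [this]) (by
        intro S hS
        have : w ∉ S := fun h => hcon S h hS
        simp [Finset.sum_pi_single', this])
      have := congrFun this w
      simp at this
    obtain ⟨B, hwB, hB⟩ := this
    refine ⟨A ∪ B, ?_⟩
    simp only [C, Finset.mem_filter, Finset.mem_univ, true_and]
    exact ⟨Finset.subset_union_left, (tight_union_inter hxP hs hA hB).1, w, by simp [hwB], hwA, hw⟩
  obtain ⟨B, hBC, hmin⟩ := Finset.exists_min_image C Finset.card hC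
  simp only [C, Finset.mem_filter, Finset.mem_univ, true_and] at hBC
  obtain ⟨hAB, hB, v, hvB, hvA, hv⟩ := hBC
  have sep : ∀ u ∈ B, u ∉ A → x u ≠ 0 → ∀ u' ∈ B, u' ∉ A →
      ∀ S : Finset V, ∑ v ∈ S, x v = f S → u ∈ S → u' ∈ S := by
    intro u huB huA hu u' hu'B hu'A S hS huS
    by_contra hu'S
    have ht := (tight_union_inter hxP hs (tight_union_inter hxP hs hS hB).2 hA).1
    have := hmin ((S ∩ B) ∪ A) (by
      simp only [C, Finset.mem_filter, Finset.mem_univ, true_and]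
      exact ⟨Finset.subset_union_right, ht, u, by simp [huS, huB], huA, hu⟩)
    have hlt : ((S ∩ B) ∪ A) ⊂ B := by
      rw [Finset.ssubset_iff_of_subset (Finset.union_subset Finset.inter_subset_right hAB)]
      exact ⟨u', hu'B, by simp [hu'S, hu'A]⟩
    exact absurd this (not_le.2 (Finset.card_lt_card hlt))
  have uniq : ∀ u ∈ B, u ∉ A → x u ≠ 0 → u = v := by
    intro u huB huA hu
    by_contra huv
    have := perturb (d := Pi.single u 1 - Pi.single v 1) hx (by
        intro t ht
        have h1 : t ≠ u := fun h => hu (h ▸ ht)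
        have h2 : t ≠ v := fun h => hv (h ▸ ht)
        simp [h1, h2]) (by
        intro S hS
        have h1 := sep u huB huA hu v hvB hvA S hS
        have h2 := sep v hvB hvA hv u huB huA S hS
        have : u ∈ S ↔ v ∈ S := ⟨h1, h2⟩
        simp [Finset.sum_pi_single', this])
    have := congrFun this u
    simp [huv] at this
  refine ⟨v, hvA, hv, le_antisymm (hxP.2 _) ?_⟩
  have hsub : insert v A ⊆ B := Finset.insert_subset hvB hAB
  have : ∑ u ∈ insert v A, x u = ∑ u ∈ B, x u := by
    apply Finset.sum_subset hsub
    intro u huB hu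
    simp only [Finset.mem_insert, not_or] at hu
    by_contra h
    exact hu.1 (uniq u huB hu.2 h)
  rw [this, hB]
  exact hm hsub

lemma extreme_exists_list [Fintype V] {x : V → ℝ} (hx : x ∈ Set.extremePoints ℝ (Pf f))
    (h0 : f ∅ = 0) (hm : Monotone f) (hs : ∀ A B, f (A ∪ B) + f (A ∩ B) ≤ f A + f B) :
    ∃ l : List V, l.Nodup ∧ (∀ v ∈ l, x v ≠ 0) ∧ x = greedy f l := by
  have main : ∀ k, ∀ l : List V, l.Nodup → (∀ v ∈ l, x v ≠ 0) → TightL f x l →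
      Fintype.card V - l.length = k →
      ∃ l : List V, l.Nodup ∧ (∀ v ∈ l, x v ≠ 0) ∧ x = greedy f l := by
    intro k
    induction k with
    | zero =>
      intro l hl hl0 ht hk
      refine ⟨l, hl, hl0, ?_⟩
      ext v
      by_cases hv : v ∈ l
      · exact tight_eq h0 hl ht v hv
      · exfalso
        have := (List.nodup_cons.2 ⟨hv, hl⟩).length_le_card
        simp at this
        omega
    | succ k ih =>
      intro l hl hl0 ht hk
      by_cases h : ∃ w, w ∉ l ∧ x w ≠ 0
      · obtain ⟨w, hwl, hw⟩ := h
        obtain ⟨v, hv, hv0, hvt⟩ := exists_step hx hm hs (tight_sum h0 ht) w (by simpa using hwl) hw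
        refine ih (v :: l) (List.nodup_cons.2 ⟨by simpa using hv, hl⟩) ?_ ⟨hvt, ht⟩ ?_
        · intro u hu
          rcases List.mem_cons.1 hu with rfl | hu
          · exact hv0
          · exact hl0 u hu
        · simp; omega
      · push Not at h
        refine ⟨l, hl, hl0, ?_⟩
        ext v
        by_cases hv : v ∈ l
        · exact tight_eq h0 hl ht v hv
        · rw [h v hv, greedy_notMem hv]
  exact main _ [] List.nodup_nil (by simp) trivial rfl

end

section
variable {V E : Type*} [Fintype V] [Fintype E] [DecidableEq V]

def kap (ends : E → Sym2 V) (S : Finset V) : ℝ := (multigraphKappa ends S : ℝ)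

lemma kap_empty (ends : E → Sym2 V) : kap ends ∅ = 0 := by
  simp [kap, multigraphKappa]

lemma kap_mono (ends : E → Sym2 V) : Monotone (kap ends) := by
  intro A B h
  simp only [kap, multigraphKappa, Nat.cast_le]
  apply Finset.card_le_card
  intro e
  simp only [Finset.mem_filter, Finset.mem_univ, true_and]
  rintro ⟨v, hv, h'⟩
  exact ⟨v, h hv, h'⟩

lemma kap_submod (ends : E → Sym2 V) (A B : Finset V) :
    kap ends (A ∪ B) + kap ends (A ∩ B) ≤ kap ends A + kap ends B := by
  classical
  simp only [kap]
  norm_cast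
  simp only [multigraphKappa]
  rw [← Finset.card_union_add_card_inter (Finset.univ.filter fun e => ∃ v ∈ A, v ∈ ends e)]
  apply Nat.add_le_add
  · apply Finset.card_le_card
    intro e
    simp only [Finset.mem_filter, Finset.mem_univ, true_and, Finset.mem_union]
    rintro ⟨v, hv | hv, h'⟩
    · exact Or.inl ⟨v, hv, h'⟩
    · exact Or.inr ⟨v, hv, h'⟩
  · apply Finset.card_le_card
    intro e
    simp only [Finset.mem_filter, Finset.mem_univ, true_and, Finset.mem_inter]
    rintro ⟨v, hv, h'⟩
    exact ⟨⟨v, hv.1, h'⟩, ⟨v, hv.2, h'⟩⟩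

lemma kap_insert (ends : E → Sym2 V) (a : V) (S : Finset V) :
    kap ends (insert a S) - kap ends S =
      ((Finset.univ.filter fun e => a ∈ ends e ∧ ∀ v ∈ S, v ∉ ends e).card : ℝ) := by
  classical
  rw [sub_eq_iff_eq_add]
  simp only [kap]
  norm_cast
  simp only [multigraphKappa]
  rw [← Finset.card_union_of_disjoint]
  · congr 1
    ext e
    simp only [Finset.mem_filter, Finset.mem_univ, true_and, Finset.mem_union, Finset.mem_insert,
      exists_eq_or_imp]
    by_cases h : ∃ v ∈ S, v ∈ ends e
    · simp [h]
    · have h' := h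
      push Not at h'
      simp only [h, or_false]
      exact ⟨fun h => ⟨h, h'⟩, fun h => h.1⟩
  · rw [Finset.disjoint_left]
    intro e
    simp only [Finset.mem_filter, Finset.mem_univ, true_and]
    rintro ⟨_, h⟩ ⟨v, hv, h'⟩
    exact h v hv h'

lemma kap_insert_complete (ends : E → Sym2 V) (hinj : Function.Injective ends)
    (hc : Set.range ends = {p : Sym2 V | ¬ p.IsDiag}) (a : V) (S : Finset V) (ha : a ∉ S) :
    kap ends (insert a S) - kap ends S = (Fintype.card V : ℝ) - 1 - S.card := by
  classical
  rw [kap_insert]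
  have h1 : (Finset.univ.filter fun e => a ∈ ends e ∧ ∀ v ∈ S, v ∉ ends e).card =
      (insert a S)ᶜ.card := by
    rw [← Finset.card_image_of_injective _ hinj,
      ← Finset.card_image_of_injective (insert a S)ᶜ (f := fun w => s(a, w))
        (fun x y h => Sym2.congr_right.1 h)]
    congr 1
    ext p
    simp only [Finset.mem_image, Finset.mem_filter, Finset.mem_univ, true_and, Finset.mem_compl,
      Finset.mem_insert, not_or]
    constructor
    · rintro ⟨e, ⟨he, hS⟩, rfl⟩
      obtain ⟨w, hw⟩ := Sym2.mem_iff_exists.1 he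
      have hd : ends e ∈ {p : Sym2 V | ¬ p.IsDiag} := hc ▸ Set.mem_range_self e
      rw [hw] at hd ⊢
      refine ⟨w, ⟨fun h => hd (by simp [h]), fun h => hS w h (by simp [hw])⟩, rfl⟩
    · rintro ⟨w, ⟨hwa, hwS⟩, rfl⟩
      have : s(a, w) ∈ Set.range ends := by
        rw [hc]
        simpa using Ne.symm hwa
      obtain ⟨e, he⟩ := this
      refine ⟨e, ⟨by simp [he], ?_⟩, he⟩
      intro v hv
      rw [he]
      simp only [Sym2.mem_iff, not_or]
      exact ⟨fun h => ha (h ▸ hv), fun h => hwS (h ▸ hv)⟩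
  have h2 := Finset.card_add_card_compl (insert a S)
  rw [Finset.card_insert_of_notMem ha] at h2
  rw [h1, ← h2]
  push_cast
  ring

lemma greedy_complete_ge (ends : E → Sym2 V) (hinj : Function.Injective ends)
    (hc : Set.range ends = {p : Sym2 V | ¬ p.IsDiag}) {l : List V} (hl : l.Nodup) :
    ∀ v ∈ l, (Fintype.card V : ℝ) - l.length ≤ greedy (kap ends) l v := by
  induction l with
  | nil => simp
  | cons a l ih =>
    have hal := List.nodup_cons.1 hl
    intro v hv
    by_cases hva : v = a
    · subst hva
      simp only [greedy, if_true]
      rw [kap_insert_complete ends hinj hc _ _ (by simpa using hal.1),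
        List.toFinset_card_of_nodup hal.2]
      simp only [List.length_cons]; push_cast; linarith
    · have hvl : v ∈ l := by simpa [hva] using hv
      have := ih hal.2 v hvl
      simp only [greedy, hva, if_false, List.length_cons]
      push_cast; linarith

lemma mem_iff_pos (ends : E → Sym2 V) (hinj : Function.Injective ends)
    (hc : Set.range ends = {p : Sym2 V | ¬ p.IsDiag}) {l : List V} (hl : l.Nodup)
    (hlen : l.length < Fintype.card V) (v : V) : v ∈ l ↔ greedy (kap ends) l v ≠ 0 := by
  constructor
  · intro hv
    have := greedy_complete_ge ends hinj hc hl v hv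
    have h : (l.length : ℝ) < Fintype.card V := by exact_mod_cast hlen
    intro h0
    linarith
  · intro h
    by_contra hv
    exact h (greedy_notMem hv)

lemma greedy_inj_aux (ends : E → Sym2 V) (hinj : Function.Injective ends)
    (hc : Set.range ends = {p : Sym2 V | ¬ p.IsDiag}) {l : List V} (hl : l.Nodup) :
    ∀ l' : List V, l'.Nodup → l.length = l'.length → l.length < Fintype.card V →
      greedy (kap ends) l = greedy (kap ends) l' → l = l' := by
  induction l with
  | nil =>
    intro l' _ h _ _
    exact (List.length_eq_zero_iff.1 h.symm).symm
  | cons a l ih =>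
    intro l' hl' hlen hlt heq
    cases l' with
    | nil => simp at hlen
    | cons b l' =>
      have hal := List.nodup_cons.1 hl
      have hbl := List.nodup_cons.1 hl'
      simp only [List.length_cons, add_left_inj] at hlen hlt
      have hab : a = b := by
        by_contra hab
        have h1 : a ∈ b :: l' := by
          rw [mem_iff_pos ends hinj hc hl' (by simp; omega), ← heq,
            ← mem_iff_pos ends hinj hc hl (by simp; omega)]
          simp
        have h2 : a ∈ l' := by simpa [hab] using h1
        have h3 := greedy_complete_ge ends hinj hc hbl.2 a h2
        have h4 := congrFun heq a
        simp only [greedy, if_true, hab, if_false] at h4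
        rw [kap_insert_complete ends hinj hc _ _ (by simpa using hal.1),
          List.toFinset_card_of_nodup hal.2] at h4
        rw [← hlen] at h3
        linarith
      subst hab
      congr 1
      apply ih hal.2 l' hbl.2 hlen (by omega)
      ext v
      by_cases hv : v = a
      · subst hv
        rw [greedy_notMem hal.1, greedy_notMem hbl.1]
      · have := congrFun heq v
        simpa [greedy, hv] using this

lemma greedy_inj (ends : E → Sym2 V) (hinj : Function.Injective ends)
    (hc : Set.range ends = {p : Sym2 V | ¬ p.IsDiag}) {l l' : List V} (hl : l.Nodup)
    (hl' : l'.Nodup) (h : l.length < Fintype.card V) (h' : l'.length < Fintype.card V)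
    (heq : greedy (kap ends) l = greedy (kap ends) l') : l = l' := by
  apply greedy_inj_aux ends hinj hc hl l' hl' _ h heq
  rw [← List.toFinset_card_of_nodup hl, ← List.toFinset_card_of_nodup hl']
  congr 1
  ext v
  rw [List.mem_toFinset, List.mem_toFinset, mem_iff_pos ends hinj hc hl h,
    mem_iff_pos ends hinj hc hl' h', heq]

lemma length_lt (ends : E → Sym2 V) (hloopless : ∀ e : E, ¬ (ends e).IsDiag)
    (hn : 1 ≤ Fintype.card V) {l : List V} (hl : l.Nodup)
    (h : ∀ v ∈ l, greedy (kap ends) l v ≠ 0) : l.length < Fintype.card V := by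
  refine lt_of_le_of_ne hl.length_le_card fun hlen => ?_
  cases l with
  | nil => simp at hlen; omega
  | cons a l =>
    apply h a (by simp)
    simp only [greedy, if_true]
    rw [kap_insert]
    norm_cast
    rw [Finset.card_eq_zero, Finset.filter_eq_empty_iff]
    rintro e - ⟨he, hS⟩
    obtain ⟨w, hw⟩ := Sym2.mem_iff_exists.1 he
    have huniv : (a :: l).toFinset = Finset.univ := by
      rw [← Finset.card_eq_iff_eq_univ, List.toFinset_card_of_nodup hl, hlen]
    have hwm : w ∈ (a :: l).toFinset := by rw [huniv]; simp
    simp only [List.toFinset_cons, Finset.mem_insert] at hwm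
    rcases hwm with rfl | hwm
    · exact hloopless e (by simp [hw])
    · exact hS w hwm (by simp [hw])

lemma not_complete_dup (ends : E → Sym2 V) (hloopless : ∀ e : E, ¬ (ends e).IsDiag)
    (hc : Set.range ends ≠ {p : Sym2 V | ¬ p.IsDiag}) :
    ∃ l l' : List V, l.Nodup ∧ l'.Nodup ∧ l.length < Fintype.card V ∧
      l'.length < Fintype.card V ∧ l ≠ l' ∧ greedy (kap ends) l = greedy (kap ends) l' := by
  have hsub : Set.range ends ⊆ {p : Sym2 V | ¬ p.IsDiag} := by
    rintro _ ⟨e, rfl⟩; exact hloopless e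
  obtain ⟨p, hp, hpn⟩ := Set.exists_of_ssubset (hsub.ssubset_of_ne hc)
  induction p with
  | _ u v =>
  have huv : u ≠ v := by simpa using hp
  let W : Finset V := ({u, v} : Finset V)ᶜ
  have hW : W.card + 2 = Fintype.card V := by
    have := Finset.card_add_card_compl ({u, v} : Finset V)
    rw [Finset.card_pair huv] at this
    simp only [W]; omega
  have hu : u ∉ W.toList := by simp [W]
  refine ⟨u :: W.toList, W.toList, List.nodup_cons.2 ⟨hu, W.nodup_toList⟩, W.nodup_toList,
    by simp; omega, by simp; omega, fun h => ?_, ?_⟩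
  · have := congrArg List.length h
    simp at this
  · ext w
    by_cases hw : w = u
    · subst hw
      rw [greedy_notMem hu]
      simp only [greedy, if_true]
      rw [kap_insert]
      norm_cast
      rw [Finset.card_eq_zero, Finset.filter_eq_empty_iff]
      rintro e - ⟨he, hS⟩
      obtain ⟨z, hz⟩ := Sym2.mem_iff_exists.1 he
      have hzw : z ≠ w := fun h => hloopless e (by simp [hz, h])
      have hzv : z ≠ v := fun h => hpn ⟨e, by rw [hz, h]⟩
      exact hS z (by simp [W, hzw, hzv]) (by simp [hz])
    · simp [greedy, hw]

end

section
variable (V : Type*) [Fintype V] [DecidableEq V]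

noncomputable def Seqs : Finset (List V) :=
  (Finset.univ : Finset (Σ k : Fin (Fintype.card V), (Fin k ↪ V))).image
    fun s => List.ofFn s.2

lemma mem_Seqs (l : List V) : l ∈ Seqs V ↔ l.Nodup ∧ l.length < Fintype.card V := by
  simp only [Seqs, Finset.mem_image, Finset.mem_univ, true_and]
  constructor
  · rintro ⟨⟨k, g⟩, rfl⟩
    exact ⟨List.nodup_ofFn.2 g.injective, by simp⟩
  · rintro ⟨hl, h⟩
    exact ⟨⟨⟨l.length, h⟩, ⟨l.get, List.nodup_iff_injective_get.1 hl⟩⟩, by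
      simp⟩

lemma card_Seqs : (Seqs V).card =
    ∑ i ∈ Finset.Icc 1 (Fintype.card V), (Fintype.card V).factorial / i.factorial := by
  rw [Seqs, Finset.card_image_of_injective]
  · rw [Finset.card_univ, Fintype.card_sigma]
    simp only [Fintype.card_embedding_eq, Fintype.card_fin]
    rw [Fin.sum_univ_eq_sum_range (fun k => (Fintype.card V).descFactorial k)]
    generalize Fintype.card V = n
    refine Finset.sum_bij (fun k _ => n - k) ?_ ?_ ?_ ?_
    · intro k hk; simp at hk ⊢; omega
    · intro k hk k' hk' h; simp at hk hk' h; omega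
    · intro i hi; simp at hi; exact ⟨n - i, by simp; omega, by omega⟩
    · intro k hk
      simp at hk
      exact Nat.descFactorial_eq_div hk.le
  · rintro ⟨⟨k, hk⟩, g⟩ ⟨⟨k', hk'⟩, g'⟩ h
    simp only at h
    have hkk : k = k' := by simpa using congrArg List.length h
    subst hkk
    have := List.ofFn_injective h
    have : g = g' := DFunLike.coe_injective this
    rw [this]

end

end ScoreAux

/-- For a simple multigraph (injective `ends`, no loops) with `n ≥ 1` vertices,
the score vector polytope has finitely many extreme points, at most
`∑_{i=1}^{n} n!/i! = ⌊(e−1)·n!⌋`, with equality if and only if the graph is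
complete. -/
theorem card_extremePoints_scorePolytope_simple
    {V E : Type*} [Fintype V] [Fintype E] [DecidableEq V]
    (ends : E → Sym2 V)
    (hinj : Function.Injective ends)
    (hloopless : ∀ e : E, ¬ (ends e).IsDiag)
    (hn : 1 ≤ Fintype.card V) :
    (Set.extremePoints ℝ (scorePolytope ends)).Finite ∧
      (Set.extremePoints ℝ (scorePolytope ends)).ncard ≤
        ∑ i ∈ Finset.Icc 1 (Fintype.card V),
          (Fintype.card V).factorial / i.factorial ∧
      ((Set.extremePoints ℝ (scorePolytope ends)).ncard =
          ∑ i ∈ Finset.Icc 1 (Fintype.card V),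
            (Fintype.card V).factorial / i.factorial ↔
        Set.range ends = {p : Sym2 V | ¬ p.IsDiag}) := by
  classical
  have hP : scorePolytope ends = ScoreAux.Pf (ScoreAux.kap ends) := rfl
  have h0 := ScoreAux.kap_empty ends
  have hm := ScoreAux.kap_mono ends
  have hs := ScoreAux.kap_submod ends
  have hsub : Set.extremePoints ℝ (scorePolytope ends) ⊆
      ((ScoreAux.Seqs V).image (ScoreAux.greedy (ScoreAux.kap ends)) : Finset (V → ℝ)) := by
    intro x hx
    rw [hP] at hx
    obtain ⟨l, hl, hpos, rfl⟩ := ScoreAux.extreme_exists_list hx h0 hm hs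
    rw [Finset.mem_coe]
    exact Finset.mem_image_of_mem _ ((ScoreAux.mem_Seqs V l).2
      ⟨hl, ScoreAux.length_lt ends hloopless hn hl hpos⟩)
  have hle : (Set.extremePoints ℝ (scorePolytope ends)).ncard ≤
      ((ScoreAux.Seqs V).image (ScoreAux.greedy (ScoreAux.kap ends))).card := by
    rw [← Set.ncard_coe_finset]
    exact Set.ncard_le_ncard hsub (Finset.finite_toSet _)
  rw [← ScoreAux.card_Seqs V]
  refine ⟨(Finset.finite_toSet _).subset hsub, hle.trans Finset.card_image_le, ?_, ?_⟩
  · intro heq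
    by_contra hc
    obtain ⟨l, l', hl, hl', hlt, hlt', hne, hg⟩ := ScoreAux.not_complete_dup ends hloopless hc
    have hcard : ((ScoreAux.Seqs V).image (ScoreAux.greedy (ScoreAux.kap ends))).card =
        (ScoreAux.Seqs V).card := le_antisymm Finset.card_image_le (heq ▸ hle)
    have hi := Finset.card_image_iff.1 hcard
    exact hne (hi (Finset.mem_coe.2 ((ScoreAux.mem_Seqs V l).2 ⟨hl, hlt⟩))
      (Finset.mem_coe.2 ((ScoreAux.mem_Seqs V l').2 ⟨hl', hlt'⟩)) hg)
  · intro hc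
    have hset : Set.extremePoints ℝ (scorePolytope ends) =
        ((ScoreAux.Seqs V).image (ScoreAux.greedy (ScoreAux.kap ends)) : Finset (V → ℝ)) := by
      refine Set.Subset.antisymm hsub ?_
      intro x hx
      rw [Finset.mem_coe, Finset.mem_image] at hx
      obtain ⟨l, hl, rfl⟩ := hx
      rw [hP]
      exact ScoreAux.greedy_extreme h0 hm hs ((ScoreAux.mem_Seqs V l).1 hl).1
    rw [hset, Set.ncard_coe_finset, Finset.card_image_iff]
    intro l hl l' hl' h
    have a := (ScoreAux.mem_Seqs V l).1 (Finset.mem_coe.1 hl)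
    have b := (ScoreAux.mem_Seqs V l').1 (Finset.mem_coe.1 hl')
    exact ScoreAux.greedy_inj ends hinj hc a.1 b.1 a.2 b.2 h
end

section
/- Let G = (V, E, ends) be a connected multigraph with E nonempty (connected means: the simple graph on V in which u is adjacent to v iff u ≠ v and some edge of G has endpoints {u, v} is connected). Then the number of vectors a : V → ℕ with ∑_{v∈V} a_v = |E| − 1 and ∑_{v∈S} a_v < κ_S for every nonempty subset S ⊆ V equals the number of spanning trees of G, i.e., the number of subsets T ⊆ E such that no edge of T is a loop, |T| = |V| − 1, and the simple graph on V in which u is adjacent to v iff u ≠ v and some edge of T has endpoints {u, v} is connected. -/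
open Finset

/-- The simple graph underlying a set of edges of a multigraph: `u` is adjacent
to `v` iff `u ≠ v` and some chosen edge has endpoints `{u, v}`. -/
def underlyingGraph {V E : Type*} (ends : E → Sym2 V) (T : Set E) : SimpleGraph V :=
  SimpleGraph.fromRel fun u v => ∃ e ∈ T, ends e = s(u, v)

namespace BreakCount

/-- Number of edges of `F` with both endpoints in `U`. -/
noncomputable def inn {V E : Type*} (s t : E → V) (F : Finset E) (U : Finset V) : ℤ := by
  classical exact ((F.filter fun e => s e ∈ U ∧ t e ∈ U).card : ℤ)

/-- Connectedness by cuts. -/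
def Conn {V E : Type*} (s t : E → V) (T : Finset E) : Prop :=
  ∀ S : Set V, (∀ e ∈ T, (s e ∈ S ↔ t e ∈ S)) → ∀ x y, x ∈ S → y ∈ S

/-- The integer vectors to count. -/
def NN {V E : Type*} [Fintype V] (s t : E → V) (F : Finset E) : Set (V → ℤ) :=
  {a | ∑ v, a v = (F.card : ℤ) - 1 ∧ ∀ U : Finset V, U ≠ univ → inn s t F U ≤ ∑ v ∈ U, a v}

/-- The spanning trees in `F`. -/
def Tr {V E : Type*} [Fintype V] (s t : E → V) (F : Finset E) : Set (Finset E) :=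
  {T | T ⊆ F ∧ T.card + 1 = Fintype.card V ∧ Conn s t T}

lemma inn_insert {V E : Type*} [DecidableEq V] [DecidableEq E] (s t : E → V) {F : Finset E} {e : E}
    (he : e ∉ F) (U : Finset V) :
    inn s t (insert e F) U = inn s t F U + if s e ∈ U ∧ t e ∈ U then 1 else 0 := by
  classical
  unfold inn
  rw [Finset.filter_insert]
  split_ifs with h
  · rw [Finset.card_insert_of_notMem]
    · push_cast; congr!
    · simp [he]
  · simp

lemma inn_empty {V E : Type*} (s t : E → V) (U : Finset V) : inn s t ∅ U = 0 := by
  simp [inn]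

lemma inn_nonneg {V E : Type*} (s t : E → V) (F : Finset E) (U : Finset V) :
    0 ≤ inn s t F U := by
  simp [inn]

lemma inn_univ {V E : Type*} [Fintype V] (s t : E → V) (F : Finset E) :
    inn s t F univ = F.card := by
  simp [inn]

lemma inn_super {V E : Type*} [DecidableEq V] (s t : E → V) (F : Finset E) (A B : Finset V) :
    inn s t F A + inn s t F B ≤ inn s t F (A ∪ B) + inn s t F (A ∩ B) := by
  classical
  induction F using Finset.induction_on with
  | empty => simp [inn_empty]
  | insert e F he ih =>
    simp only [inn_insert s t he, mem_union, mem_inter]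
    by_cases h1 : s e ∈ A <;> by_cases h2 : t e ∈ A <;> by_cases h3 : s e ∈ B <;>
      by_cases h4 : t e ∈ B <;> simp [h1, h2, h3, h4] <;> linarith

lemma inn_comp {V W E : Type*} [Fintype V] [DecidableEq W] (s t : E → V) (φ : V → W)
    (F : Finset E) (U : Finset W) :
    inn (φ ∘ s) (φ ∘ t) F U = inn s t F (univ.filter fun x => φ x ∈ U) := by
  simp [inn]

lemma conn_contract {V W E : Type*} [DecidableEq E] (s t : E → V) (φ : V → W)
    (hs : Function.Surjective φ) (e : E)
    (hφ : ∀ x y, φ x = φ y ↔ x = y ∨ (x = s e ∧ y = t e) ∨ (x = t e ∧ y = s e)) (T : Finset E) :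
    Conn s t (insert e T) ↔ Conn (φ ∘ s) (φ ∘ t) T := by
  constructor
  · intro h S hS x y hx
    obtain ⟨x, rfl⟩ := hs x
    obtain ⟨y, rfl⟩ := hs y
    refine h (φ ⁻¹' S) ?_ x y hx
    intro f hf
    rcases Finset.mem_insert.1 hf with rfl | hf
    · have : φ (s f) = φ (t f) := (hφ _ _).2 (by simp)
      simp [this]
    · exact hS f hf
  · intro h S hS x y hx
    have key : ∀ z, φ z ∈ φ '' S ↔ z ∈ S := by
      intro z
      constructor
      · rintro ⟨z', hz', hzz⟩
        have := hS e (by simp)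
        rcases (hφ _ _).1 hzz with rfl | ⟨rfl, rfl⟩ | ⟨rfl, rfl⟩ <;> tauto
      · exact fun hz => ⟨z, hz, rfl⟩
    rw [← key]
    refine h (φ '' S) ?_ (φ x) (φ y) ((key _).2 hx)
    intro f hf
    simp only [Function.comp, key]
    exact hS f (by simp [hf])

lemma conn_loop {V E : Type*} [DecidableEq E] (s t : E → V) (e : E) (he : s e = t e)
    (T : Finset E) : Conn s t (insert e T) ↔ Conn s t T := by
  simp [Conn, he]

/-- The contraction map. -/
def cmap {V : Type*} [DecidableEq V] (u v : V) (huv : u ≠ v) (x : V) : {x : V // x ≠ v} :=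
  if h : x = v then ⟨u, huv⟩ else ⟨x, h⟩

lemma cmap_surj {V : Type*} [DecidableEq V] (u v : V) (huv : u ≠ v) :
    Function.Surjective (cmap u v huv) := by
  rintro ⟨x, hx⟩
  exact ⟨x, by simp [cmap, hx]⟩

lemma cmap_eq {V : Type*} [DecidableEq V] (u v : V) (huv : u ≠ v) (x y : V) :
    cmap u v huv x = cmap u v huv y ↔ x = y ∨ (x = u ∧ y = v) ∨ (x = v ∧ y = u) := by
  unfold cmap
  split_ifs with h1 h2 h2 <;> simp only [Subtype.mk.injEq] <;> grind

lemma conn_card {E : Type*} (T : Finset E) : ∀ {V : Type*} [Fintype V] (s t : E → V),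
    Conn s t T → Fintype.card V ≤ T.card + 1 := by
  classical
  induction T using Finset.induction_on with
  | empty =>
    intro V _ s t h
    simp only [card_empty, zero_add]
    rw [Fintype.card_le_one_iff]
    intro x y
    have := h {x} (by simp) x y rfl
    exact this.symm
  | insert e T he ih =>
    intro V _ s t h
    rw [card_insert_of_notMem he]
    by_cases hl : s e = t e
    · have := ih s t ((conn_loop s t e hl T).1 h)
      omega
    · have h2 := (conn_contract s t (cmap _ _ hl) (cmap_surj _ _ hl) e (cmap_eq _ _ hl) T).1 h
      have h3 := ih _ _ h2
      have h4 : Fintype.card {x : V // x ≠ t e} = Fintype.card V - 1 := by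
        simp [Fintype.card_subtype_compl]
      omega

lemma Tr_loop {V E : Type*} [Fintype V] [DecidableEq E] (s t : E → V) {F : Finset E} {e : E}
    (he : e ∉ F) (hl : s e = t e) : Tr s t (insert e F) = Tr s t F := by
  ext T
  simp only [Tr, Set.mem_ofPred_eq]
  constructor
  · rintro ⟨h1, h2, h3⟩
    have heT : e ∉ T := by
      intro heT
      rw [← Finset.insert_erase heT, conn_loop s t e hl] at h3
      have := conn_card _ s t h3
      have := Finset.card_erase_add_one heT
      omega
    exact ⟨(Finset.subset_insert_iff_of_notMem heT).1 h1, h2, h3⟩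
  · rintro ⟨h1, h2, h3⟩
    exact ⟨h1.trans (Finset.subset_insert _ _), h2, h3⟩

lemma Tr_step {V W E : Type*} [Fintype V] [Fintype W] [DecidableEq E] (s t : E → V) {F : Finset E}
    {e : E} (he : e ∉ F) (φ : V → W)
    (hs : Function.Surjective φ)
    (hφ : ∀ x y, φ x = φ y ↔ x = y ∨ (x = s e ∧ y = t e) ∨ (x = t e ∧ y = s e))
    (hc : Fintype.card W + 1 = Fintype.card V) :
    (Tr s t (insert e F)).encard = (Tr s t F).encard + (Tr (φ ∘ s) (φ ∘ t) F).encard := by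
  have h1 : Tr s t (insert e F) = Tr s t F ∪ (fun T => insert e T) '' Tr (φ ∘ s) (φ ∘ t) F := by
    ext T
    simp only [Tr, Set.mem_ofPred_eq, Set.mem_union, Set.mem_image]
    constructor
    · rintro ⟨h1, h2, h3⟩
      by_cases heT : e ∈ T
      · right
        refine ⟨T.erase e, ⟨?_, ?_, ?_⟩, Finset.insert_erase heT⟩
        · exact Finset.subset_insert_iff.1 h1
        · have := Finset.card_erase_add_one heT
          omega
        · rw [← conn_contract s t φ hs e hφ, Finset.insert_erase heT]
          exact h3
      · left
        exact ⟨(Finset.subset_insert_iff_of_notMem heT).1 h1, h2, h3⟩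
    · rintro (⟨h1, h2, h3⟩ | ⟨T, ⟨h1, h2, h3⟩, rfl⟩)
      · exact ⟨h1.trans (Finset.subset_insert _ _), h2, h3⟩
      · have heT : e ∉ T := fun h => he (h1 h)
        refine ⟨Finset.insert_subset_insert _ h1, ?_, ?_⟩
        · rw [Finset.card_insert_of_notMem heT]; omega
        · rwa [conn_contract s t φ hs e hφ]
  rw [h1, Set.encard_union_eq, Set.InjOn.encard_image]
  · intro T hT T' hT' h
    have hT : e ∉ T := fun h => he (hT.1 h)
    have hT' : e ∉ T' := fun h => he (hT'.1 h)
    simp only at h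
    rw [← Finset.erase_insert hT, h, Finset.erase_insert hT']
  · rw [Set.disjoint_left]
    rintro T hT ⟨T', _, rfl⟩
    exact he (hT.1 (Finset.mem_insert_self _ _))

lemma sum_add_single {V : Type*} [DecidableEq V] (a : V → ℤ) (w : V) (k : ℤ) (U : Finset V) :
    ∑ x ∈ U, (a + Pi.single w k : V → ℤ) x = ∑ x ∈ U, a x + if w ∈ U then k else 0 := by
  simp [Finset.sum_add_distrib, Finset.sum_pi_single']

lemma NN_loop {V E : Type*} [Fintype V] [DecidableEq V] [DecidableEq E] (s t : E → V)
    {F : Finset E} {e : E} (he : e ∉ F) (hl : s e = t e) :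
    (NN s t (insert e F)).encard = (NN s t F).encard := by
  have : NN s t (insert e F) = (fun a => a + Pi.single (s e) 1) '' NN s t F := by
    ext a
    constructor
    · rintro ⟨h1, h2⟩
      refine ⟨a + Pi.single (s e) (-1), ⟨?_, ?_⟩, ?_⟩
      · rw [sum_add_single, h1, card_insert_of_notMem he]; simp [sub_eq_add_neg]
      · intro U hU
        have := h2 U hU
        rw [inn_insert s t he, ← hl] at this
        rw [sum_add_single]
        split_ifs at * <;> first | linarith | tauto
      · simp only [add_assoc, ← Pi.single_add]; simp
    · rintro ⟨a, ⟨h1, h2⟩, rfl⟩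
      refine ⟨?_, ?_⟩
      · rw [sum_add_single, h1, card_insert_of_notMem he]; simp [sub_eq_add_neg]
      · intro U hU
        have := h2 U hU
        rw [inn_insert s t he, ← hl]
        rw [sum_add_single]
        split_ifs at * <;> first | linarith | tauto
  rw [this, Set.InjOn.encard_image]
  intro a _ b _ h
  exact add_right_cancel h

lemma NN_step {V W E : Type*} [Fintype V] [Fintype W] [DecidableEq V] [DecidableEq W]
    [DecidableEq E] (s t : E → V) {F : Finset E}
    {e : E} (he : e ∉ F) (hne : s e ≠ t e) (φ : V → W)
    (hs : Function.Surjective φ)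
    (hφ : ∀ x y, φ x = φ y ↔ x = y ∨ (x = s e ∧ y = t e) ∨ (x = t e ∧ y = s e)) :
    (NN s t (insert e F)).encard = (NN s t F).encard + (NN (φ ∘ s) (φ ∘ t) F).encard := by
  have hcard : ((insert e F).card : ℤ) = F.card + 1 := by
    rw [card_insert_of_notMem he]; simp
  have hφe : φ (s e) = φ (t e) := (hφ _ _).2 (by simp)
  set A : Set (V → ℤ) := (fun a => a + Pi.single (t e) 1) '' NN s t F with hA
  have hAsub : A ⊆ NN s t (insert e F) := by
    rintro _ ⟨a, ⟨h1, h2⟩, rfl⟩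
    refine ⟨?_, ?_⟩
    · rw [sum_add_single, h1, hcard]; simp [sub_eq_add_neg]
    · intro U hU
      have := h2 U hU
      rw [inn_insert s t he, sum_add_single]
      split_ifs at * <;> first | linarith | tauto
  have hAmem : ∀ a, a ∈ A ↔ a + Pi.single (t e) (-1) ∈ NN s t F := by
    intro a
    constructor
    · rintro ⟨b, hb, rfl⟩
      simpa only [add_assoc, ← Pi.single_add, add_neg_cancel, Pi.single_zero, add_zero] using hb
    · intro h
      refine ⟨_, h, ?_⟩
      simp only [add_assoc, ← Pi.single_add, neg_add_cancel, Pi.single_zero, add_zero]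
  have hAcard : A.encard = (NN s t F).encard := by
    rw [hA, Set.InjOn.encard_image]
    intro a _ b _ h
    exact add_right_cancel h
  set B := NN s t (insert e F) \ A with hB
  -- a useful criterion: `a ∈ NN (insert e F)` is in `B` iff some cut is tight
  have hcrit : ∀ a ∈ NN s t (insert e F),
      (∀ U : Finset V, t e ∈ U → s e ∉ U → inn s t F U < ∑ x ∈ U, a x) → a ∈ A := by
    rintro a ⟨h1, h2⟩ h
    rw [hAmem]
    refine ⟨?_, ?_⟩
    · rw [sum_add_single, h1, hcard]; simp [sub_eq_add_neg]
    · intro U hU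
      have h3 := h2 U hU
      rw [inn_insert s t he] at h3
      rw [sum_add_single]
      by_cases hv : t e ∈ U <;> by_cases hu : s e ∈ U
      · simp only [hv, hu, and_self, if_true] at *; linarith
      · have := h U hv hu
        simp only [hv, hu, if_true]; linarith
      · simp only [hv, hu, and_false, if_false] at *; linarith
      · simp only [hv, hu, and_false, if_false] at *; linarith
  let m : (V → ℤ) → (W → ℤ) := fun a w =>
    (∑ x ∈ univ.filter (fun x => φ x = w), a x) + (Pi.single (φ (s e)) (-1) : W → ℤ) w
  have hm : ∀ a (U : Finset W), ∑ w ∈ U, m a w =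
      ∑ x ∈ univ.filter (fun x => φ x ∈ U), a x + if φ (s e) ∈ U then -1 else 0 := by
    intro a U
    simp only [m]
    rw [Finset.sum_add_distrib, Finset.sum_pi_single']
    congr 1
    rw [← Finset.sum_fiberwise_of_maps_to (s := univ.filter (fun x => φ x ∈ U)) (t := U) (g := φ)
      (by simp)]
    refine Finset.sum_congr rfl fun w hw => Finset.sum_congr ?_ fun _ _ => rfl
    ext x
    simp only [mem_filter, mem_univ, true_and]
    constructor
    · rintro rfl; exact ⟨hw, rfl⟩
    · exact fun h => h.2
  have hmW : ∀ a ∈ NN s t (insert e F), m a ∈ NN (φ ∘ s) (φ ∘ t) F := by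
    rintro a ⟨h1, h2⟩
    refine ⟨?_, ?_⟩
    · rw [hm]; simp only [mem_univ, filter_true, if_true]; rw [h1, hcard]; ring
    · intro U hU
      rw [hm, inn_comp]
      have hU' : (univ.filter fun x => φ x ∈ U) ≠ univ := by
        intro h
        apply hU
        ext w
        obtain ⟨x, rfl⟩ := hs w
        have : x ∈ (univ.filter fun x => φ x ∈ U) := by rw [h]; simp
        simpa using this
      have := h2 _ hU'
      rw [inn_insert s t he] at this
      simp only [mem_filter, mem_univ, true_and, ← hφe, and_self] at this
      split_ifs at * <;> linarith
  -- values of m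
  have hm1 : ∀ a x, x ≠ s e → x ≠ t e → m a (φ x) = a x := by
    intro a x h1 h2
    have : (univ.filter fun y => φ y = φ x) = {x} := by
      ext y; simp only [mem_filter, mem_univ, true_and, mem_singleton, hφ]; tauto
    have h3 : φ x ≠ φ (s e) := by rw [Ne, hφ]; tauto
    simp only [m, this, Finset.sum_singleton, Pi.single_eq_of_ne h3, add_zero]
  have hm2 : ∀ a, m a (φ (s e)) = a (s e) + a (t e) - 1 := by
    intro a
    have : (univ.filter fun y => φ y = φ (s e)) = {s e, t e} := by
      ext y; simp only [mem_filter, mem_univ, true_and, mem_singleton, mem_insert, hφ]; tauto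
    simp only [m, this, Finset.sum_pair hne, Pi.single_eq_same]; ring
  have hinj1 : ∀ a ∈ NN s t (insert e F), ∀ b ∈ B, m a = m b → b (t e) ≤ a (t e) := by
    intro a ha b hb hab
    by_contra hlt
    push Not at hlt
    apply hb.2
    apply hcrit b hb.1
    intro U hv hu
    have hU : U ≠ univ := by rintro rfl; simp at hu
    have h1 := ha.2 U hU
    rw [inn_insert s t he] at h1
    simp only [hu, false_and, if_false] at h1
    have h2 : ∑ x ∈ U, a x < ∑ x ∈ U, b x := by
      apply Finset.sum_lt_sum
      · intro x hx
        by_cases hxt : x = t e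
        · subst hxt; exact hlt.le
        · have hxs : x ≠ s e := by rintro rfl; exact hu hx
          rw [← hm1 a x hxs hxt, ← hm1 b x hxs hxt, hab]
      · exact ⟨t e, hv, hlt⟩
    linarith
  have hinj : Set.InjOn m B := by
    intro a ha b hb hab
    have h1 : a (t e) = b (t e) := le_antisymm (hinj1 b hb.1 a ha hab.symm) (hinj1 a ha.1 b hb hab)
    ext x
    by_cases hxt : x = t e
    · rw [hxt, h1]
    by_cases hxs : x = s e
    · have := hm2 a
      rw [hab, hm2 b] at this
      rw [hxs]; linarith
    · rw [← hm1 a x hxs hxt, ← hm1 b x hxs hxt, hab]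
  have himg : m '' B = NN (φ ∘ s) (φ ∘ t) F := by
    apply Set.Subset.antisymm
    · rintro _ ⟨a, ha, rfl⟩
      exact hmW a ha.1
    · intro c hc
      obtain ⟨M, hMmem, hM⟩ := Finset.exists_max_image
        (univ.filter fun U : Finset V => t e ∈ U ∧ s e ∉ U)
        (fun U => inn s t F U - ∑ x ∈ U.erase (t e), c (φ x)) ⟨{t e}, by simp [hne]⟩
      simp only [mem_filter, mem_univ, true_and] at hMmem hM
      obtain ⟨hMt, hMs⟩ := hMmem
      set l := inn s t F M - ∑ x ∈ M.erase (t e), c (φ x) with hl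
      let a : V → ℤ := fun x => if x = t e then l else if x = s e then c (φ (s e)) + 1 - l
        else c (φ x)
      have hat : a (t e) = l := by simp [a]
      have has : a (s e) = c (φ (s e)) + 1 - l := by simp [a, hne]
      have hax : ∀ x, x ≠ s e → x ≠ t e → a x = c (φ x) := by
        intro x h1 h2; simp [a, h1, h2]
      have hma : m a = c := by
        ext w
        obtain ⟨x, rfl⟩ := hs w
        by_cases hxt : x = t e
        · rw [hxt, ← hφe, hm2, hat, has]; ring
        by_cases hxs : x = s e
        · rw [hxs, hm2, hat, has]; ring
        · rw [hm1 a x hxs hxt, hax x hxs hxt]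
      have hsumt : ∀ U : Finset V, t e ∈ U → s e ∉ U →
          ∑ x ∈ U, a x = l + ∑ x ∈ U.erase (t e), c (φ x) := by
        intro U hv hu
        rw [← Finset.add_sum_erase _ _ hv, hat]
        congr 1
        refine Finset.sum_congr rfl fun x hx => hax x ?_ ?_
        · rintro rfl; exact hu (Finset.mem_of_mem_erase hx)
        · exact Finset.ne_of_mem_erase hx
      have htight : ∑ x ∈ M, a x = inn s t F M := by
        rw [hsumt M hMt hMs, hl]; ring
      have htot : ∑ x, a x = F.card := by
        have h1 := hc.1
        have h2 := hm a univ
        rw [hma, h1] at h2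
        simp only [mem_univ, filter_true, if_true] at h2
        linarith
      -- symmetric sets
      have hsym : ∀ U : Finset V, U ≠ univ → (s e ∈ U ↔ t e ∈ U) →
          inn s t (insert e F) U ≤ ∑ x ∈ U, a x := by
        intro U hU hst
        have hpre : (univ.filter fun x => φ x ∈ U.image φ) = U := by
          ext x
          simp only [mem_filter, mem_univ, true_and, mem_image]
          constructor
          · rintro ⟨y, hy, hyx⟩
            rcases (hφ _ _).1 hyx with rfl | ⟨rfl, rfl⟩ | ⟨rfl, rfl⟩ <;> tauto
          · intro hx; exact ⟨x, hx, rfl⟩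
        have hU' : U.image φ ≠ univ := by
          intro h
          rw [h] at hpre
          apply hU
          rw [← hpre]; simp
        have h1 := hc.2 _ hU'
        rw [← hma, hm, inn_comp, hpre] at h1
        have h2 : φ (s e) ∈ U.image φ ↔ s e ∈ U := by
          conv_rhs => rw [← hpre]
          simp
        rw [inn_insert s t he]
        simp only [h2] at h1
        by_cases hu : s e ∈ U
        · have hv := hst.1 hu
          simp only [hu, hv, and_self, if_true] at *; linarith
        · simp only [hu, false_and, if_false] at *; linarith
      have haN : a ∈ NN s t (insert e F) := by
        refine ⟨by rw [htot, hcard]; ring, ?_⟩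
        intro U hU
        by_cases hst : s e ∈ U ↔ t e ∈ U
        · exact hsym U hU hst
        by_cases hu : s e ∈ U
        · have hv : t e ∉ U := by tauto
          have h1 := inn_super s t F U M
          have h2 : ∑ x ∈ U ∪ M, a x + ∑ x ∈ U ∩ M, a x = ∑ x ∈ U, a x + ∑ x ∈ M, a x :=
            Finset.sum_union_inter
          have h3 : inn s t F (U ∩ M) ≤ ∑ x ∈ U ∩ M, a x := by
            have h4 := hsym (U ∩ M) (by
              intro h
              have : t e ∈ U ∩ M := by rw [h]; simp
              simp [hv] at this) (by simp [hv, hMs])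
            rw [inn_insert s t he] at h4
            simpa [hv] using h4
          have h4 : inn s t F (U ∪ M) ≤ ∑ x ∈ U ∪ M, a x := by
            by_cases hUM : U ∪ M = univ
            · rw [hUM, inn_univ, htot]
            · have h4 := hsym (U ∪ M) hUM (by simp [hu, hMt])
              rw [inn_insert s t he] at h4
              split_ifs at h4 <;> linarith
          rw [inn_insert s t he]
          simp only [hv, and_false, if_false]
          linarith
        · have hv : t e ∈ U := by tauto
          rw [inn_insert s t he, hsumt U hv hu]
          simp only [hu, false_and, if_false]
          have := hM U ⟨hv, hu⟩
          linarith
      refine ⟨a, ⟨haN, ?_⟩, hma⟩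
      intro haA
      rw [hAmem] at haA
      have h1 := haA.2 M (by rintro rfl; simp at hMs)
      rw [sum_add_single, htight] at h1
      simp only [hMt, if_true] at h1
      linarith
  rw [← hAcard, ← himg, hinj.encard_image, add_comm, hB, Set.encard_sdiff_add_encard_of_subset hAsub]

lemma main_count {E : Type*} (F : Finset E) : ∀ {V : Type*} [Fintype V] (s t : E → V),
    (NN s t F).encard = (Tr s t F).encard := by
  classical
  induction F using Finset.induction_on with
  | empty =>
    intro V _ s t
    by_cases hV : Fintype.card V = 1
    · obtain ⟨v, hv⟩ := Fintype.card_eq_one_iff.1 hV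
      haveI : Unique V := ⟨⟨v⟩, hv⟩
      have h1 : NN s t (∅ : Finset E) = {fun _ => -1} := by
        ext a
        simp only [NN, inn_empty, Set.mem_ofPred_eq, Set.mem_singleton_iff, card_empty]
        constructor
        · rintro ⟨h, _⟩
          ext x
          rw [Fintype.sum_unique] at h
          rw [Subsingleton.elim x default, h]; simp
        · rintro rfl
          refine ⟨by simp, ?_⟩
          intro U hU
          rcases U.eq_empty_or_nonempty with rfl | ⟨x, hx⟩
          · simp
          · exact absurd (Finset.eq_univ_iff_forall.2 fun y => Subsingleton.elim x y ▸ hx) hU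
      have h2 : Tr s t (∅ : Finset E) = {∅} := by
        ext T
        simp only [Tr, Set.mem_ofPred_eq, Set.mem_singleton_iff, subset_empty]
        constructor
        · exact fun h => h.1
        · rintro rfl
          refine ⟨rfl, by simp [hV], ?_⟩
          intro S _ x y hx
          rwa [Subsingleton.elim y x]
      rw [h1, h2]; simp
    · have h1 : NN s t (∅ : Finset E) = ∅ := by
        ext a
        simp only [NN, inn_empty, Set.mem_ofPred_eq, Set.mem_empty_iff_false, iff_false, card_empty]
        rintro ⟨h, h2⟩
        have : 0 ≤ ∑ v, a v := by
          apply Finset.sum_nonneg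
          intro v _
          have := h2 {v} (by
            intro hv
            apply hV
            rw [← Finset.card_univ, ← hv]; simp)
          simpa using this
        rw [h] at this
        simp at this
      have h2 : Tr s t (∅ : Finset E) = ∅ := by
        ext T
        simp only [Tr, Set.mem_ofPred_eq, Set.mem_empty_iff_false, iff_false, subset_empty]
        rintro ⟨rfl, h, _⟩
        simp at h
        omega
      rw [h1, h2]; simp
  | insert e F he ih =>
    intro V _ s t
    by_cases hl : s e = t e
    · rw [NN_loop s t he hl, Tr_loop s t he hl, ih]
    · have h4 : Fintype.card {x : V // x ≠ t e} + 1 = Fintype.card V := by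
        have : 0 < Fintype.card V := Fintype.card_pos_iff.2 ⟨s e⟩
        simp [Fintype.card_subtype_compl]
        omega
      rw [NN_step s t he hl (cmap _ _ hl) (cmap_surj _ _ hl) (cmap_eq _ _ hl),
        Tr_step s t he (cmap _ _ hl) (cmap_surj _ _ hl) (cmap_eq _ _ hl) h4, ih, ih]

lemma conn_iff {V E : Type*} [Nonempty V] (ends : E → Sym2 V) (s t : E → V)
    (hst : ∀ e, ends e = s(s e, t e)) (T : Finset E) :
    (underlyingGraph ends (↑T : Set E)).Connected ↔ Conn s t T := by
  constructor
  · intro h S hS x y hx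
    obtain ⟨p⟩ := h.preconnected x y
    induction p with
    | nil => exact hx
    | cons hadj p ih =>
      apply ih
      rw [underlyingGraph, SimpleGraph.fromRel_adj] at hadj
      obtain ⟨_, ⟨e, he, h2⟩ | ⟨e, he, h2⟩⟩ := hadj <;>
      · have := hS e he
        rw [hst, Sym2.eq_iff] at h2
        rcases h2 with ⟨h3, h4⟩ | ⟨h3, h4⟩ <;> rw [h3, h4] at this <;> tauto
  · intro h
    refine ⟨fun x y => ?_⟩
    refine h {z | (underlyingGraph ends (↑T : Set E)).Reachable x z} ?_ x y
      (SimpleGraph.Reachable.refl x)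
    intro e he
    by_cases hl : s e = t e
    · rw [hl]
    have hadj : (underlyingGraph ends (↑T : Set E)).Adj (s e) (t e) := by
      rw [underlyingGraph, SimpleGraph.fromRel_adj]
      exact ⟨hl, Or.inl ⟨e, he, hst e⟩⟩
    exact ⟨fun h => h.trans hadj.reachable, fun h => h.trans hadj.symm.reachable⟩

lemma kappa_add {V E : Type*} [Fintype V] [Fintype E] [DecidableEq V]
    (ends : E → Sym2 V) (s t : E → V)
    (hst : ∀ e, ends e = s(s e, t e)) (S : Finset V) :
    (multigraphKappa ends S : ℤ) + inn s t univ Sᶜ = Fintype.card E := by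
  classical
  unfold multigraphKappa inn
  rw [← Finset.card_univ, ← Finset.card_filter_add_card_filter_not (s := (univ : Finset E))
    (fun e => ∃ v ∈ S, v ∈ ends e)]
  push_cast
  congr! 4 with e
  simp only [hst, Sym2.mem_iff, mem_compl]
  grind

end BreakCount

/-- For a connected multigraph `G`, the number of vectors `a : V → ℕ` of total
weight `|E| − 1` with `∑_{v∈S} a v < κ_S` for all nonempty `S ⊆ V` (the dimension
of the top graded component of the central bizonotopal algebra `B_G^c`) equals the
number of spanning trees of `G`. -/
theorem central_top_dim_eq_card_spanningTrees
    {V E : Type*} [Fintype V] [Fintype E] [DecidableEq V]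
    (ends : E → Sym2 V) [Nonempty E]
    (hconn : (underlyingGraph ends Set.univ).Connected) :
    Set.ncard {a : V → ℕ | ∑ v : V, a v = Fintype.card E - 1 ∧
        ∀ S : Finset V, S.Nonempty → ∑ v ∈ S, a v < multigraphKappa ends S} =
      Set.ncard {T : Finset E | (∀ e ∈ T, ¬ (ends e).IsDiag) ∧
        T.card = Fintype.card V - 1 ∧
        (underlyingGraph ends (↑T : Set E)).Connected} := by
  classical
  haveI : Nonempty V := hconn.nonempty
  have hex : ∀ e, ∃ p : V × V, ends e = s(p.1, p.2) := by
    intro e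
    induction h : ends e using Sym2.ind with
    | _ x y => exact ⟨(x, y), rfl⟩
  choose p hp using hex
  let s : E → V := fun e => (p e).1
  let t : E → V := fun e => (p e).2
  have hst : ∀ e, ends e = s(s e, t e) := hp
  have hE : 0 < Fintype.card E := Fintype.card_pos
  have hVpos : 0 < Fintype.card V := Fintype.card_pos
  have hT : {T : Finset E | (∀ e ∈ T, ¬ (ends e).IsDiag) ∧
        T.card = Fintype.card V - 1 ∧
        (underlyingGraph ends (↑T : Set E)).Connected} = BreakCount.Tr s t univ := by
    ext T
    simp only [BreakCount.Tr, Set.mem_ofPred_eq, BreakCount.conn_iff ends s t hst, subset_univ,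
      true_and]
    constructor
    · rintro ⟨_, h2, h3⟩
      exact ⟨by omega, h3⟩
    · rintro ⟨h2, h3⟩
      refine ⟨?_, by omega, h3⟩
      intro e he hd
      rw [hst, Sym2.mk_isDiag_iff] at hd
      rw [← Finset.insert_erase he, BreakCount.conn_loop s t e hd] at h3
      have := BreakCount.conn_card _ s t h3
      have := Finset.card_erase_add_one he
      omega
  have hA : (fun (a : V → ℕ) (v : V) => (a v : ℤ)) '' {a : V → ℕ | ∑ v : V, a v = Fintype.card E - 1 ∧
        ∀ S : Finset V, S.Nonempty → ∑ v ∈ S, a v < multigraphKappa ends S} =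
      BreakCount.NN s t univ := by
    ext a
    constructor
    · rintro ⟨a, ⟨h1, h2⟩, rfl⟩
      have h1' : ∑ v, (a v : ℤ) = (Fintype.card E : ℤ) - 1 := by
        rw [← Nat.cast_sum, h1]; push_cast [Nat.cast_sub hE]; simp
      refine ⟨by simpa using h1', ?_⟩
      intro U hU
      have h3 := h2 Uᶜ (by rwa [Finset.nonempty_iff_ne_empty, Ne, Finset.compl_eq_empty_iff])
      have h4 := BreakCount.kappa_add ends s t hst Uᶜ
      rw [compl_compl] at h4
      have h5 := Finset.sum_add_sum_compl U (fun v => (a v : ℤ))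
      have h6 : ∑ v ∈ Uᶜ, (a v : ℤ) < multigraphKappa ends Uᶜ := by exact_mod_cast h3
      simp only
      linarith
    · rintro ⟨h1, h2⟩
      have hpos : ∀ v, 0 ≤ a v := by
        intro v
        by_cases hv : ({v} : Finset V) = univ
        · rw [← hv] at h1
          simp only [Finset.sum_singleton, Finset.card_univ] at h1
          omega
        · have h3 := h2 {v} hv
          have h4 := BreakCount.inn_nonneg s t univ {v}
          simp only [Finset.sum_singleton] at h3
          linarith
      have hcast : ∀ v, ((a v).toNat : ℤ) = a v := fun v => Int.toNat_of_nonneg (hpos v)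
      rw [Finset.card_univ] at h1
      refine ⟨fun v => (a v).toNat, ⟨?_, ?_⟩, ?_⟩
      · zify [hE]
        simp only [hcast, h1]
      · intro S hS
        zify
        simp only [hcast]
        have h3 := h2 Sᶜ (by
          intro h
          rw [Finset.compl_eq_univ_iff] at h
          exact hS.ne_empty h)
        have h4 := BreakCount.kappa_add ends s t hst S
        have h5 := Finset.sum_add_sum_compl S a
        linarith
      · ext v; exact hcast v
  rw [hT, Set.ncard_def, Set.ncard_def, ← BreakCount.main_count, ← hA, Set.InjOn.encard_image]
  intro a _ b _ h
  ext v
  have : (a v : ℤ) = (b v : ℤ) := congrFun h v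
  exact_mod_cast this
end

section
/- For every integer n ≥ 4, the number of vectors b : Fin n → ℕ such that ∑_{i} b_i = n(n−1)/2 − 2 and, for every nonempty subset I ⊆ Fin n, ∑_{i∈I} b_i + 2 ≤ |I|(|I|−1)/2 + |I|·(n−|I|), equals (n−2)(n−3)/2 · n^{n−4}. -/
open Finset

theorem abel_expand (w : ℕ → ℚ) (m : ℕ) (z : ℚ) :
    ∑ k ∈ range (m+1), (m.choose k : ℚ) * (k:ℚ)^k * w k * (z - k)^(m-k) =
    ∑ j ∈ range (m+1), (m.choose j : ℚ) * z^j *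
      ∑ k ∈ range (m-j+1), (-1:ℚ)^(m-j-k) * ((m-j).choose k : ℚ) * ((k:ℚ)^(m-j) * w k) := by
  have h1 : ∀ k ∈ range (m+1), (m.choose k : ℚ) * (k:ℚ)^k * w k * (z - k)^(m-k) =
      ∑ j ∈ range (m-k+1), (m.choose j : ℚ) * z^j *
        ((-1:ℚ)^(m-j-k) * ((m-j).choose k : ℚ) * ((k:ℚ)^(m-j) * w k)) := by
    intro k hk
    rw [sub_eq_add_neg, add_pow, mul_sum]
    apply sum_congr rfl
    intro j hj
    simp only [mem_range] at hk hj
    have hc : (m.choose k : ℚ) * ((m-k).choose j : ℚ) = (m.choose j : ℚ) * ((m-j).choose k : ℚ) := by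
      have h2 := Nat.choose_mul (n := m) (k := j + k) (s := k) (by omega)
      have h3 := Nat.choose_mul (n := m) (k := j + k) (s := j) (by omega)
      have h4 : (j+k).choose k = (j+k).choose j := by
        rw [← Nat.choose_symm_add]
      rw [h4, h3] at h2
      simp only [Nat.add_sub_cancel, Nat.add_sub_cancel_left] at h2
      exact_mod_cast h2.symm
    have he : m - j = k + (m - k - j) := by omega
    have he2 : m - j - k = m - k - j := by omega
    have hp : (k:ℚ)^(m-j) = (k:ℚ)^k * (k:ℚ)^(m-k-j) := by rw [he, pow_add]
    rw [he2, hp, neg_pow]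
    linear_combination ((k:ℚ)^k * w k * z^j * ((-1)^(m-k-j) * (k:ℚ)^(m-k-j))) * hc
  rw [sum_congr rfl h1]
  simp_rw [mul_sum]
  apply sum_comm'
  intro x y
  simp only [mem_range]
  omega

theorem altsum_pow (i e : ℕ) (h : e < i) :
    ∑ k ∈ range (i+1), (-1:ℚ)^(i-k) * (i.choose k : ℚ) * (k:ℚ)^e = 0 := by
  have h1 := fwdDiff_iter_pow_eq_zero_of_lt (R := ℚ) h
  have h2 := fwdDiff_iter_eq_sum_shift (1:ℚ) (fun r : ℚ => r^e) i 0
  rw [h1] at h2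
  simp only [Pi.zero_apply, zsmul_eq_mul] at h2
  rw [h2]
  apply sum_congr rfl
  intro k _
  simp

theorem D1 (i : ℕ) : ∑ k ∈ range (i+1), (-1:ℚ)^(i-k) * (i.choose k : ℚ) * ((k:ℚ)^i * (k:ℚ)⁻¹) =
    if i = 1 then 1 else 0 := by
  split_ifs with h
  · subst h; simp [sum_range_succ]
  · rcases i with _ | _ | i
    · simp
    · simp at h
    · rw [← altsum_pow (i+2) (i+1) (by omega)]
      apply sum_congr rfl
      intro k _
      rcases eq_or_ne (k:ℚ) 0 with hk | hk
      · simp [hk]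
      · field_simp
        ring

theorem D2 (i : ℕ) : ∑ k ∈ range (i+1), (-1:ℚ)^(i-k) * (i.choose k : ℚ) * ((k:ℚ)^i * ((k:ℚ)^2)⁻¹) =
    if i = 1 then 1 else if i = 2 then -1 else 0 := by
  split_ifs with h h
  · subst h; simp [sum_range_succ]
  · subst h; norm_num [sum_range_succ]
  · rcases i with _ | _ | _ | i
    · simp
    · simp at *
    · simp at h
    · rw [← altsum_pow (i+3) (i+1) (by omega)]
      apply sum_congr rfl
      intro k _
      rcases eq_or_ne (k:ℚ) 0 with hk | hk
      · simp [hk]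
      · field_simp
        ring

theorem abel1 (m : ℕ) (z : ℚ) : 
    ∑ k ∈ range (m+2), ((m+1).choose k : ℚ) * (k:ℚ)^k * (k:ℚ)⁻¹ * (z - k)^(m+1-k) = (m+1) * z^m := by
  rw [abel_expand (fun k => (k:ℚ)⁻¹) (m+1) z]
  simp_rw [D1]
  rw [sum_eq_single m]
  · simp
  · intro b hb hbm
    simp only [mem_range] at hb
    rw [if_neg (by omega)]; simp
  · simp

theorem abel2 (m : ℕ) (z : ℚ) : 
    ∑ k ∈ range (m+3), ((m+2).choose k : ℚ) * (k:ℚ)^k * ((k:ℚ)^2)⁻¹ * (z - k)^(m+2-k)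
      = (m+2) * z^(m+1) - (m+2)*(m+1)/2 * z^m := by
  rw [abel_expand (fun k => ((k:ℚ)^2)⁻¹) (m+2) z]
  simp_rw [D2]
  rw [sum_range_succ, sum_range_succ, sum_range_succ, sum_eq_zero]
  · have e1 : m + 2 - m = 2 := by omega
    have e2 : m + 2 - (m+1) = 1 := by omega
    have c2 : ((m+2).choose m : ℚ) = (m+2)*(m+1)/2 := by
      rw [← Nat.choose_symm (by omega), e1, Nat.cast_choose_two]; push_cast; ring
    have c1 : ((m+2).choose (m+1) : ℚ) = m+2 := by
      rw [← Nat.choose_symm (by omega), e2]; simp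
    rw [e1, e2, c1, c2]
    simp; ring
  · intro b hb
    simp only [mem_range] at hb
    rw [if_neg (by omega), if_neg (by omega)]; simp

/-- The number of spanning trees of `K_k`, with junk value `0` at `k = 0`. -/
def treeQ (k : ℕ) : ℚ := (k:ℚ)^k * ((k:ℚ)^2)⁻¹

theorem treeQ_zero : treeQ 0 = 0 := by simp [treeQ]

theorem treeQ_eq (k : ℕ) (hk : 1 ≤ k) : treeQ k = ((k^(k-2) : ℕ) : ℚ) := by
  unfold treeQ
  rcases k with _ | _ | k
  · omega
  · norm_num
  · have : ((k+1+1:ℕ):ℚ) ≠ 0 := by positivity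
    rw [Nat.cast_pow]
    field_simp
    rw [← pow_add]; congr 1; omega

/-- Weighted sums over ordered splittings. -/
def MM (n a b : ℕ) : ℚ :=
  ∑ k ∈ range (n+1), (n.choose k : ℚ) * (treeQ k * treeQ (n-k)) * ((k:ℚ)^a * ((n-k : ℕ):ℚ)^b)

theorem MM_symm (n a b : ℕ) : MM n a b = MM n b a := by
  unfold MM
  rw [← sum_range_reflect]
  apply sum_congr rfl
  intro k hk
  simp only [mem_range] at hk
  have e : n + 1 - 1 - k = n - k := by omega
  have e2 : n - (n-k) = k := by omega
  rw [e, e2, Nat.choose_symm (by omega)]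
  ring

theorem MM_step (n a b : ℕ) : MM n (a+1) b + MM n a (b+1) = n * MM n a b := by
  unfold MM
  rw [← sum_add_distrib, mul_sum]
  apply sum_congr rfl
  intro k hk
  simp only [mem_range] at hk
  have e : ((n-k:ℕ):ℚ) = n - k := by rw [Nat.cast_sub (by omega)]
  rw [e]; ring

theorem MM_abel (m a : ℕ) :
    MM (m+1) a 2 = (m+1) *
      ∑ k ∈ range (m+1), (m.choose k : ℚ) * (treeQ k * (k:ℚ)^a) * (((m+1:ℕ):ℚ) - k)^(m-k) := by
  unfold MM
  rw [sum_range_succ]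
  simp only [Nat.sub_self, treeQ_zero, mul_zero, zero_mul, add_zero]
  rw [mul_sum]
  apply sum_congr rfl
  intro k hk
  simp only [mem_range] at hk
  obtain ⟨l, rfl⟩ : ∃ l, m = k + l := ⟨m - k, by omega⟩
  have e : k + l + 1 - k = l + 1 := by omega
  have e2 : k + l - k = l := by omega
  have e3 : (((k+l+1:ℕ):ℚ) - k) = ((l+1:ℕ):ℚ) := by push_cast; ring
  have hc : ((k+l+1).choose k : ℚ) * ((l+1:ℕ):ℚ) = ((k+l:ℕ):ℚ)*((k+l).choose k : ℚ) + (k+l).choose k := by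
    have := Nat.choose_mul_succ_eq (k+l) k
    rw [show k + l + 1 - k = l+1 by omega] at this
    have h2 : ((k+l+1).choose k : ℚ) * ((l+1:ℕ):ℚ) = ((k+l).choose k : ℚ) * ((k+l+1:ℕ):ℚ) := by
      exact_mod_cast this.symm
    rw [h2]; push_cast; ring
  rw [e, e2, e3]
  have ht : treeQ (l+1) * ((l+1:ℕ):ℚ)^2 = ((l+1:ℕ):ℚ) * ((l+1:ℕ):ℚ)^l := by
    have : ((l+1:ℕ):ℚ) ≠ 0 := by positivity
    unfold treeQ
    field_simp
    try ring
  linear_combination (((k+l+1).choose k : ℚ) * treeQ k * (k:ℚ)^a) * ht +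
    (treeQ k * (k:ℚ)^a * ((l+1:ℕ):ℚ)^l) * hc

theorem MM_00 (p : ℕ) : MM (p+4) 0 0 = ((p:ℚ)+3)*(p+10) * ((p:ℚ)+4)^p := by
  have h20 : MM (p+4) 0 2 = (p+4) * ((p+3) * ((p:ℚ)+4)^(p+2) - (p+3)*(p+2)/2 * ((p:ℚ)+4)^(p+1)) := by
    rw [MM_abel (p+3) 0]
    have := abel2 (p+1) ((p+3+1:ℕ):ℚ)
    push_cast at this ⊢
    simp only [treeQ, pow_zero, mul_one, ← mul_assoc]
    rw [show (p:ℚ)+3+1 = p+4 by ring] at this ⊢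
    rw [show p + 1 + 2 = p + 3 by rfl, show p + 1 + 3 = p + 3 + 1 by rfl] at this
    rw [this]; ring
  have h12 : MM (p+4) 1 2 = (p+4) * ((p+3) * ((p:ℚ)+4)^(p+2)) := by
    rw [MM_abel (p+3) 1]
    have := abel1 (p+2) ((p+3+1:ℕ):ℚ)
    push_cast at this ⊢
    rw [show (p:ℚ)+3+1 = p+4 by ring] at this ⊢
    have h2 : ∀ k ∈ range (p+3+1), (((p+3).choose k : ℕ):ℚ) * (treeQ k * (k:ℚ)^1) * (((p:ℚ)+4) - k)^(p+3-k)
       = (((p+3).choose k : ℕ):ℚ) * (k:ℚ)^k * (k:ℚ)⁻¹ * ((p+4:ℚ) - k)^(p+3-k) := by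
      intro k _
      unfold treeQ
      rcases eq_or_ne (k:ℚ) 0 with hk | hk
      · simp [hk]
      · field_simp
    rw [sum_congr rfl h2]
    rw [show p + 2 + 1 = p + 3 by rfl, show p + 2 + 2 = p + 3 + 1 by rfl] at this
    rw [this]; ring
  have s1 := MM_step (p+4) 1 1
  have s2 := MM_step (p+4) 0 1
  have s3 := MM_step (p+4) 0 0
  rw [MM_symm _ 2 1] at s1
  rw [MM_symm _ 1 0] at s3
  simp only [zero_add, one_add_one_eq_two] at *
  push_cast at s1 s2 s3
  have hp : (p:ℚ)+4 ≠ 0 := by positivity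
  have h11 : MM (p+4) 1 1 = 2 * ((p+3) * ((p:ℚ)+4)^(p+2)) := by
    apply mul_left_cancel₀ hp
    linear_combination -s1 + 2 * h12
  have h01 : MM (p+4) 0 1 = ((p:ℚ)+3)*(p+10)/2 * ((p:ℚ)+4)^(p+1) := by
    apply mul_left_cancel₀ hp
    linear_combination -s2 + h11 + h20
  apply mul_left_cancel₀ hp
  linear_combination -s3 + 2 * h01

theorem sum_tree_pairs (p : ℕ) {α : Type*} [Fintype α] [DecidableEq α] (hα : Fintype.card α = p+4)
    (r : α) :
    2 * ∑ J ∈ univ.filter (fun J : Finset α => r ∈ J), treeQ #J * treeQ #Jᶜ =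
      ((p:ℚ)+3)*(p+10) * ((p:ℚ)+4)^p := by
  rw [← MM_00]
  have h1 : ∑ J ∈ univ.filter (fun J : Finset α => r ∈ J), treeQ #J * treeQ #Jᶜ =
      ∑ J ∈ univ.filter (fun J : Finset α => ¬ r ∈ J), treeQ #J * treeQ #Jᶜ := by
    apply sum_bij' (fun J _ => Jᶜ) (fun J _ => Jᶜ)
    all_goals simp [mul_comm]
  rw [two_mul]
  nth_rewrite 2 [h1]
  rw [sum_filter_add_sum_filter_not]
  have := sum_powerset_apply_card (fun k => treeQ k * treeQ (p+4-k)) (x := (univ : Finset α))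
  rw [powerset_univ, card_univ, hα] at this
  simp only [card_compl, hα]
  rw [this]
  unfold MM
  simp

/-- Lattice points of the trimmed permutohedron on `J`, supported on `J`. -/
def X1 {α : Type*} (J : Finset α) : Set (α → ℤ) :=
  {x | (∀ i, i ∉ J → x i = 0) ∧ 2 * ∑ i ∈ J, x i = (#J : ℤ) * (#J - 1) - 2 ∧
    ∀ K : Finset α, K ⊂ J → (#K : ℤ) * (#K - 1) ≤ 2 * ∑ i ∈ K, x i}

theorem X1_unique {α : Type*} [DecidableEq α] (J : Finset α) (x y : α → ℤ) (hx : x ∈ X1 J)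
    (hy : y ∈ X1 J) (f : α → ℤ) (h : ∀ i ∈ J, y i = x i + #J * f i - ∑ j ∈ J, f j) : x = y := by
  obtain ⟨hx0, hxT, hxK⟩ := hx
  obtain ⟨hy0, hyT, hyK⟩ := hy
  rcases J.eq_empty_or_nonempty with rfl | hJ
  · funext i; rw [hx0 i (by simp), hy0 i (by simp)]
  obtain ⟨i0, hi0, hmin⟩ := exists_min_image J f hJ
  set μ := f i0
  set K := J.filter (fun i => f i = μ) with hK
  have hKJ : K ⊆ J := filter_subset _ _
  by_cases hKe : K = J
  · have hc : ∀ i ∈ J, f i = μ := by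
      intro i hi; rw [← hKe, hK, mem_filter] at hi; exact hi.2
    funext i
    by_cases hi : i ∈ J
    · rw [h i hi, sum_congr rfl hc, hc i hi]; simp
    · rw [hx0 i hi, hy0 i hi]
  · exfalso
    have hKs : K ⊂ J := hKJ.ssubset_of_ne hKe
    have hi0K : i0 ∈ K := by simp [hK, hi0, μ]
    have hLs : J \ K ⊂ J := sdiff_ssubset hKJ ⟨i0, hi0K⟩
    have h1 := hyK K hKs
    have h2 := hxK _ hLs
    have hcard : (#(J \ K) : ℤ) = #J - #K := by
      rw [card_sdiff_of_subset hKJ, Nat.cast_sub (card_le_card hKJ)]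
    have hs : ∑ i ∈ J \ K, x i + ∑ i ∈ K, x i = ∑ i ∈ J, x i := sum_sdiff hKJ
    have hf : ∑ i ∈ J \ K, f i + ∑ i ∈ K, f i = ∑ i ∈ J, f i := sum_sdiff hKJ
    have hfK : ∑ i ∈ K, f i = #K * μ := by
      rw [sum_congr rfl (fun i hi => (mem_filter.1 hi).2), sum_const, nsmul_eq_mul]
    have hfL : (#(J \ K) : ℤ) * (μ + 1) ≤ ∑ i ∈ J \ K, f i := by
      have := card_nsmul_le_sum (J \ K) f (μ+1) (by
        intro i hi
        rw [mem_sdiff] at hi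
        have h3 := hmin i hi.1
        have h4 : f i ≠ μ := fun h4 => hi.2 (by rw [hK, mem_filter]; exact ⟨hi.1, h4⟩)
        have : μ ≤ f i := h3
        omega)
      simpa using this
    have hyS : ∑ i ∈ K, y i = ∑ i ∈ K, x i + #J * ∑ i ∈ K, f i - #K * ∑ j ∈ J, f j := by
      rw [sum_congr rfl (fun i hi => h i (hKJ hi)), sum_sub_distrib, sum_add_distrib, ← mul_sum]
      simp
    rw [hyS, hfK] at h1
    rw [hcard] at h2 hfL
    have hk : (0:ℤ) ≤ #K := by positivity
    have h5 := mul_le_mul_of_nonneg_left hfL hk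
    have h6 : (#K:ℤ) * ∑ j ∈ J, f j = #K * ∑ i ∈ J \ K, f i + #K * (#K * μ) := by
      rw [← hf, hfK]; ring
    nlinarith

theorem X1_reduce {α : Type*} [DecidableEq α] (J : Finset α) (hJ : J.Nonempty) (P : (α → ℤ) → Prop)
    (hP : ∀ x, P x → ∀ K ⊆ J, P (fun i => x i + if i ∈ J then (if i ∈ K then (#J : ℤ) else 0) - #K else 0))
    (hP0 : ∀ x, P x → (∀ i, i ∉ J → x i = 0) ∧ 2 * ∑ i ∈ J, x i = (#J : ℤ) * (#J - 1) - 2)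
    (x0 : α → ℤ) (hx0 : P x0) : ∃ x, P x ∧ x ∈ X1 J := by
  obtain ⟨x, hx, hmin⟩ := WellFounded.has_min (measure (fun x : α → ℤ => (∑ i ∈ J, x i ^ 2).toNat)).wf
    {x | P x} ⟨x0, hx0⟩
  refine ⟨x, hx, (hP0 x hx).1, (hP0 x hx).2, ?_⟩
  intro K hK
  by_contra hlt
  push Not at hlt
  apply hmin _ (hP x hx K hK.1)
  show (Int.toNat _) < Int.toNat _
  have hT := (hP0 x hx).2
  have hs : ∑ i ∈ J \ K, x i + ∑ i ∈ K, x i = ∑ i ∈ J, x i := sum_sdiff hK.1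
  have hlt2 : (#K : ℤ) < #J := by exact_mod_cast card_lt_card hK
  have key : ∑ i ∈ J, (x i + if i ∈ J then (if i ∈ K then (#J : ℤ) else 0) - #K else 0)^2 
      < ∑ i ∈ J, x i ^ 2 := by
    have h1 : ∀ i ∈ J, (x i + if i ∈ J then (if i ∈ K then (#J : ℤ) else 0) - #K else 0)^2
       = x i ^ 2 - 2 * #K * x i + #K^2 + if i ∈ K then 2 * #J * x i + ((#J:ℤ)^2 - 2 * #J * #K) else 0 := by
      intro i hi
      rw [if_pos hi]
      split_ifs <;> ring
    rw [sum_congr rfl h1, sum_add_distrib, sum_add_distrib, sum_sub_distrib, ← mul_sum, sum_ite_mem,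
      inter_eq_right.2 hK.1, sum_add_distrib, ← mul_sum]
    simp only [sum_const, nsmul_eq_mul]
    have hj : (0:ℤ) ≤ #J := by positivity
    -- parity
    have hpar : 2 * ∑ i ∈ K, x i + 2 ≤ (#K:ℤ) * (#K-1) := by
      obtain ⟨c, hc⟩ := Int.even_mul_pred_self (#K : ℤ)
      omega
    have h3 := mul_le_mul_of_nonneg_left hpar hj
    have h4 : (2 * (#K:ℤ)) * ∑ i ∈ J, x i = #K * ((#J : ℤ) * (#J - 1) - 2) := by
      rw [← hT]; ring
    nlinarith
  have h0 : 0 ≤ ∑ i ∈ J, x i ^ 2 := sum_nonneg (fun i _ => sq_nonneg _)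
  have h0' : 0 ≤ ∑ i ∈ J, (x i + if i ∈ J then (if i ∈ K then (#J : ℤ) else 0) - #K else 0)^2 :=
    sum_nonneg (fun i _ => sq_nonneg _)
  beta_reduce
  omega

theorem X1_card_one {α : Type*} [DecidableEq α] (j : α) : Set.ncard (X1 ({j} : Finset α)) = 1 := by
  rw [Set.ncard_eq_one]
  refine ⟨fun i => if i = j then -1 else 0, ?_⟩
  ext x
  simp only [X1, Set.mem_ofPred_eq, Set.mem_singleton_iff, mem_singleton, sum_singleton, card_singleton]
  constructor
  · rintro ⟨h1, h2, -⟩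
    funext i
    split_ifs with h
    · subst h; push_cast at h2; omega
    · exact h1 i h
  · rintro rfl
    refine ⟨fun i hi => by simp [hi], by simp, ?_⟩
    intro K hK
    rw [ssubset_singleton_iff] at hK
    subst hK; simp

theorem X1_card {α : Type*} [DecidableEq α] (J : Finset α) (hJ : J.Nonempty) :
    Set.ncard (X1 J) = #J ^ (#J - 2) := by
  rcases Nat.lt_or_ge 1 #J with hm | hm
  swap
  · have h1 : #J = 1 := le_antisymm hm hJ.card_pos
    obtain ⟨j, rfl⟩ := card_eq_one.1 h1
    rw [X1_card_one]; simp
  obtain ⟨j0, hj0, j1, hj1, hne⟩ := one_lt_card.1 hm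
  set S := (J.erase j0).erase j1 with hS
  have hj1' : j1 ∈ J.erase j0 := mem_erase.2 ⟨hne.symm, hj1⟩
  have hScard : #S = #J - 2 := by
    rw [hS, card_erase_of_mem hj1', card_erase_of_mem hj0]; omega
  have hsum : ∀ x : α → ℤ, ∑ i ∈ J, x i = x j0 + (x j1 + ∑ i ∈ S, x i) := by
    intro x
    rw [hS, add_sum_erase _ _ hj1', add_sum_erase _ _ hj0]
  have hSJ : ∀ i ∈ S, i ∈ J := fun i hi => mem_of_mem_erase (mem_of_mem_erase hi)
  have : NeZero #J := ⟨by omega⟩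
  let φ : X1 J → (S → ZMod #J) := fun x i => ((x.1 i.1 - x.1 j0 : ℤ) : ZMod #J)
  have hφ : Function.Bijective φ := by
    constructor
    · rintro ⟨x, hx⟩ ⟨y, hy⟩ hxy
      have hd : ∀ i ∈ S, (#J : ℤ) ∣ (y i - x i) - (y j0 - x j0) := by
        intro i hi
        have h1 := congrFun hxy ⟨i, hi⟩
        simp only [φ] at h1
        rw [ZMod.intCast_eq_intCast_iff_dvd_sub] at h1
        convert h1 using 1; ring
      have hT : ∑ i ∈ J, (y i - x i) = 0 := by
        rw [sum_sub_distrib]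
        have := hx.2.1
        have := hy.2.1
        omega
      have hsd : (#J : ℤ) ∣ ∑ i ∈ S, ((y i - x i) - (y j0 - x j0)) := dvd_sum hd
      rw [sum_sub_distrib] at hsd
      simp only [sum_const, nsmul_eq_mul, hScard] at hsd
      rw [Nat.cast_sub (by omega)] at hsd
      rw [hsum] at hT
      have hd1 : (#J : ℤ) ∣ (y j1 - x j1) - (y j0 - x j0) := by
        obtain ⟨c, hc⟩ := hsd
        refine ⟨-c - (y j0 - x j0), ?_⟩
        push_cast at hc
        linear_combination hT - hc
      have hall : ∀ i ∈ J, (#J : ℤ) ∣ (y i - x i) - (y j0 - x j0) := by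
        intro i hi
        by_cases h0 : i = j0
        · subst h0; simp
        by_cases h1 : i = j1
        · subst h1; exact hd1
        · exact hd i (by simp [hS, h0, h1, hi])
      choose! f hf using hall
      have hT : ∑ i ∈ J, (y i - x i) = 0 := by
        rw [hsum]; exact hT
      have hfs : ∑ i ∈ J, ((y i - x i) - (y j0 - x j0)) = #J * ∑ i ∈ J, f i := by
        rw [sum_congr rfl hf, mul_sum]
      rw [sum_sub_distrib, hT] at hfs
      simp only [sum_const, nsmul_eq_mul] at hfs
      have hJ0 : (#J : ℤ) ≠ 0 := by exact_mod_cast this.out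
      have hc : - (y j0 - x j0) = ∑ i ∈ J, f i := by
        apply mul_left_cancel₀ hJ0
        linear_combination hfs
      apply Subtype.ext
      apply X1_unique J x y hx hy f
      intro i hi
      rw [← hc]
      linear_combination hf i hi
    · intro w
      obtain ⟨T, hT⟩ : ∃ T : ℤ, 2 * T = (#J : ℤ) * (#J - 1) - 2 := by
        obtain ⟨c, hc⟩ := Int.even_mul_pred_self (#J : ℤ)
        exact ⟨c - 1, by omega⟩
      let x1 : α → ℤ := fun i => if h : i ∈ S then ((w ⟨i, h⟩).val : ℤ) else 0
      let x0 : α → ℤ := fun i => if i = j1 then T - ∑ i ∈ S, x1 i else x1 i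
      have hj1S : j1 ∉ S := by simp [hS]
      have hj0S : j0 ∉ S := by simp [hS]
      refine (fun hred => ?_) (X1_reduce J hJ
        (fun x => ((∀ i, i ∉ J → x i = 0) ∧ 2 * ∑ i ∈ J, x i = (#J : ℤ) * (#J - 1) - 2) ∧
          ∀ i : S, ((x i.1 - x j0 : ℤ) : ZMod #J) = w i) ?_ (fun x h => h.1) x0 ?_)
      · obtain ⟨x, hx, hxX⟩ := hred
        exact ⟨⟨x, hxX⟩, funext hx.2⟩
      · rintro x ⟨⟨h1, h2⟩, h3⟩ K hK
        refine ⟨⟨fun i hi => by simp [hi, h1 i hi], ?_⟩, ?_⟩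
        · rw [sum_add_distrib, mul_add, h2]
          have : ∑ i ∈ J, (if i ∈ J then (if i ∈ K then (#J : ℤ) else 0) - #K else 0) = 0 := by
            rw [sum_congr rfl (fun i hi => if_pos hi), sum_sub_distrib, sum_ite_mem,
              inter_eq_right.2 hK]
            simp; ring
          rw [this]; ring
        · intro i
          beta_reduce
          rw [← h3 i, if_pos (hSJ i.1 i.2), if_pos hj0]
          split_ifs <;> push_cast <;> simp
      · have hSx : ∑ i ∈ S, x0 i = ∑ i ∈ S, x1 i := by
          apply sum_congr rfl
          intro i hi
          have : i ≠ j1 := fun h => hj1S (h ▸ hi)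
          simp [x0, this]
        have h00 : x0 j0 = 0 := by simp [x0, hne, x1, hj0S]
        have h01 : x0 j1 = T - ∑ i ∈ S, x1 i := by simp [x0]
        refine ⟨⟨?_, ?_⟩, ?_⟩
        · intro i hi
          have : i ≠ j1 := fun h => hi (h ▸ hj1)
          have h2 : i ∉ S := fun h => hi (hSJ i h)
          simp [x0, x1, this, h2]
        · rw [hsum, hSx, h00, h01, ← hT]; ring
        · intro i
          have : i.1 ≠ j1 := fun h => hj1S (h ▸ i.2)
          rw [h00]
          simp [x0, x1, this]
  rw [← Nat.card_coe_set_eq, Nat.card_congr (Equiv.ofBijective φ hφ), Nat.card_fun, Nat.card_zmod]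
  simp [hScard]

theorem X1_finite {α : Type*} [DecidableEq α] (J : Finset α) (hJ : J.Nonempty) : (X1 J).Finite := by
  apply Set.finite_of_ncard_pos
  rw [X1_card J hJ]
  have := hJ.card_pos
  positivity

/-- Glue points on `J` and on its complement. -/
def glue {α : Type*} [DecidableEq α] (r : α) (J : Finset α) (u v : α → ℤ) : α → ℤ :=
  fun i => if i ∈ J then u i + (if i = r then 1 else 0) else v i + #J

theorem glue_sum {α : Type*} [DecidableEq α] (r : α) (J : Finset α) (hr : r ∈ J) (u v : α → ℤ)
    (K : Finset α) : ∑ i ∈ K, glue r J u v i =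
      ∑ i ∈ K ∩ J, u i + (if r ∈ K then 1 else 0) + (∑ i ∈ K \ J, v i + #(K \ J) * #J) := by
  rw [← sum_inter_add_sum_sdiff K J]
  congr 1
  · have h : ∀ i ∈ K ∩ J, glue r J u v i = u i + (if i = r then 1 else 0) := by
      intro i hi
      simp [glue, (mem_inter.1 hi).2]
    rw [sum_congr rfl h, sum_add_distrib, sum_ite_eq']
    simp [hr]
  · have h : ∀ i ∈ K \ J, glue r J u v i = v i + #J := by
      intro i hi
      simp [glue, (mem_sdiff.1 hi).2]
    rw [sum_congr rfl h, sum_add_distrib]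
    simp

theorem glue_bound {α : Type*} [Fintype α] [DecidableEq α] (r : α) (J : Finset α) (hr : r ∈ J)
    (hJ : J ≠ univ) (u v : α → ℤ) (hu : u ∈ X1 J) (hv : v ∈ X1 Jᶜ) (K : Finset α) (hK : K ≠ univ) :
    (#K : ℤ) * (#K - 1) + (if r ∈ K ∧ ¬ J ⊆ K then 2 else 0) ≤ 2 * ∑ i ∈ K, glue r J u v i := by
  rw [glue_sum r J hr]
  obtain ⟨-, huT, huK⟩ := hu
  obtain ⟨-, hvT, hvK⟩ := hv
  have hKc : (#K : ℤ) = #(K ∩ J) + #(K \ J) := by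
    rw [← card_inter_add_card_sdiff K J]; push_cast; ring
  rw [hKc]
  have hb : (0:ℤ) ≤ #(K \ J) := by positivity
  have hBsub : K \ J ⊆ Jᶜ := by intro i; simp
  have hApos : (#(K ∩ J) : ℤ) ≤ #J := by exact_mod_cast card_le_card inter_subset_right
  by_cases hA : J ⊆ K
  · rw [if_neg (by tauto), if_pos (hA hr), inter_eq_right.2 hA, mul_add, mul_add, huT]
    have hB : K \ J ⊂ Jᶜ := by
      apply hBsub.ssubset_of_ne
      intro h
      apply hK
      ext i
      simp only [mem_univ, iff_true]
      by_cases hi : i ∈ J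
      · exact hA hi
      · have : i ∈ K \ J := by rw [h]; simp [hi]
        exact (mem_sdiff.1 this).1
    have := hvK _ hB
    nlinarith
  · have hA' : K ∩ J ⊂ J := by
      apply inter_subset_right.ssubset_of_ne
      intro h; exact hA (inter_eq_right.1 h)
    have h1 := huK _ hA'
    have h2 : (#(K ∩ J) : ℤ) + 1 ≤ #J := by exact_mod_cast card_lt_card hA'
    have h4 : (if r ∈ K ∧ ¬ J ⊆ K then (2:ℤ) else 0) = 2 * (if r ∈ K then 1 else 0) := by
      by_cases hrK : r ∈ K <;> simp [hrK, hA]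
    rw [h4]
    have h5 := mul_le_mul_of_nonneg_left h2 hb
    by_cases hB : K \ J = Jᶜ
    · have hbp : (1:ℤ) ≤ #(K \ J) := by
        rw [hB]
        have : Jᶜ.Nonempty := by rw [nonempty_iff_ne_empty]; simpa using hJ
        exact_mod_cast this.card_pos
      have h3 : 2 * ∑ i ∈ K \ J, v i = (#(K \ J) : ℤ) * (#(K \ J) - 1) - 2 := by rw [hB]; exact hvT
      nlinarith
    · have h3 := hvK _ (hBsub.ssubset_of_ne hB)
      nlinarith

/-- Points with a proper tight set through `r`. -/
def Tight {α : Type*} [Fintype α] (r : α) : Set (α → ℤ) :=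
  {x | x ∈ X1 (univ : Finset α) ∧ ∃ J : Finset α, (r ∈ J ∧ J ≠ univ) ∧
    2 * ∑ i ∈ J, x i = (#J : ℤ) * (#J - 1)}

theorem glue_tight {α : Type*} [Fintype α] [DecidableEq α] (r : α) (J : Finset α) (hr : r ∈ J)
    (u v : α → ℤ) (hu : u ∈ X1 J) :
    2 * ∑ i ∈ J, glue r J u v i = (#J : ℤ) * (#J - 1) := by
  rw [glue_sum r J hr]
  simp only [inter_self, hr, if_true, sdiff_self, bot_eq_empty, sum_empty, card_empty]
  have := hu.2.1
  push_cast; linarith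

theorem card_compl_int {α : Type*} [Fintype α] [DecidableEq α] (J : Finset α) :
    (#Jᶜ : ℤ) = Fintype.card α - #J := by
  have := card_add_card_compl J
  have h : (#J : ℤ) + #Jᶜ = Fintype.card α := by exact_mod_cast this
  linarith

theorem glue_mem {α : Type*} [Fintype α] [DecidableEq α] (r : α) (J : Finset α) (hr : r ∈ J)
    (hJ : J ≠ univ) (u v : α → ℤ) (hu : u ∈ X1 J) (hv : v ∈ X1 Jᶜ) : glue r J u v ∈ Tight r := by
  refine ⟨⟨by simp, ?_, ?_⟩, J, ⟨hr, hJ⟩, glue_tight r J hr u v hu⟩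
  · rw [glue_sum r J hr]
    have e : (univ : Finset α) \ J = Jᶜ := by ext; simp
    rw [e, univ_inter]
    have h1 := hu.2.1
    have h2 := hv.2.1
    have h3 := card_compl_int J
    simp only [mem_univ, if_true, card_univ]
    rw [h3] at h2 ⊢
    linear_combination h1 + h2
  · intro K hK
    have := glue_bound r J hr hJ u v hu hv K hK.ne
    split_ifs at this <;> linarith

theorem glue_surj {α : Type*} [Fintype α] [DecidableEq α] (r : α) (x : α → ℤ) (hx : x ∈ Tight r) :
    ∃ J : Finset α, r ∈ J ∧ J ≠ univ ∧ ∃ u ∈ X1 J, ∃ v ∈ X1 Jᶜ, glue r J u v = x := by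
  obtain ⟨⟨-, hT, hK⟩, J0, hJ0⟩ := hx
  obtain ⟨J, ⟨⟨hr, hJ⟩, ht⟩, hmin⟩ := WellFounded.has_min (measure (fun J : Finset α => #J)).wf
    {J : Finset α | (r ∈ J ∧ J ≠ univ) ∧ 2 * ∑ i ∈ J, x i = (#J : ℤ) * (#J - 1)} ⟨J0, hJ0⟩
  have h3 := card_compl_int J
  refine ⟨J, hr, hJ, fun i => if i ∈ J then x i - (if i = r then 1 else 0) else 0, ?_,
    fun i => if i ∈ Jᶜ then x i - #J else 0, ?_, ?_⟩
  · have hs : ∀ K ⊆ J, ∑ i ∈ K, (if i ∈ J then x i - (if i = r then 1 else 0) else 0) =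
        ∑ i ∈ K, x i - if r ∈ K then 1 else 0 := by
      intro K hKJ
      rw [sum_congr rfl (fun i hi => if_pos (hKJ hi)), sum_sub_distrib, sum_ite_eq']
    refine ⟨fun i hi => by simp [hi], ?_, ?_⟩
    · rw [hs J Subset.rfl, if_pos hr]; linarith
    · intro K hKJ
      rw [hs K hKJ.1]
      have hKu : K ≠ univ := by
        rintro rfl
        exact hKJ.2 (subset_univ _)
      have h1 := hK K (ssubset_univ_iff.2 hKu)
      split_ifs with hrK
      · have h2 : 2 * ∑ i ∈ K, x i ≠ (#K : ℤ) * (#K - 1) := by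
          intro h2
          exact hmin K ⟨⟨hrK, hKu⟩, h2⟩ (card_lt_card hKJ)
        obtain ⟨c, hc⟩ := Int.even_mul_pred_self (#K : ℤ)
        omega
      · linarith
  · have hs : ∀ K ⊆ Jᶜ, ∑ i ∈ K, (if i ∈ Jᶜ then x i - (#J : ℤ) else 0) =
        ∑ i ∈ K, x i - #K * #J := by
      intro K hKJ
      rw [sum_congr rfl (fun i hi => if_pos (hKJ hi)), sum_sub_distrib]
      simp
    refine ⟨fun i hi => if_neg hi, ?_, ?_⟩
    · rw [hs _ Subset.rfl, h3]
      have h4 := sum_add_sum_compl J x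
      rw [← h4, card_univ] at hT
      linear_combination hT - ht
    · intro K hKJ
      rw [hs _ hKJ.1]
      have hdis : Disjoint J K := by
        rw [disjoint_left]; intro i hi hiK
        have := hKJ.1 hiK
        simp at this; exact this hi
      have hu : J ∪ K ≠ univ := by
        intro h
        apply hKJ.2
        intro i hi
        have : i ∈ J ∪ K := by rw [h]; simp
        rw [mem_union] at this
        simp at hi
        tauto
      have h1 := hK _ (ssubset_univ_iff.2 hu)
      rw [sum_union hdis, card_union_of_disjoint hdis] at h1
      push_cast at h1
      nlinarith
  · funext i
    by_cases hi : i ∈ J <;> simp [glue, hi]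

theorem glue_inj {α : Type*} [Fintype α] [DecidableEq α] (r : α) (J J' : Finset α) (hr : r ∈ J)
    (hJ : J ≠ univ) (u v : α → ℤ) (hu : u ∈ X1 J) (hv : v ∈ X1 Jᶜ) (hr' : r ∈ J')
    (hJ' : J' ≠ univ) (u' v' : α → ℤ) (hu' : u' ∈ X1 J')
    (h : glue r J u v = glue r J' u' v') : J ⊆ J' := by
  have h1 := glue_bound r J hr hJ u v hu hv J' hJ'
  rw [h, glue_tight r J' hr' u' v' hu'] at h1
  by_contra hc
  rw [if_pos ⟨hr', hc⟩] at h1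
  linarith

theorem Tight_card {α : Type*} [Fintype α] [DecidableEq α] (r : α) :
    (Set.ncard (Tight r) : ℚ) =
      ∑ J ∈ univ.filter (fun J : Finset α => r ∈ J), treeQ #J * treeQ #Jᶜ := by
  let I := {J : Finset α // r ∈ J ∧ J ≠ univ}
  have hne : ∀ J : I, J.1.Nonempty := fun J => ⟨r, J.2.1⟩
  have hne' : ∀ J : I, (J.1ᶜ).Nonempty := fun J => by
    rw [nonempty_iff_ne_empty]; simpa using J.2.2
  let Φ : (Σ J : I, X1 J.1 × X1 J.1ᶜ) → Tight r := fun p =>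
    ⟨glue r p.1.1 p.2.1.1 p.2.2.1,
      glue_mem r p.1.1 p.1.2.1 p.1.2.2 _ _ p.2.1.2 p.2.2.2⟩
  have hΦ : Function.Bijective Φ := by
    constructor
    · rintro ⟨⟨J, hr, hJ⟩, ⟨u, hu⟩, ⟨v, hv⟩⟩ ⟨⟨J', hr', hJ'⟩, ⟨u', hu'⟩, ⟨v', hv'⟩⟩ h
      have h1 : glue r J u v = glue r J' u' v' := congrArg Subtype.val h
      have h2 := glue_inj r J J' hr hJ u v hu hv hr' hJ' u' v' hu' h1
      have h3 := glue_inj r J' J hr' hJ' u' v' hu' hv' hr hJ u v hu h1.symm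
      obtain rfl : J = J' := Subset.antisymm h2 h3
      have hU : u = u' := by
        funext i
        by_cases hi : i ∈ J
        · have := congrFun h1 i
          simp only [glue, hi, if_true] at this
          linarith
        · rw [hu.1 i hi, hu'.1 i hi]
      have hV : v = v' := by
        funext i
        by_cases hi : i ∈ J
        · rw [hv.1 i (by simpa using hi), hv'.1 i (by simpa using hi)]
        · have := congrFun h1 i
          simp only [glue, hi, if_false] at this
          linarith
      subst hU hV
      rfl
    · rintro ⟨x, hx⟩
      obtain ⟨J, hr, hJ, u, hu, v, hv, h⟩ := glue_surj r x hx
      exact ⟨⟨⟨J, hr, hJ⟩, ⟨u, hu⟩, ⟨v, hv⟩⟩, Subtype.ext h⟩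
  have hf : ∀ J : I, Finite (X1 J.1) := fun J => (X1_finite J.1 (hne J)).to_subtype
  have hf' : ∀ J : I, Finite (X1 J.1ᶜ) := fun J => (X1_finite J.1ᶜ (hne' J)).to_subtype
  rw [← Nat.card_coe_set_eq, ← Nat.card_congr (Equiv.ofBijective Φ hΦ), Nat.card_sigma]
  push_cast
  have h1 : ∀ J : I, ((Nat.card (X1 J.1 × X1 J.1ᶜ) : ℕ) : ℚ) = treeQ #J.1 * treeQ #J.1ᶜ := by
    intro J
    rw [Nat.card_prod, Nat.card_coe_set_eq, Nat.card_coe_set_eq, X1_card _ (hne J),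
      X1_card _ (hne' J), treeQ_eq _ (hne J).card_pos, treeQ_eq _ (hne' J).card_pos]
    push_cast; rfl
  rw [sum_congr rfl (fun J _ => h1 J)]
  have h2 := sum_subtype (univ.filter (fun J : Finset α => r ∈ J ∧ J ≠ univ))
    (p := fun J => r ∈ J ∧ J ≠ univ) (F := (inferInstance : Fintype I)) (by simp) (fun J => treeQ #J * treeQ #Jᶜ)
  rw [← h2]
  apply sum_subset
  · intro J; simp only [mem_filter]; tauto
  · intro J hJ hJ'
    simp only [mem_filter, mem_univ, true_and] at hJ hJ'
    have : J = univ := by tauto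
    subst this
    simp [treeQ_zero]

theorem image_eq (n : ℕ) (hn : 4 ≤ n) (r : Fin n) :
    (fun (b : Fin n → ℕ) (i : Fin n) => (b i : ℤ) + if i = r then 1 else 0) '' {b : Fin n → ℕ |
        (∑ i : Fin n, b i = n * (n - 1) / 2 - 2) ∧
        ∀ I : Finset (Fin n), I.Nonempty →
          ∑ i ∈ I, b i + 2 ≤ I.card * (I.card - 1) / 2 + I.card * (n - I.card)} =
    X1 (univ : Finset (Fin n)) \ Tight r := by
  have hs : ∀ (b : Fin n → ℤ) (K : Finset (Fin n)), ∑ i ∈ K, (b i + if i = r then 1 else 0)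
      = ∑ i ∈ K, b i + if r ∈ K then 1 else 0 := by
    intro b K
    rw [sum_add_distrib, sum_ite_eq']
  -- integer forms of the conditions
  have hdiv : ∀ k : ℕ, 2 * (((k * (k-1) / 2 : ℕ)) : ℤ) = (k:ℤ) * (k - 1) := by
    intro k
    have h1 : 2 * (k * (k-1) / 2) = k * (k-1) := Nat.two_mul_div_two_of_even (Nat.even_mul_pred_self k)
    have h2 : (2 * (((k * (k-1) / 2 : ℕ)) : ℤ)) = ((k * (k-1) : ℕ) : ℤ) := by exact_mod_cast h1
    rw [h2]
    rcases k with _ | k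
    · simp
    · push_cast; simp
  have hbig : 2 ≤ n * (n-1) / 2 := by
    rw [Nat.le_div_iff_mul_le (by norm_num)]
    calc 2 * 2 ≤ 4 * 1 := by norm_num
      _ ≤ n * (n-1) := Nat.mul_le_mul hn (by omega)
  have htot : ∀ b : Fin n → ℕ, (∑ i : Fin n, b i = n * (n - 1) / 2 - 2) ↔
      2 * ∑ i : Fin n, (b i : ℤ) = (n:ℤ) * (n-1) - 4 := by
    intro b
    have h1 := hdiv n
    have h2 : ((∑ i, b i : ℕ) : ℤ) = ∑ i, (b i : ℤ) := by push_cast; rfl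
    rw [← h1, ← h2]
    omega
  have hcond : ∀ (b : Fin n → ℕ), 2 * ∑ i : Fin n, (b i : ℤ) = (n:ℤ) * (n-1) - 4 →
      ∀ I : Finset (Fin n), (∑ i ∈ I, b i + 2 ≤ I.card * (I.card - 1) / 2 + I.card * (n - I.card) ↔
        (#Iᶜ : ℤ) * (#Iᶜ - 1) ≤ 2 * ∑ i ∈ Iᶜ, (b i : ℤ)) := by
    intro b hb I
    have h1 := hdiv #I
    have h2 : ((∑ i ∈ I, b i : ℕ) : ℤ) = ∑ i ∈ I, (b i : ℤ) := by push_cast; rfl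
    have h3 := card_compl_int I
    rw [Fintype.card_fin] at h3
    have hle : #I ≤ n := by simpa using card_le_univ I
    have h4 : ((#I * (n - #I) : ℕ) : ℤ) = (#I : ℤ) * (n - #I) := by
      rw [Nat.cast_mul, Nat.cast_sub hle]
    have h5 := sum_add_sum_compl I (fun i => (b i : ℤ))
    rw [← h5] at hb
    rw [h3]
    have h6 : ((n:ℤ) - #I) * (n - #I - 1) = n * (n-1) - #I * (#I - 1) - 2 * (#I * (n - #I)) := by ring
    rw [h6, ← h4, ← h1]
    rw [← h2] at hb
    omega
  ext x
  constructor
  · rintro ⟨b, ⟨hb1, hb2⟩, rfl⟩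
    rw [htot] at hb1
    have hlow : ∀ K : Finset (Fin n), K ≠ univ → (#K : ℤ) * (#K - 1) ≤ 2 * ∑ i ∈ K, (b i : ℤ) := by
      intro K hK
      have h := (hcond b hb1 Kᶜ).1 (hb2 _ (by rw [nonempty_iff_ne_empty]; simpa using hK))
      simpa only [compl_compl] using h
    refine ⟨⟨by simp, ?_, ?_⟩, ?_⟩
    · rw [hs, if_pos (mem_univ _), card_univ, Fintype.card_fin]
      linarith
    · intro K hK
      have := hlow K hK.ne
      rw [hs]
      split_ifs <;> linarith
    · rintro ⟨-, J, ⟨hr, hJ⟩, ht⟩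
      have := hlow J hJ
      rw [hs, if_pos hr] at ht
      linarith
  · rintro ⟨hx, hnt⟩
    have hlow : ∀ K : Finset (Fin n), K ≠ univ →
        (#K : ℤ) * (#K - 1) ≤ 2 * (∑ i ∈ K, x i - if r ∈ K then 1 else 0) := by
      intro K hK
      have h1 := hx.2.2 K (ssubset_univ_iff.2 hK)
      split_ifs with hr
      · have h2 : 2 * ∑ i ∈ K, x i ≠ (#K : ℤ) * (#K - 1) :=
          fun h2 => hnt ⟨hx, K, ⟨hr, hK⟩, h2⟩
        obtain ⟨c, hc⟩ := Int.even_mul_pred_self (#K : ℤ)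
        omega
      · linarith
    have hnn : ∀ i, 0 ≤ x i - if i = r then 1 else 0 := by
      intro i
      have h := hlow {i} (by
        intro h
        have := congrArg card h
        simp at this
        omega)
      simp only [card_singleton, sum_singleton, mem_singleton] at h
      have e : (if i = r then (1:ℤ) else 0) = if r = i then 1 else 0 := by simp [eq_comm]
      rw [e]
      push_cast at h
      linarith
    have hbx : ∀ i, (((x i - if i = r then 1 else 0).toNat : ℕ) : ℤ) = x i - if i = r then 1 else 0 :=
      fun i => Int.toNat_of_nonneg (hnn i)
    have hsb : ∀ K : Finset (Fin n), ∑ i ∈ K, (((x i - if i = r then 1 else 0).toNat : ℕ) : ℤ) =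
        ∑ i ∈ K, x i - if r ∈ K then 1 else 0 := by
      intro K
      rw [sum_congr rfl (fun i _ => hbx i), sum_sub_distrib, sum_ite_eq']
    refine ⟨fun i => (x i - if i = r then 1 else 0).toNat, ?_, ?_⟩
    · have hb : 2 * ∑ i : Fin n, (((x i - if i = r then 1 else 0).toNat : ℕ) : ℤ) =
          (n:ℤ) * (n-1) - 4 := by
        rw [hsb]
        have := hx.2.1
        rw [card_univ, Fintype.card_fin] at this
        rw [if_pos (mem_univ _)]
        linarith
      refine ⟨(htot _).2 hb, ?_⟩
      intro I hI
      apply (hcond _ hb I).2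
      rw [hsb]
      apply hlow
      intro h
      rw [compl_eq_univ_iff] at h
      exact hI.ne_empty h
    · funext i
      beta_reduce
      rw [hbx]; ring

/-- The dimension of the top graded component (of degree `C(n,2) − 2`) of the
internal bizonotopal algebra of the complete graph `K_n`, for `n ≥ 4`, equals
`C(n−2, 2) · n^{n−4}`. -/
theorem internal_top_dim_complete_graph (n : ℕ) (hn : 4 ≤ n) :
    Set.ncard {b : Fin n → ℕ |
        (∑ i : Fin n, b i = n * (n - 1) / 2 - 2) ∧
        ∀ I : Finset (Fin n), I.Nonempty →
          ∑ i ∈ I, b i + 2 ≤ I.card * (I.card - 1) / 2 + I.card * (n - I.card)} =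
      (n - 2) * (n - 3) / 2 * n ^ (n - 4) := by
  have hr : 0 < n := by omega
  set r : Fin n := ⟨0, hr⟩
  have hinj : Function.Injective
      (fun (b : Fin n → ℕ) (i : Fin n) => (b i : ℤ) + if i = r then 1 else 0) := by
    intro b b' h
    funext i
    have := congrFun h i
    simpa using this
  rw [← Set.ncard_image_of_injective _ hinj, image_eq n hn r]
  have hune : (univ : Finset (Fin n)).Nonempty := ⟨r, mem_univ r⟩
  have hfin := X1_finite (univ : Finset (Fin n)) hune
  have hsub : Tight r ⊆ X1 (univ : Finset (Fin n)) := fun x hx => hx.1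
  have h1 := Set.ncard_sdiff_add_ncard_of_subset hsub hfin
  rw [X1_card _ hune, card_univ, Fintype.card_fin] at h1
  have h2 := Tight_card r
  obtain ⟨p, rfl⟩ : ∃ p, n = p + 4 := ⟨n - 4, by omega⟩
  have h3 := sum_tree_pairs p (α := Fin (p+4)) (by simp) r
  rw [← h2] at h3
  have e1 : p + 4 - 2 = p + 2 := by omega
  have e2 : p + 4 - 3 = p + 1 := by omega
  have e3 : p + 4 - 4 = p := by omega
  rw [e1] at h1
  rw [e1, e2, e3]
  have h4 : 2 * ((p+2) * (p+1) / 2) = (p+2) * (p+1) := by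
    apply Nat.two_mul_div_two_of_even
    rw [mul_comm]; exact Nat.even_mul_succ_self (p+1)
  have h1' : ((Set.ncard (X1 (univ : Finset (Fin (p+4))) \ Tight r) : ℕ) : ℚ) + (Set.ncard (Tight r) : ℕ)
      = ((p:ℚ)+4)^(p+2) := by exact_mod_cast h1
  have h4' : 2 * (((p+2) * (p+1) / 2 : ℕ) : ℚ) = ((p:ℚ)+2) * (p+1) := by exact_mod_cast h4
  have : ((Set.ncard (X1 (univ : Finset (Fin (p+4))) \ Tight r) : ℕ) : ℚ) =
      (((p+2) * (p+1) / 2 * (p+4)^p : ℕ) : ℚ) := by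
    rw [Nat.cast_mul, Nat.cast_pow]
    push_cast [-Nat.cast_div] 
    linear_combination h1' - h3 / 2 - ((p:ℚ)+4)^p / 2 * h4'
  exact_mod_cast this
end
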